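/- Let z₀ = (z₀,₁, z₀,₂) be a curve with z₀,₁(α) − α and z₀,₂(α) real-analytic and 2π-periodic, satisfying the arc-chord condition, odd, with ∂_α z₀,₁(α) > 0 for α ∉ 2πℤ, ∂_α z₀,₁(0) = 0, ∂_α z₀,₂(0) > 0, and with (∂_α v₁)(0) < 0, where v₁(α) = ∫_{−π}^{π} [sin(z₀,₁(α) − z₀,₁(β)) (∂_α z₀,₁(α) − ∂_β z₀,₁(β))] / [cosh(z₀,₂(α) − z₀,₂(β)) − cos(z₀,₁(α) − z₀,₁(β))] dβ. Then for all small enough T > 0 there exists a real-analytic solution z(α,t) of the periodic Muskat contour equation on [−T, T], satisfying the arc-chord condition, with z(·,0) = z₀, such that: (1) ∂_α z₁(α, −t) > 0 for all α and all t ∈ (0,T]; (2) ∂_α z₁(0, t) < 0 for all t ∈ (0,T]; and in addition ∂_α z₂(0,t) > 0 for all t ∈ [−T,T]. (The interface passes from the stable regime, through a vertical tangent, into the unstable regime.) -/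

import Mathlib

open Real MeasureTheory Set

noncomputable section

/-- Distance from `β` to `2πℤ`. -/
def distTZ (β : ℝ) : ℝ := |β - 2 * π * ((round (β / (2 * π)) : ℤ) : ℝ)|

/-- `z(α) - (α, 0)` is `2π`-periodic. -/
def PerCurve (z : ℝ → ℝ × ℝ) : Prop := ∀ α, z (α + 2 * π) = z α + (2 * π, 0)

/-- The denominator `cosh(z₂(α) - z₂(α-β)) - cos(z₁(α) - z₁(α-β))`. -/
def Qden (z : ℝ → ℝ × ℝ) (α β : ℝ) : ℝ :=
  Real.cosh ((z α).2 - (z (α - β)).2) - Real.cos ((z α).1 - (z (α - β)).1)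

/-- Arc-chord condition. -/
def ArcChord (z : ℝ → ℝ × ℝ) : Prop :=
  ∃ C > 0, ∀ α β : ℝ, distTZ β ^ 2 ≤ C * (2 * Qden z α β)

/-- Right-hand side of the periodic Muskat contour equation (ρ² - ρ¹ = 4π). -/
def muskatRHS (z : ℝ → ℝ × ℝ) (α : ℝ) : ℝ × ℝ :=
  ∫ β in (-π)..π,
    (Real.sin ((z α).1 - (z (α - β)).1) / Qden z α β) • (deriv z α - deriv z (α - β))

/-- `z` solves the periodic Muskat contour equation on the time set `I`. -/
def IsMuskatSol (z : ℝ → ℝ → ℝ × ℝ) (I : Set ℝ) : Prop :=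
  ∀ t ∈ I, ∀ α : ℝ, HasDerivWithinAt (fun s => z s α) (muskatRHS (z t) α) I t

/-- The horizontal component of the Muskat velocity (ρ² - ρ¹ = 4π). -/
def v1 (z : ℝ → ℝ × ℝ) (α : ℝ) : ℝ :=
  ∫ β in (-π)..π,
    Real.sin ((z α).1 - (z β).1)
      * (deriv (fun a => (z a).1) α - deriv (fun a => (z a).1) β)
      / (Real.cosh ((z α).2 - (z β).2) - Real.cos ((z α).1 - (z β).1))

/-!
An analytic interface extends holomorphically to a complex strip. If the contour of the integral is
moved off the real axis, to height `± R / 2`, its kernel stays away from the poles that the chords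
`z(α) - z(β)` produce, so the right-hand side of the equation extends to the strip as well and loses
one derivative only. A Cauchy–Kovalevskaya iteration on strips of half-width `R - κ|t|` therefore
solves the equation for positive and negative times alike. The slope `∂_α z₁` at the origin vanishes
at `t = 0` and decreases in time at the rate `(∂_α v₁)(0) < 0`; by continuity it is strictly
decreasing in time on a neighbourhood of the origin, while away from `2πℤ` it stays positive by
compactness.
-/

/-! ### Holomorphic functions on strips -/

section ComplexDerivatives

open Filter Topology

variable {E : Type*} [NormedAddCommGroup E] [NormedSpace ℂ E]

theorem continuousOn_deriv_of_continuousOn_uncurry {X : Type*} [TopologicalSpace X]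
    [CompleteSpace E] {g : X → ℂ → E} {W : Set (X × ℂ)} (hW : IsOpen W)
    (hc : ContinuousOn (fun p : X × ℂ => g p.1 p.2) W)
    (hd : ∀ p ∈ W, DifferentiableAt ℂ (g p.1) p.2) :
    ContinuousOn (fun p : X × ℂ => deriv (g p.1) p.2) W := by
  rintro ⟨x₀, ζ₀⟩ hp
  apply ContinuousAt.continuousWithinAt
  obtain ⟨U, V, hU, hV, hx₀, hζ₀, hUV⟩ := isOpen_prod_iff.1 hW x₀ ζ₀ hp
  have hdiff : ∀ x ∈ U, DifferentiableOn ℂ (g x) V := fun x hx ζ hζ =>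
    (hd (x, ζ) (hUV ⟨hx, hζ⟩)).differentiableWithinAt
  have hconv : TendstoLocallyUniformlyOn (fun p : X × ℂ => g p.1) (g x₀)
      (𝓝 (x₀, ζ₀)) V := by
    refine tendstoLocallyUniformlyOn_iff_forall_tendsto.2 fun ζ hζ => ?_
    have hcont : ContinuousAt (fun p : X × ℂ => g p.1 p.2) (x₀, ζ) :=
      hc.continuousAt (hW.mem_nhds (hUV ⟨hx₀, hζ⟩))
    have hz : Tendsto (fun q : (X × ℂ) × ℂ => q.2)
        (𝓝 (x₀, ζ₀) ×ˢ 𝓝[V] ζ) (𝓝 ζ) :=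
      tendsto_snd.mono_right nhdsWithin_le_nhds
    have hx : Tendsto (fun q : (X × ℂ) × ℂ => q.1.1)
        (𝓝 (x₀, ζ₀) ×ˢ 𝓝[V] ζ) (𝓝 x₀) :=
      (continuous_fst.tendsto (x₀, ζ₀)).comp tendsto_fst
    have h₁ := hcont.tendsto.comp (tendsto_const_nhds.prodMk_nhds hz)
    have h₂ := hcont.tendsto.comp (hx.prodMk_nhds hz)
    exact (h₁.prodMk_nhds h₂).mono_right (nhds_le_uniformity _)
  have hderiv := hconv.deriv (by
    filter_upwards [continuous_fst.continuousAt.preimage_mem_nhds (hU.mem_nhds hx₀)]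
      with p hp using hdiff p.1 hp) hV
  have hζ : Tendsto (fun p : X × ℂ => p.2) (𝓝 (x₀, ζ₀)) (𝓝[V] ζ₀) :=
    tendsto_nhdsWithin_iff.2 ⟨continuous_snd.tendsto _,
      continuous_snd.continuousAt.preimage_mem_nhds (hV.mem_nhds hζ₀)⟩
  exact hderiv.tendsto_comp (((hdiff x₀ hx₀).deriv hV).continuousOn ζ₀ hζ₀) hζ₀ hζ

theorem hasDerivAt_intervalIntegral_of_continuousOn_uncurry [CompleteSpace E] {g : ℝ → ℂ → E}
    {W : Set (ℝ × ℂ)} (hW : IsOpen W) (hc : ContinuousOn (fun p : ℝ × ℂ => g p.1 p.2) W)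
    (hd : ∀ p ∈ W, DifferentiableAt ℂ (g p.1) p.2) {a b : ℝ} {ζ₀ : ℂ}
    (hab : ∀ x ∈ uIcc a b, (x, ζ₀) ∈ W) :
    HasDerivAt (fun ζ => ∫ x in a..b, g x ζ) (∫ x in a..b, deriv (g x) ζ₀) ζ₀ := by
  have hcd := continuousOn_deriv_of_continuousOn_uncurry hW hc hd
  obtain ⟨u, v, -, hv, hau, hζv, huv⟩ := generalized_tube_lemma (s := uIcc a b) isCompact_uIcc
    (t := {ζ₀}) isCompact_singleton hW (by rintro ⟨x, _⟩ ⟨hx, rfl⟩; exact hab x hx)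
  obtain ⟨r, hr, hrv⟩ := Metric.nhds_basis_closedBall.mem_iff.1 (hv.mem_nhds (hζv rfl))
  have hsub : uIcc a b ×ˢ Metric.closedBall ζ₀ r ⊆ W := (prod_mono hau hrv).trans huv
  obtain ⟨C, hC⟩ := (isCompact_uIcc.prod
    (isCompact_closedBall ζ₀ r)).exists_bound_of_continuousOn (hcd.mono hsub)
  have slice : ∀ {f : ℝ × ℂ → E}, ContinuousOn f W → ∀ ζ ∈ Metric.closedBall ζ₀ r,
      ContinuousOn (fun x => f (x, ζ)) (uIcc a b) := fun hf ζ hζ =>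
    hf.comp (by fun_prop) fun x hx => hsub ⟨hx, hζ⟩
  have hζ₀ := Metric.mem_closedBall_self (x := ζ₀) hr.le
  refine (intervalIntegral.hasDerivAt_integral_of_dominated_loc_of_deriv_le
    (F := fun ζ x => g x ζ) (F' := fun ζ x => deriv (g x) ζ) (s := Metric.closedBall ζ₀ r)
    (bound := fun _ => C) (Metric.closedBall_mem_nhds _ hr) ?_ (slice hc ζ₀ hζ₀).intervalIntegrable
    (((slice hcd ζ₀ hζ₀).mono uIoc_subset_uIcc).aestronglyMeasurable measurableSet_uIoc)
    (.of_forall fun x hx ζ hζ => hC (x, ζ) ⟨uIoc_subset_uIcc hx, hζ⟩)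
    intervalIntegrable_const (.of_forall fun x hx ζ hζ =>
      (hd (x, ζ) (hsub ⟨uIoc_subset_uIcc hx, hζ⟩)).hasDerivAt)).2
  filter_upwards [Metric.closedBall_mem_nhds _ hr] with ζ hζ
  exact ((slice hc ζ hζ).mono uIoc_subset_uIcc).aestronglyMeasurable measurableSet_uIoc

end ComplexDerivatives

section Strip

open Filter Topology

variable {E : Type*} [NormedAddCommGroup E] [NormedSpace ℂ E]

/-- The horizontal strip of half-width `ρ` around the real axis. -/
def strip (ρ : ℝ) : Set ℂ := {ζ | |ζ.im| < ρ}

theorem mem_strip {ρ : ℝ} {ζ : ℂ} : ζ ∈ strip ρ ↔ |ζ.im| < ρ := Iff.rfl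

theorem isOpen_strip (ρ : ℝ) : IsOpen (strip ρ) := isOpen_lt (by fun_prop) continuous_const

theorem strip_subset_strip {ρ' ρ : ℝ} (h : ρ' ≤ ρ) : strip ρ' ⊆ strip ρ :=
  fun _ hζ => lt_of_lt_of_le hζ h

theorem ofReal_mem_strip {ρ : ℝ} (hρ : 0 < ρ) (x : ℝ) : (x : ℂ) ∈ strip ρ := by
  simpa [mem_strip] using hρ

theorem convex_strip (ρ : ℝ) : Convex ℝ (strip ρ) := by
  have : strip ρ = Complex.imLm ⁻¹' Ioo (-ρ) ρ := by ext; simp [mem_strip, abs_lt]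
  rw [this]
  exact (convex_Ioo _ _).linear_preimage _

theorem eqOn_of_eq_ofReal [CompleteSpace E] {f g : ℂ → E} {U : Set ℂ} (hU : IsOpen U)
    (hconv : Convex ℝ U) (hf : DifferentiableOn ℂ f U) (hg : DifferentiableOn ℂ g U) {a : ℝ}
    (ha : (a : ℂ) ∈ U) (h : ∀ x : ℝ, (x : ℂ) ∈ U → f x = g x) : EqOn f g U := by
  have hreal : Tendsto (fun x : ℝ => (x : ℂ)) (𝓝[≠] a) (𝓝[≠] (a : ℂ)) :=
    Complex.continuous_ofReal.continuousAt.continuousWithinAt.tendsto_nhdsWithin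
      fun x hx => by simpa using hx
  have hmem : ∀ᶠ x : ℝ in 𝓝[≠] a, (x : ℂ) ∈ U :=
    nhdsWithin_le_nhds (Complex.continuous_ofReal.continuousAt (hU.mem_nhds ha))
  exact (hf.analyticOnNhd hU).eqOn_of_preconnected_of_frequently_eq (hg.analyticOnNhd hU)
    hconv.isPreconnected ha (hreal.frequently (hmem.mono fun x hx => h x hx).frequently)

theorem apply_add_int_mul_of_forall_mem_strip {G : Type*} [AddCommGroup G] {z : ℂ → G} {T : ℂ}
    {v : G} {ρ : ℝ} (hT : T.im = 0) (h : ∀ ζ ∈ strip ρ, z (ζ + T) = z ζ + v) (k : ℤ) {ζ : ℂ}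
    (hζ : ζ ∈ strip ρ) : z (ζ + k * T) = z ζ + k • v := by
  have hmem (n : ℂ) (hn : n.im = 0) : ζ + n * T ∈ strip ρ := by
    simpa [mem_strip, hT, hn] using hζ
  induction k with
  | zero => simp
  | succ n ih =>
    rw [Int.cast_add, Int.cast_one, add_one_mul, ← add_assoc, h _ (hmem _ (Complex.intCast_im n)),
      ih, add_assoc, add_one_zsmul]
  | pred n ih =>
    refine add_right_cancel (b := v) ((h _ (hmem _ (Complex.intCast_im _))).symm.trans ?_)
    rw [Int.cast_sub, Int.cast_one, sub_one_mul, add_assoc, sub_add_cancel, ih, add_assoc,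
      sub_one_zsmul, neg_add_cancel_right]

theorem deriv_add_of_forall_mem_strip {z : ℂ → E} {T : ℂ} {v : E} {ρ : ℝ}
    (h : ∀ ζ ∈ strip ρ, z (ζ + T) = z ζ + v) {ζ : ℂ} (hζ : ζ ∈ strip ρ) :
    deriv z (ζ + T) = deriv z ζ := by
  rw [← deriv_comp_add_const, Filter.EventuallyEq.deriv_eq (Filter.eventually_of_mem
    ((isOpen_strip ρ).mem_nhds hζ) h), deriv_add_const]

theorem differentiableAt_deriv_of_forall_mem_strip [CompleteSpace E] {z : ℂ → E} {ρ : ℝ}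
    (h : ∀ ζ ∈ strip ρ, DifferentiableAt ℂ z ζ) {ζ : ℂ} (hζ : ζ ∈ strip ρ) :
    DifferentiableAt ℂ (deriv z) ζ :=
  (DifferentiableOn.deriv (fun w hw => (h w hw).differentiableWithinAt)
    (isOpen_strip ρ)).differentiableAt ((isOpen_strip ρ).mem_nhds hζ)

/-- Nagumo's lemma with exponent `1/2`. -/
theorem norm_deriv_le_of_norm_le_div_sqrt {f : ℂ → E} {ρ A : ℝ}
    (hf : ∀ ζ ∈ strip ρ, DifferentiableAt ℂ f ζ)
    (hb : ∀ ζ ∈ strip ρ, ‖f ζ‖ ≤ A / √(ρ - |ζ.im|)) {ζ : ℂ} (hζ : ζ ∈ strip ρ) :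
    ‖deriv f ζ‖ ≤ 3 * A / √(ρ - |ζ.im|) ^ 3 := by
  set d := (ρ - |ζ.im|) / 2 with hd
  have hdpos : 0 < d := half_pos (sub_pos.2 hζ)
  have hρd : ρ - |ζ.im| = 2 * d := by ring
  have hsd : 0 < √d := Real.sqrt_pos.2 hdpos
  have him : ∀ w ∈ Metric.closedBall ζ d, |w.im| ≤ ρ - d := fun w hw => by
    have h := (Complex.abs_im_le_norm (w - ζ)).trans (mem_closedBall_iff_norm.1 hw)
    rw [Complex.sub_im] at h
    linarith [abs_sub_abs_le_abs_sub w.im ζ.im]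
  have hA : 0 ≤ A := by
    have h := (norm_nonneg _).trans (hb ζ hζ)
    rw [hρd] at h
    by_contra! hA
    exact (div_neg_of_neg_of_pos hA (Real.sqrt_pos.2 (by positivity))).not_ge h
  have hcauchy : ‖deriv f ζ‖ ≤ A / √d / d := by
    refine Complex.norm_deriv_le_of_forall_mem_sphere_norm_le hdpos
      (DifferentiableOn.diffContOnCl ?_) fun w hw => ?_
    · rw [closure_ball _ hdpos.ne']
      exact fun w hw => (hf w (mem_strip.2 (by linarith [him w hw]))).differentiableWithinAt
    · have := him w (Metric.sphere_subset_closedBall hw)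
      exact (hb w (mem_strip.2 (by linarith))).trans
        (div_le_div_of_nonneg_left hA hsd (Real.sqrt_le_sqrt (by linarith)))
  have h2 : √2 ≤ 3 / 2 := by rw [Real.sqrt_le_left (by norm_num)]; norm_num
  have hd2 : √d ^ 2 = d := Real.sq_sqrt hdpos.le
  calc ‖deriv f ζ‖ ≤ A / √d / d := hcauchy
    _ = 2 * √2 * A / (√2 ^ 3 * √d ^ 3) := by
      rw [pow_succ √2 2, Real.sq_sqrt zero_le_two, pow_succ √d 2, hd2]
      field_simp
    _ ≤ 3 * A / (√2 ^ 3 * √d ^ 3) := by gcongr; linarith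
    _ = 3 * A / √(ρ - |ζ.im|) ^ 3 := by rw [hρd, Real.sqrt_mul zero_le_two, mul_pow]

end Strip

section TimeIntegrals

variable {E : Type*} [NormedAddCommGroup E] [NormedSpace ℝ E] {g : ℝ → E}

theorem abs_le_abs_of_mem_uIcc_zero {s t : ℝ} (h : s ∈ uIcc 0 t) : |s| ≤ |t| := by
  simpa using abs_sub_left_of_mem_uIcc h

theorem norm_integral_le_sub_of_norm_le_comp_abs {Φ φ : ℝ → ℝ} {t : ℝ}
    (hg : ∀ s, |s| ≤ |t| → ‖g s‖ ≤ φ |s|)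
    (hΦ : ∀ s, 0 ≤ s → s ≤ |t| → HasDerivAt Φ (φ s) s) (hφ : ContinuousOn φ (Icc 0 |t|)) :
    ‖∫ s in (0 : ℝ)..t, g s‖ ≤ Φ |t| - Φ 0 := by
  have hφi : IntervalIntegrable φ volume 0 |t| :=
    ContinuousOn.intervalIntegrable (by rwa [uIcc_of_le (abs_nonneg t)])
  have hforward : ∀ g : ℝ → E, (∀ s, |s| ≤ |t| → ‖g s‖ ≤ φ |s|) →
      ‖∫ s in (0 : ℝ)..|t|, g s‖ ≤ Φ |t| - Φ 0 := fun g hg => by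
    rw [← intervalIntegral.integral_eq_sub_of_hasDerivAt (fun s hs => ?_) hφi]
    · refine intervalIntegral.norm_integral_le_of_norm_le (abs_nonneg t)
        (.of_forall fun s hs => ?_) hφi
      simpa only [abs_of_pos hs.1] using hg s ((abs_of_pos hs.1).trans_le hs.2)
    · rw [uIcc_of_le (abs_nonneg t)] at hs
      exact hΦ s hs.1 hs.2
  rcases abs_choice t with h | h
  · simpa only [h] using hforward g hg
  · have hneg := hforward (fun s => g (-s)) fun s hs => by
      simpa only [abs_neg] using hg (-s) (by rwa [abs_neg])
    rw [intervalIntegral.integral_comp_neg (fun s => g s), neg_zero,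
      intervalIntegral.integral_symm, norm_neg] at hneg
    simpa only [h, neg_neg] using hneg

variable {t κ c K : ℝ}

theorem norm_integral_le_of_norm_le_div_sqrt_pow_three (hκ : 0 < κ) (hK : 0 ≤ K)
    (hc : κ * |t| < c) (hg : ∀ s, |s| ≤ |t| → ‖g s‖ ≤ K / √(c - κ * |s|) ^ 3) :
    ‖∫ s in (0 : ℝ)..t, g s‖ ≤ 2 * K / κ / √(c - κ * |t|) := by
  have hpos : ∀ s ≤ |t|, 0 < c - κ * s := fun s hs => by nlinarith
  have hsqrt : ∀ s ≤ |t|, 0 < √(c - κ * s) := fun s hs => Real.sqrt_pos.2 (hpos s hs)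
  refine (norm_integral_le_sub_of_norm_le_comp_abs (Φ := fun s => 2 * K / κ * (√(c - κ * s))⁻¹)
    (φ := fun s => K / √(c - κ * s) ^ 3) hg (fun s _ hs => ?_) ?_).trans ?_
  · have hlin : HasDerivAt (fun s => c - κ * s) (-κ) s := by
      simpa using ((hasDerivAt_id s).const_mul κ).const_sub c
    refine (((hlin.sqrt (hpos s hs).ne').inv (hsqrt s hs).ne').const_mul
      (2 * K / κ)).congr_deriv ?_
    have := hsqrt s hs
    field_simp
  · exact continuousOn_const.div (by fun_prop) fun s hs => (pow_pos (hsqrt s hs.2) 3).ne'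
  · rw [div_eq_mul_inv _ √_]
    exact sub_le_self _ (by positivity)

theorem norm_integral_le_of_norm_le_div_sqrt (hκ : 0 < κ) (hK : 0 ≤ K) (hc : κ * |t| < c)
    (hg : ∀ s, |s| ≤ |t| → ‖g s‖ ≤ K / √(c - κ * |s|)) :
    ‖∫ s in (0 : ℝ)..t, g s‖ ≤ 2 * K / κ * √c := by
  have hpos : ∀ s ≤ |t|, 0 < c - κ * s := fun s hs => by nlinarith
  have hsqrt : ∀ s ≤ |t|, 0 < √(c - κ * s) := fun s hs => Real.sqrt_pos.2 (hpos s hs)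
  refine (norm_integral_le_sub_of_norm_le_comp_abs (Φ := fun s => -(2 * K / κ) * √(c - κ * s))
    (φ := fun s => K / √(c - κ * s)) hg (fun s _ hs => ?_) ?_).trans ?_
  · have hlin : HasDerivAt (fun s => c - κ * s) (-κ) s := by
      simpa using ((hasDerivAt_id s).const_mul κ).const_sub c
    refine ((hlin.sqrt (hpos s hs).ne').const_mul (-(2 * K / κ))).congr_deriv ?_
    have := hsqrt s hs
    field_simp
  · exact continuousOn_const.div (by fun_prop) fun s hs => (hsqrt s hs.2).ne'
  · rw [mul_zero, sub_zero, neg_mul, neg_mul, neg_sub_neg]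
    exact sub_le_self _ (by positivity)

end TimeIntegrals

/-! ### Cauchy–Kovalevskaya in a scale of strips -/

section StripBall

variable {E G : Type*} [NormedAddCommGroup E] [NormedSpace ℂ E] [NormedAddCommGroup G]
  [NormedSpace ℝ G]

/-- The `T`-periodic holomorphic functions on the strip of half-width `ρ`, killed by `J` on the
real axis, that are `ε`-small together with their derivative; the derivative may blow up like
`(ρ - |Im ζ|)^(-1/2)` at the boundary, which is what one integration in time of a loss of one
derivative produces. -/
structure StripBall (T : ℝ) (J : E →L[ℝ] G) (ε ρ : ℝ) (w : ℂ → E) : Prop where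
  differentiableAt : ∀ ζ ∈ strip ρ, DifferentiableAt ℂ w ζ
  periodic : ∀ ζ ∈ strip ρ, w (ζ + T) = w ζ
  apply_ofReal : ∀ x : ℝ, J (w x) = 0
  norm_le : ∀ ζ ∈ strip ρ, ‖w ζ‖ ≤ ε
  norm_deriv_le : ∀ ζ ∈ strip ρ, ‖deriv w ζ‖ ≤ ε / √(ρ - |ζ.im|)

theorem StripBall.mono {T : ℝ} {J : E →L[ℝ] G} {ε ρ ρ' : ℝ} {w : ℂ → E} (hε : 0 ≤ ε)
    (hw : StripBall T J ε ρ w) (hρ : ρ' ≤ ρ) : StripBall T J ε ρ' w where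
  differentiableAt ζ hζ := hw.differentiableAt ζ (strip_subset_strip hρ hζ)
  periodic ζ hζ := hw.periodic ζ (strip_subset_strip hρ hζ)
  apply_ofReal := hw.apply_ofReal
  norm_le ζ hζ := hw.norm_le ζ (strip_subset_strip hρ hζ)
  norm_deriv_le ζ hζ := (hw.norm_deriv_le ζ (strip_subset_strip hρ hζ)).trans <|
    div_le_div_of_nonneg_left hε (Real.sqrt_pos.2 (sub_pos.2 hζ))
      (Real.sqrt_le_sqrt (by linarith))

theorem stripBall_zero (T : ℝ) (J : E →L[ℝ] G) {ε : ℝ} (ρ : ℝ) (hε : 0 ≤ ε) :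
    StripBall T J ε ρ 0 where
  differentiableAt _ _ := differentiableAt_const 0
  periodic _ _ := rfl
  apply_ofReal _ := map_zero J
  norm_le _ _ := by simpa using hε
  norm_deriv_le ζ _ := by
    rw [Pi.zero_def, deriv_const, norm_zero]
    positivity

/-- An operator of order one in the scale of strips: for `r < ρ ≤ R` it maps the ball of
half-width `ρ` to holomorphic functions, boundedly and Lipschitz continuously, with the loss
`(ρ - |Im ζ|)^(-1/2)` that the derivative of its argument already exhibits. -/
structure StripOperator (F : (ℂ → E) → ℂ → E) (T : ℝ) (J : E →L[ℝ] G) (ε r R B L : ℝ) : Prop where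
  ε_pos : 0 < ε
  r_nonneg : 0 ≤ r
  r_lt : r < R
  B_nonneg : 0 ≤ B
  L_nonneg : 0 ≤ L
  differentiableAt : ∀ {ρ w}, r < ρ → ρ ≤ R → StripBall T J ε ρ w →
    ∀ ζ ∈ strip ρ, DifferentiableAt ℂ (F w) ζ
  periodic : ∀ {ρ w}, r < ρ → ρ ≤ R → StripBall T J ε ρ w → ∀ ζ ∈ strip ρ, F w (ζ + T) = F w ζ
  apply_ofReal : ∀ {ρ w}, r < ρ → ρ ≤ R → StripBall T J ε ρ w → ∀ x : ℝ, J (F w x) = 0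
  norm_le : ∀ {ρ w}, r < ρ → ρ ≤ R → StripBall T J ε ρ w →
    ∀ ζ ∈ strip ρ, ‖F w ζ‖ ≤ B / √(ρ - |ζ.im|)
  lipschitz : ∀ {ρ w₁ w₂ δ}, r < ρ → ρ ≤ R → StripBall T J ε ρ w₁ → StripBall T J ε ρ w₂ →
    (∀ ζ ∈ strip ρ, ‖w₁ ζ - w₂ ζ‖ ≤ δ) →
    (∀ ζ ∈ strip ρ, ‖deriv w₁ ζ - deriv w₂ ζ‖ ≤ δ / √(ρ - |ζ.im|)) →
    ∀ ζ ∈ strip ρ, ‖F w₁ ζ - F w₂ ζ‖ ≤ L * δ / √(ρ - |ζ.im|)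

end StripBall

section ShrinkingStrip

open Filter Topology

/-- The space-time domain whose slice at time `t` is the strip of half-width `R - κ|t|`, for times
at which that half-width exceeds `r`. -/
def shrinkingStrip (r R κ : ℝ) : Set (ℝ × ℂ) :=
  {p | κ * |p.1| < R - r ∧ p.2 ∈ strip (R - κ * |p.1|)}

variable {r R κ : ℝ}

theorem mk_mem_shrinkingStrip {t : ℝ} {ζ : ℂ} :
    (t, ζ) ∈ shrinkingStrip r R κ ↔ κ * |t| < R - r ∧ ζ ∈ strip (R - κ * |t|) := Iff.rfl

theorem isOpen_shrinkingStrip (r R κ : ℝ) : IsOpen (shrinkingStrip r R κ) :=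
  (isOpen_lt (f := fun p : ℝ × ℂ => κ * |p.1|) (by fun_prop) continuous_const).inter
    (isOpen_lt (f := fun p : ℝ × ℂ => |p.2.im|) (g := fun p => R - κ * |p.1|) (by fun_prop)
      (by fun_prop))

theorem mem_shrinkingStrip_of_abs_le (hκ : 0 < κ) {s t : ℝ} {ζ : ℂ}
    (h : (t, ζ) ∈ shrinkingStrip r R κ) (hs : |s| ≤ |t|) : (s, ζ) ∈ shrinkingStrip r R κ := by
  have hκs := mul_le_mul_of_nonneg_left hs hκ.le
  exact ⟨hκs.trans_lt h.1, strip_subset_strip (by linarith) h.2⟩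

theorem exists_abs_lt_mem_shrinkingStrip (hκ : 0 < κ) {t : ℝ} {ζ : ℂ}
    (h : (t, ζ) ∈ shrinkingStrip r R κ) : ∃ τ, |t| < τ ∧ (τ, ζ) ∈ shrinkingStrip r R κ := by
  obtain ⟨τ, ht, hτ⟩ := exists_between (show |t| < min ((R - r) / κ) ((R - |ζ.im|) / κ) by
    rw [lt_min_iff, lt_div_iff₀' hκ, lt_div_iff₀' hκ]
    exact ⟨h.1, lt_sub_comm.1 h.2⟩)
  rw [lt_min_iff, lt_div_iff₀' hκ, lt_div_iff₀' hκ] at hτ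
  refine ⟨τ, ht, mk_mem_shrinkingStrip.2 ?_⟩
  rw [abs_of_pos ((abs_nonneg t).trans_lt ht), mem_strip]
  exact ⟨hτ.1, by linarith⟩

variable {E : Type*} [NormedAddCommGroup E]

theorem continuousOn_slice_shrinkingStrip {g : ℝ → ℂ → E} (hκ : 0 < κ)
    (hg : ContinuousOn (fun p : ℝ × ℂ => g p.1 p.2) (shrinkingStrip r R κ)) {t : ℝ} {ζ : ℂ}
    (h : (t, ζ) ∈ shrinkingStrip r R κ) : ContinuousOn (fun s => g s ζ) (uIcc 0 t) :=
  hg.comp (f := fun s : ℝ => (s, ζ)) (by fun_prop) fun _ hs =>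
    mem_shrinkingStrip_of_abs_le hκ h (abs_le_abs_of_mem_uIcc_zero hs)

theorem continuousAt_of_lipschitz_in_time {u : ℝ → ℂ → E} {ρ C t₀ : ℝ} {ζ₀ : ℂ}
    (hζ₀ : ζ₀ ∈ strip ρ)
    (hu : ∀ᶠ t in 𝓝 t₀, ∀ ζ ∈ strip ρ, ‖u t ζ - u t₀ ζ‖ ≤ C * |t - t₀| / √(ρ - |ζ.im|))
    (hc : ContinuousAt (u t₀) ζ₀) : ContinuousAt (fun p : ℝ × ℂ => u p.1 p.2) (t₀, ζ₀) := by
  have hspace : Tendsto (fun p : ℝ × ℂ => u t₀ p.2) (𝓝 (t₀, ζ₀)) (𝓝 (u t₀ ζ₀)) :=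
    hc.tendsto.comp (continuous_snd.tendsto (t₀, ζ₀))
  have hmajorant : ContinuousAt (fun p : ℝ × ℂ => C * |p.1 - t₀| / √(ρ - |p.2.im|)) (t₀, ζ₀) :=
    ContinuousAt.div (by fun_prop) (by fun_prop) (Real.sqrt_pos.2 (sub_pos.2 hζ₀)).ne'
  have htime : Tendsto (fun p : ℝ × ℂ => u p.1 p.2 - u t₀ p.2) (𝓝 (t₀, ζ₀)) (nhds 0) := by
    refine squeeze_zero_norm' (a := fun p : ℝ × ℂ => C * |p.1 - t₀| / √(ρ - |p.2.im|)) ?_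
      (by simpa using hmajorant.tendsto)
    filter_upwards [continuous_fst.continuousAt.eventually hu,
      continuous_snd.continuousAt.preimage_mem_nhds ((isOpen_strip ρ).mem_nhds hζ₀)] with p hp hζ
    exact hp p.2 hζ
  simpa [ContinuousAt] using htime.add hspace

variable [NormedSpace ℂ E] {g : ℝ → ℂ → E}

theorem norm_integral_shrinkingStrip_le {K : ℝ} (hκ : 0 < κ) (hK : 0 ≤ K)
    (hb : ∀ t ζ, (t, ζ) ∈ shrinkingStrip r R κ → ‖g t ζ‖ ≤ K / √(R - κ * |t| - |ζ.im|))
    {t : ℝ} {ζ : ℂ} (h : (t, ζ) ∈ shrinkingStrip r R κ) :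
    ‖∫ s in (0 : ℝ)..t, g s ζ‖ ≤ K * ((2 * √R + 6) / κ) := by
  have hint := norm_integral_le_of_norm_le_div_sqrt (g := fun s => g s ζ) (t := t)
    (c := R - |ζ.im|) hκ hK (lt_sub_comm.1 h.2) fun s hs => by
      simpa only [sub_right_comm] using hb s ζ (mem_shrinkingStrip_of_abs_le hκ h hs)
  calc ‖∫ s in (0 : ℝ)..t, g s ζ‖ ≤ 2 * K / κ * √(R - |ζ.im|) := hint
    _ ≤ 2 * K / κ * √R := by gcongr; linarith [abs_nonneg ζ.im]
    _ = K * (2 * √R / κ) := by ring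
    _ ≤ K * ((2 * √R + 6) / κ) := by gcongr; linarith

variable [CompleteSpace E]

theorem continuousOn_deriv_shrinkingStrip
    (hg : ContinuousOn (fun p : ℝ × ℂ => g p.1 p.2) (shrinkingStrip r R κ))
    (hd : ∀ p ∈ shrinkingStrip r R κ, DifferentiableAt ℂ (g p.1) p.2) :
    ContinuousOn (fun p : ℝ × ℂ => deriv (g p.1) p.2) (shrinkingStrip r R κ) :=
  continuousOn_deriv_of_continuousOn_uncurry (isOpen_shrinkingStrip r R κ) hg hd

theorem hasDerivAt_time_integral_shrinkingStrip (hκ : 0 < κ)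
    (hg : ContinuousOn (fun p : ℝ × ℂ => g p.1 p.2) (shrinkingStrip r R κ)) {t : ℝ} {ζ : ℂ}
    (h : (t, ζ) ∈ shrinkingStrip r R κ) :
    HasDerivAt (fun u => ∫ s in (0 : ℝ)..u, g s ζ) (g t ζ) t := by
  have hopen : IsOpen {s | (s, ζ) ∈ shrinkingStrip r R κ} :=
    (isOpen_shrinkingStrip r R κ).preimage (by fun_prop)
  have hcont : ContinuousOn (fun s => g s ζ) {s | (s, ζ) ∈ shrinkingStrip r R κ} :=
    hg.comp (f := fun s : ℝ => (s, ζ)) (by fun_prop) fun _ hs => hs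
  exact intervalIntegral.integral_hasDerivAt_right
    (continuousOn_slice_shrinkingStrip hκ hg h).intervalIntegrable
    (hcont.stronglyMeasurableAtFilter hopen t h) (hcont.continuousAt (hopen.mem_nhds h))

theorem hasDerivAt_integral_shrinkingStrip (hκ : 0 < κ)
    (hg : ContinuousOn (fun p : ℝ × ℂ => g p.1 p.2) (shrinkingStrip r R κ))
    (hd : ∀ p ∈ shrinkingStrip r R κ, DifferentiableAt ℂ (g p.1) p.2) {t : ℝ} {ζ : ℂ}
    (h : (t, ζ) ∈ shrinkingStrip r R κ) :
    HasDerivAt (fun ζ => ∫ s in (0 : ℝ)..t, g s ζ) (∫ s in (0 : ℝ)..t, deriv (g s) ζ) ζ :=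
  hasDerivAt_intervalIntegral_of_continuousOn_uncurry (isOpen_shrinkingStrip r R κ) hg hd
    fun _ hs => mem_shrinkingStrip_of_abs_le hκ h (abs_le_abs_of_mem_uIcc_zero hs)

theorem norm_deriv_integral_shrinkingStrip_le {K : ℝ} (hκ : 0 < κ) (hK : 0 ≤ K)
    (hg : ContinuousOn (fun p : ℝ × ℂ => g p.1 p.2) (shrinkingStrip r R κ))
    (hd : ∀ p ∈ shrinkingStrip r R κ, DifferentiableAt ℂ (g p.1) p.2)
    (hb : ∀ t ζ, (t, ζ) ∈ shrinkingStrip r R κ → ‖g t ζ‖ ≤ K / √(R - κ * |t| - |ζ.im|))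
    {t : ℝ} {ζ : ℂ} (h : (t, ζ) ∈ shrinkingStrip r R κ) :
    ‖deriv (fun ζ => ∫ s in (0 : ℝ)..t, g s ζ) ζ‖ ≤
      K * ((2 * √R + 6) / κ) / √(R - κ * |t| - |ζ.im|) := by
  have hint := norm_integral_le_of_norm_le_div_sqrt_pow_three (g := fun s => deriv (g s) ζ)
    (t := t) (c := R - |ζ.im|) (K := 3 * K) hκ (by positivity) (lt_sub_comm.1 h.2)
    fun s hs => by
      have hs := mem_shrinkingStrip_of_abs_le hκ h hs
      simpa only [sub_right_comm] using norm_deriv_le_of_norm_le_div_sqrt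
        (fun ζ hζ => hd (s, ζ) ⟨hs.1, hζ⟩) (fun ζ hζ => hb s ζ ⟨hs.1, hζ⟩) hs.2
  rw [(hasDerivAt_integral_shrinkingStrip hκ hg hd h).deriv]
  calc ‖∫ s in (0 : ℝ)..t, deriv (g s) ζ‖
      ≤ 2 * (3 * K) / κ / √(R - |ζ.im| - κ * |t|) := hint
    _ = K * (6 / κ) / √(R - κ * |t| - |ζ.im|) := by rw [sub_right_comm]; ring
    _ ≤ K * ((2 * √R + 6) / κ) / √(R - κ * |t| - |ζ.im|) := by
      gcongr; linarith [Real.sqrt_nonneg R]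

end ShrinkingStrip

section StripPath

open Filter Topology

variable {E G : Type*} [NormedAddCommGroup E] [NormedSpace ℂ E]
  [NormedAddCommGroup G] [NormedSpace ℝ G]

/-- A time-dependent element of `StripBall` living on a shrinking strip and moving with speed at
most `B (ρ - |Im ζ|)^(-1/2)`. -/
structure StripPath (T : ℝ) (J : E →L[ℝ] G) (ε r R B κ : ℝ) (w : ℝ → ℂ → E) : Prop where
  ball : ∀ {t}, κ * |t| < R - r → StripBall T J ε (R - κ * |t|) (w t)
  lipschitz : ∀ {s t τ}, |s| ≤ τ → |t| ≤ τ → κ * τ < R - r → ∀ ζ ∈ strip (R - κ * τ),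
    ‖w t ζ - w s ζ‖ ≤ B * |t - s| / √(R - κ * τ - |ζ.im|)

/-- Closeness of two time-dependent functions on a shrinking strip, together with their space
derivatives, in the weighted norm of `StripBall`. -/
def StripClose (r R κ δ : ℝ) (u v : ℝ → ℂ → E) : Prop :=
  ∀ t ζ, (t, ζ) ∈ shrinkingStrip r R κ → ‖u t ζ - v t ζ‖ ≤ δ ∧
    ‖deriv (u t) ζ - deriv (v t) ζ‖ ≤ δ / √(R - κ * |t| - |ζ.im|)

variable {T ε r R B L κ : ℝ} {J : E →L[ℝ] G} {w : ℝ → ℂ → E}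

theorem stripPath_zero (hε : 0 ≤ ε) (hB : 0 ≤ B) : StripPath T J ε r R B κ 0 where
  ball _ := stripBall_zero T J _ hε
  lipschitz _ _ _ _ _ := by
    simp only [Pi.zero_apply, sub_self, norm_zero]
    positivity

namespace StripPath

theorem differentiableAt (hw : StripPath T J ε r R B κ w) :
    ∀ p ∈ shrinkingStrip r R κ, DifferentiableAt ℂ (w p.1) p.2 :=
  fun p hp => (hw.ball hp.1).differentiableAt p.2 hp.2

theorem continuousOn (hκ : 0 < κ) (hw : StripPath T J ε r R B κ w) :
    ContinuousOn (fun p : ℝ × ℂ => w p.1 p.2) (shrinkingStrip r R κ) := by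
  rintro ⟨t, ζ⟩ h
  obtain ⟨τ, ht, hτ⟩ := exists_abs_lt_mem_shrinkingStrip hκ h
  rw [mk_mem_shrinkingStrip, abs_of_pos ((abs_nonneg t).trans_lt ht)] at hτ
  refine (continuousAt_of_lipschitz_in_time (C := B) hτ.2 ?_
    (hw.differentiableAt _ h).continuousAt).continuousWithinAt
  filter_upwards [continuous_abs.continuousAt.eventually (gt_mem_nhds ht)] with s hs
  exact hw.lipschitz ht.le hs.le hτ.1

theorem norm_deriv_sub_le (hw : StripPath T J ε r R B κ w) {s t τ : ℝ} (hκ : 0 < κ) (hs : |s| ≤ τ)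
    (ht : |t| ≤ τ) (hτ : κ * τ < R - r) {ζ : ℂ} (hζ : ζ ∈ strip (R - κ * τ)) :
    ‖deriv (w t) ζ - deriv (w s) ζ‖ ≤ 3 * (B * |t - s|) / √(R - κ * τ - |ζ.im|) ^ 3 := by
  have hdiff : ∀ {u}, |u| ≤ τ → ∀ ζ ∈ strip (R - κ * τ), DifferentiableAt ℂ (w u) ζ :=
    fun {u} hu ζ hζ => by
      have hκu := mul_le_mul_of_nonneg_left hu hκ.le
      exact hw.differentiableAt (u, ζ) ⟨hκu.trans_lt hτ, strip_subset_strip (by linarith) hζ⟩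
  rw [← deriv_fun_sub (hdiff ht ζ hζ) (hdiff hs ζ hζ)]
  exact norm_deriv_le_of_norm_le_div_sqrt (fun ζ hζ => (hdiff ht ζ hζ).sub (hdiff hs ζ hζ))
    (fun ζ hζ => hw.lipschitz hs ht hτ ζ hζ) hζ

end StripPath

theorem tendsto_div_two_pow_atTop (C : ℝ) :
    Tendsto (fun n : ℕ => C / 2 ^ n) atTop (nhds 0) :=
  tendsto_const_nhds.div_atTop (tendsto_pow_atTop_atTop_of_one_lt one_lt_two)

theorem StripClose.tendsto {u : ℕ → ℝ → ℂ → E} {δ : ℕ → ℝ}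
    (hδ : Tendsto δ atTop (nhds 0)) (hu : ∀ n, StripClose r R κ (δ n) (u n) w)
    {t : ℝ} {ζ : ℂ} (h : (t, ζ) ∈ shrinkingStrip r R κ) :
    Tendsto (fun n => u n t ζ) atTop (𝓝 (w t ζ)) :=
  tendsto_iff_norm_sub_tendsto_zero.2 <|
    squeeze_zero (fun _ => norm_nonneg _) (fun n => (hu n t ζ h).1) hδ

variable [CompleteSpace E]

theorem StripPath.of_tendstoLocallyUniformlyOn {u : ℕ → ℝ → ℂ → E} (hr : 0 ≤ r) (hκ : 0 < κ)
    (hu : ∀ n, StripPath T J ε r R B κ (u n))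
    (hlim : ∀ t, κ * |t| < R - r → TendstoLocallyUniformlyOn (fun n => u n t) (w t)
      atTop (strip (R - κ * |t|))) :
    StripPath T J ε r R B κ w where
  ball {t} ht := by
    have hball n := (hu n).ball ht
    have hlim := hlim t ht
    have hpoint ζ hζ := hlim.tendsto_at (a := ζ) hζ
    have hdiff : ∀ᶠ n in atTop, DifferentiableOn ℂ (u n t) (strip (R - κ * |t|)) :=
      .of_forall fun n ζ hζ => ((hball n).differentiableAt ζ hζ).differentiableWithinAt
    have hderiv := hlim.deriv hdiff (isOpen_strip _)
    refine ⟨fun ζ hζ => (hlim.differentiableOn hdiff (isOpen_strip _)).differentiableAt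
      ((isOpen_strip _).mem_nhds hζ), fun ζ hζ => ?_, fun x => ?_,
      fun ζ hζ => le_of_tendsto (hpoint ζ hζ).norm (.of_forall fun n => (hball n).norm_le ζ hζ),
      fun ζ hζ => le_of_tendsto (hderiv.tendsto_at hζ).norm
        (.of_forall fun n => (hball n).norm_deriv_le ζ hζ)⟩
    · refine tendsto_nhds_unique (hpoint (ζ + T) (by simpa [mem_strip] using hζ)) ?_
      exact (hpoint ζ hζ).congr fun n => ((hball n).periodic ζ hζ).symm
    · refine tendsto_nhds_unique
        ((J.continuous.tendsto _).comp (hpoint x (ofReal_mem_strip (by linarith) x))) ?_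
      exact tendsto_const_nhds.congr fun n => ((hball n).apply_ofReal x).symm
  lipschitz {s t τ} hs ht hτ ζ hζ := by
    have hpoint : ∀ {a}, |a| ≤ τ → Tendsto (fun n => u n a ζ) atTop
        (𝓝 (w a ζ)) := fun {a} ha => by
      have hκa := mul_le_mul_of_nonneg_left ha hκ.le
      exact (hlim a (hκa.trans_lt hτ)).tendsto_at (strip_subset_strip (by linarith) hζ)
    exact le_of_tendsto ((hpoint ht).sub (hpoint hs)).norm
      (.of_forall fun n => (hu n).lipschitz hs ht hτ ζ hζ)

theorem StripPath.exists_limit {u : ℕ → ℝ → ℂ → E} {C : ℝ} (hr : 0 ≤ r)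
    (hκ : 0 < κ) (hu : ∀ n, StripPath T J ε r R B κ (u n))
    (hclose : ∀ n, StripClose r R κ (C / 2 ^ n) (u n) (u (n + 1))) :
    ∃ w, StripPath T J ε r R B κ w ∧ ∀ n, StripClose r R κ (2 * C / 2 ^ n) (u n) w := by
  let w t ζ := limUnder atTop fun n => u n t ζ
  have hdist : ∀ {t ζ}, (t, ζ) ∈ shrinkingStrip r R κ → ∀ n,
      dist (u n t ζ) (u (n + 1) t ζ) ≤ 2 * C / 2 / 2 ^ n := fun h n => by
    rw [dist_eq_norm, mul_div_cancel_left₀ C two_ne_zero]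
    exact (hclose n _ _ h).1
  have hlim : ∀ {t ζ}, (t, ζ) ∈ shrinkingStrip r R κ →
      Tendsto (fun n => u n t ζ) atTop (𝓝 (w t ζ)) := fun h =>
    (cauchySeq_of_le_geometric_two (hdist h)).tendsto_limUnder
  have hslice : ∀ t, κ * |t| < R - r → TendstoLocallyUniformlyOn (fun n => u n t) (w t)
      atTop (strip (R - κ * |t|)) := fun t ht => by
    refine (Metric.tendstoUniformlyOn_iff.2 fun e he => ?_).tendstoLocallyUniformlyOn
    filter_upwards [(tendsto_div_two_pow_atTop (2 * C)).eventually (gt_mem_nhds he)] with n hn ζ hζ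
    rw [dist_comm]
    exact (dist_le_of_le_geometric_two_of_tendsto (hdist ⟨ht, hζ⟩) (hlim ⟨ht, hζ⟩) n).trans_lt hn
  refine ⟨w, .of_tendstoLocallyUniformlyOn hr hκ hu hslice, fun n t ζ h => ⟨?_, ?_⟩⟩
  · rw [← dist_eq_norm]
    exact dist_le_of_le_geometric_two_of_tendsto (hdist h) (hlim h) n
  · have hderiv := ((hslice t h.1).deriv (.of_forall fun n ζ hζ =>
      ((hu n).differentiableAt (t, ζ) ⟨h.1, hζ⟩).differentiableWithinAt)
      (isOpen_strip _)).tendsto_at h.2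
    have hdist' n : dist (deriv (u n t) ζ) (deriv (u (n + 1) t) ζ) ≤
        2 * (C / √(R - κ * |t| - |ζ.im|)) / 2 / 2 ^ n := by
      rw [dist_eq_norm, mul_div_cancel_left₀ _ two_ne_zero, div_right_comm]
      exact (hclose n t ζ h).2
    rw [← dist_eq_norm]
    refine (dist_le_of_le_geometric_two_of_tendsto hdist' hderiv n).trans_eq ?_
    ring

end StripPath

section Picard

open Filter Topology

variable {E G : Type*} [NormedAddCommGroup E] [NormedSpace ℂ E]
  [NormedAddCommGroup G] [NormedSpace ℝ G]
  {F : (ℂ → E) → ℂ → E} {T ε r R B L κ : ℝ} {J : E →L[ℝ] G} {w v : ℝ → ℂ → E}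

/-- The Picard map of the evolution equation `∂ₜ w = F w` with zero initial value. -/
def picard (F : (ℂ → E) → ℂ → E) (w : ℝ → ℂ → E) (t : ℝ) (ζ : ℂ) : E :=
  ∫ s in (0 : ℝ)..t, F (w s) ζ

namespace StripOperator

section Slices

variable {t : ℝ} {ζ : ℂ}

theorem half_width_mem (hκ : 0 < κ) (h : κ * |t| < R - r) : r < R - κ * |t| ∧ R - κ * |t| ≤ R :=
  ⟨by linarith, by linarith [mul_nonneg hκ.le (abs_nonneg t)]⟩

theorem differentiableAt_comp (hF : StripOperator F T J ε r R B L) (hκ : 0 < κ)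
    (hw : StripPath T J ε r R B κ w) :
    ∀ p ∈ shrinkingStrip r R κ, DifferentiableAt ℂ (F (w p.1)) p.2 := fun p hp =>
  have hρ := half_width_mem hκ hp.1
  hF.differentiableAt hρ.1 hρ.2 (hw.ball hp.1) p.2 hp.2

theorem norm_comp_le (hF : StripOperator F T J ε r R B L) (hκ : 0 < κ)
    (hw : StripPath T J ε r R B κ w) (h : (t, ζ) ∈ shrinkingStrip r R κ) :
    ‖F (w t) ζ‖ ≤ B / √(R - κ * |t| - |ζ.im|) :=
  have hρ := half_width_mem hκ h.1
  hF.norm_le hρ.1 hρ.2 (hw.ball h.1) ζ h.2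

theorem norm_comp_sub_comp_le (hF : StripOperator F T J ε r R B L) (hκ : 0 < κ)
    (hw : StripPath T J ε r R B κ w) (hv : StripPath T J ε r R B κ v) {δ : ℝ}
    (hwv : StripClose r R κ δ w v) (h : (t, ζ) ∈ shrinkingStrip r R κ) :
    ‖F (w t) ζ - F (v t) ζ‖ ≤ L * δ / √(R - κ * |t| - |ζ.im|) :=
  have hρ := half_width_mem hκ h.1
  hF.lipschitz hρ.1 hρ.2 (hw.ball h.1) (hv.ball h.1) (fun ζ hζ => (hwv t ζ ⟨h.1, hζ⟩).1)
    (fun ζ hζ => (hwv t ζ ⟨h.1, hζ⟩).2) ζ h.2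

end Slices

/-- Giving up some width of the strip, Nagumo's lemma turns the Lipschitz bound in time of the path
into one for its space derivative, so that the Lipschitz bound of `F` applies. -/
theorem exists_lipschitz_comp (hF : StripOperator F T J ε r R B L) (hκ : 0 < κ)
    (hw : StripPath T J ε r R B κ w) {τ₀ τ : ℝ} (hτ₀ : τ₀ < τ) (hτ : κ * τ < R - r) :
    ∃ C, ∀ s t, |s| ≤ τ₀ → |t| ≤ τ₀ → ∀ ζ ∈ strip (R - κ * τ),
      ‖F (w t) ζ - F (w s) ζ‖ ≤ C * |t - s| / √(R - κ * τ - |ζ.im|) := by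
  have hB := hF.B_nonneg
  have hκτ : κ * τ₀ < κ * τ := mul_lt_mul_of_pos_left hτ₀ hκ
  set d := √(κ * τ - κ * τ₀)
  have : 0 < d := Real.sqrt_pos.2 (sub_pos.2 hκτ)
  have hd_le : ∀ {ζ}, ζ ∈ strip (R - κ * τ) → d ≤ √(R - κ * τ₀ - |ζ.im|) := fun hζ =>
    Real.sqrt_le_sqrt (by linarith [mem_strip.1 hζ])
  refine ⟨L * (B / d + 3 * B / d ^ 3 * √R), fun s t hs ht ζ hζ => ?_⟩
  have hτpos : 0 ≤ κ * τ := mul_nonneg hκ.le ((abs_nonneg s).trans (hs.trans hτ₀.le))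
  have hball : ∀ {u}, |u| ≤ τ₀ → StripBall T J ε (R - κ * τ) (w u) := fun hu =>
    have hκu := (mul_le_mul_of_nonneg_left hu hκ.le).trans hκτ.le
    (hw.ball (hκu.trans_lt hτ)).mono hF.ε_pos.le (by linarith)
  have hsub := strip_subset_strip (show R - κ * τ ≤ R - κ * τ₀ by linarith)
  rw [mul_assoc]
  refine hF.lipschitz (by linarith) (by linarith) (hball ht) (hball hs) (fun ζ hζ => ?_)
    (fun ζ hζ => ?_) ζ hζ
  · calc ‖w t ζ - w s ζ‖ ≤ B * |t - s| / √(R - κ * τ₀ - |ζ.im|) :=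
        hw.lipschitz hs ht (hκτ.trans hτ) ζ (hsub hζ)
      _ ≤ B * |t - s| / d := by gcongr; exact hd_le hζ
      _ = B / d * |t - s| := by ring
      _ ≤ (B / d + 3 * B / d ^ 3 * √R) * |t - s| := by
        gcongr
        exact le_add_of_nonneg_right (by positivity)
  · have hpos : 0 < √(R - κ * τ - |ζ.im|) := Real.sqrt_pos.2 (sub_pos.2 hζ)
    rw [le_div_iff₀ hpos]
    calc ‖deriv (w t) ζ - deriv (w s) ζ‖ * √(R - κ * τ - |ζ.im|)
        ≤ 3 * (B * |t - s|) / √(R - κ * τ₀ - |ζ.im|) ^ 3 * √R := by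
          gcongr
          · exact hw.norm_deriv_sub_le hκ hs ht (hκτ.trans hτ) (hsub hζ)
          · linarith [abs_nonneg ζ.im]
      _ ≤ 3 * (B * |t - s|) / d ^ 3 * √R := by gcongr; exact hd_le hζ
      _ = 3 * B / d ^ 3 * √R * |t - s| := by ring
      _ ≤ (B / d + 3 * B / d ^ 3 * √R) * |t - s| := by
        gcongr
        exact le_add_of_nonneg_left (by positivity)

theorem continuousOn_comp (hF : StripOperator F T J ε r R B L) (hκ : 0 < κ)
    (hw : StripPath T J ε r R B κ w) :
    ContinuousOn (fun p : ℝ × ℂ => F (w p.1) p.2) (shrinkingStrip r R κ) := by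
  rintro ⟨t, ζ⟩ h
  obtain ⟨τ, ht, hτ⟩ := exists_abs_lt_mem_shrinkingStrip hκ h
  obtain ⟨τ₀, ht₀, hτ₀⟩ := exists_between ht
  rw [mk_mem_shrinkingStrip, abs_of_pos ((abs_nonneg t).trans_lt ht)] at hτ
  obtain ⟨C, hC⟩ := hF.exists_lipschitz_comp hκ hw hτ₀ hτ.1
  refine (continuousAt_of_lipschitz_in_time (u := fun t => F (w t)) (C := C) hτ.2 ?_
    (hF.differentiableAt_comp hκ hw _ h).continuousAt).continuousWithinAt
  filter_upwards [continuous_abs.continuousAt.eventually (gt_mem_nhds ht₀)] with s hs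
  exact hC t s ht₀.le hs.le

theorem intervalIntegrable_comp (hF : StripOperator F T J ε r R B L) (hκ : 0 < κ)
    (hw : StripPath T J ε r R B κ w) {t : ℝ} {ζ : ℂ} (h : (t, ζ) ∈ shrinkingStrip r R κ) :
    IntervalIntegrable (fun s => F (w s) ζ) volume 0 t :=
  (continuousOn_slice_shrinkingStrip (g := fun s ζ => F (w s) ζ) hκ (hF.continuousOn_comp hκ hw)
    h).intervalIntegrable

theorem norm_picard_sub_picard_le (hF : StripOperator F T J ε r R B L) (hκ : 0 < κ)
    (hw : StripPath T J ε r R B κ w) {s t τ : ℝ} (hs : |s| ≤ τ) (ht : |t| ≤ τ)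
    (hτ : κ * τ < R - r) {ζ : ℂ} (hζ : ζ ∈ strip (R - κ * τ)) :
    ‖picard F w t ζ - picard F w s ζ‖ ≤ B * |t - s| / √(R - κ * τ - |ζ.im|) := by
  have hmem : ∀ {u}, |u| ≤ τ → (u, ζ) ∈ shrinkingStrip r R κ := fun hu => by
    have hκu := mul_le_mul_of_nonneg_left hu hκ.le
    exact ⟨hκu.trans_lt hτ, strip_subset_strip (by linarith) hζ⟩
  have hint := fun {u} (hu : |u| ≤ τ) => hF.intervalIntegrable_comp hκ hw (hmem hu)
  rw [picard, picard, intervalIntegral.integral_interval_sub_left (hint ht) (hint hs),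
    mul_div_right_comm]
  refine intervalIntegral.norm_integral_le_of_norm_le_const fun u hu => ?_
  have hu : |u| ≤ τ := abs_le.2 <|
    (uIcc_subset_Icc (abs_le.1 hs) (abs_le.1 ht)) (uIoc_subset_uIcc hu)
  refine (hF.norm_comp_le hκ hw (hmem hu)).trans (div_le_div_of_nonneg_left hF.B_nonneg
    (Real.sqrt_pos.2 (sub_pos.2 hζ)) (Real.sqrt_le_sqrt ?_))
  linarith [mul_le_mul_of_nonneg_left hu hκ.le]

theorem exists_steepness (hF : StripOperator F T J ε r R B L) :
    ∃ κ > 0, B * ((2 * √R + 6) / κ) ≤ ε ∧ L * ((2 * √R + 6) / κ) ≤ 1 / 2 := by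
  have hlim : ∀ K : ℝ, Tendsto (fun κ : ℝ => K * ((2 * √R + 6) / κ)) atTop (𝓝 0) := fun K => by
    simpa using (tendsto_const_nhds.div_atTop tendsto_id).const_mul K
  obtain ⟨κ, hB, hL, hκ⟩ := (((hlim B).eventually (gt_mem_nhds hF.ε_pos)).and
    (((hlim L).eventually (gt_mem_nhds one_half_pos)).and (eventually_gt_atTop 0))).exists
  exact ⟨κ, hκ, hB.le, hL.le⟩

variable [CompleteSpace E]

theorem hasDerivAt_picard (hF : StripOperator F T J ε r R B L) (hκ : 0 < κ)
    (hw : StripPath T J ε r R B κ w) {t : ℝ} {ζ : ℂ} (h : (t, ζ) ∈ shrinkingStrip r R κ) :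
    HasDerivAt (picard F w t) (∫ s in (0 : ℝ)..t, deriv (F (w s)) ζ) ζ :=
  hasDerivAt_integral_shrinkingStrip (g := fun s ζ => F (w s) ζ) hκ (hF.continuousOn_comp hκ hw)
    (hF.differentiableAt_comp hκ hw) h

theorem stripBall_picard [CompleteSpace G] (hF : StripOperator F T J ε r R B L) (hκ : 0 < κ)
    (hκB : B * ((2 * √R + 6) / κ) ≤ ε) (hw : StripPath T J ε r R B κ w) {t : ℝ}
    (ht : κ * |t| < R - r) : StripBall T J ε (R - κ * |t|) (picard F w t) := by
  have hbound := fun s ζ => hF.norm_comp_le hκ hw (t := s) (ζ := ζ)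
  have hball : ∀ s ∈ uIcc 0 t, StripBall T J ε (R - κ * |s|) (w s) ∧ r < R - κ * |s| ∧
      R - κ * |s| ≤ R ∧ R - κ * |t| ≤ R - κ * |s| := fun s hs => by
    have hst := mul_le_mul_of_nonneg_left (abs_le_abs_of_mem_uIcc_zero hs) hκ.le
    exact ⟨hw.ball (hst.trans_lt ht), by linarith, (half_width_mem hκ (hst.trans_lt ht)).2,
      by linarith⟩
  refine ⟨fun ζ hζ => (hF.hasDerivAt_picard hκ hw ⟨ht, hζ⟩).differentiableAt, fun ζ hζ => ?_,
    fun x => ?_, fun ζ hζ => ?_, fun ζ hζ => ?_⟩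
  · refine intervalIntegral.integral_congr fun s hs => ?_
    obtain ⟨hball, hr, hR, hle⟩ := hball s hs
    exact hF.periodic hr hR hball ζ (strip_subset_strip hle hζ)
  · have hx : (x : ℂ) ∈ strip (R - κ * |t|) := ofReal_mem_strip (by linarith [hF.r_nonneg]) x
    rw [picard, ← J.intervalIntegral_comp_comm (hF.intervalIntegrable_comp (ζ := x) hκ hw ⟨ht, hx⟩)]
    refine (intervalIntegral.integral_congr fun s hs => ?_).trans intervalIntegral.integral_zero
    obtain ⟨hball, hr, hR, -⟩ := hball s hs
    exact hF.apply_ofReal hr hR hball x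
  · exact (norm_integral_shrinkingStrip_le hκ hF.B_nonneg hbound ⟨ht, hζ⟩).trans hκB
  · exact (norm_deriv_integral_shrinkingStrip_le hκ hF.B_nonneg (hF.continuousOn_comp hκ hw)
      (hF.differentiableAt_comp hκ hw) hbound ⟨ht, hζ⟩).trans (by gcongr)

theorem stripPath_picard [CompleteSpace G] (hF : StripOperator F T J ε r R B L) (hκ : 0 < κ)
    (hκB : B * ((2 * √R + 6) / κ) ≤ ε) (hw : StripPath T J ε r R B κ w) :
    StripPath T J ε r R B κ (picard F w) where
  ball ht := hF.stripBall_picard hκ hκB hw ht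
  lipschitz hs ht hτ _ hζ := hF.norm_picard_sub_picard_le hκ hw hs ht hτ hζ

theorem stripClose_picard (hF : StripOperator F T J ε r R B L) (hκ : 0 < κ)
    (hκL : L * ((2 * √R + 6) / κ) ≤ 1 / 2) (hw : StripPath T J ε r R B κ w)
    (hv : StripPath T J ε r R B κ v) {δ : ℝ} (hδ : 0 ≤ δ) (hwv : StripClose r R κ δ w v) :
    StripClose r R κ (δ / 2) (picard F w) (picard F v) := by
  intro t ζ h
  have hLδ : 0 ≤ L * δ := mul_nonneg hF.L_nonneg hδ
  have hcw := hF.continuousOn_comp hκ hw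
  have hcv := hF.continuousOn_comp hκ hv
  have hdw := hF.differentiableAt_comp hκ hw
  have hdv := hF.differentiableAt_comp hκ hv
  have hbound := fun s ζ => hF.norm_comp_sub_comp_le hκ hw hv hwv (t := s) (ζ := ζ)
  have hhalf : L * δ * ((2 * √R + 6) / κ) ≤ δ / 2 := by
    nlinarith [mul_le_mul_of_nonneg_right hκL hδ]
  have hsub : ∀ ζ, (t, ζ) ∈ shrinkingStrip r R κ →
      picard F w t ζ - picard F v t ζ = ∫ s in (0 : ℝ)..t, (F (w s) ζ - F (v s) ζ) := fun ζ h =>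
    (intervalIntegral.integral_sub (hF.intervalIntegrable_comp hκ hw h)
      (hF.intervalIntegrable_comp hκ hv h)).symm
  refine ⟨?_, ?_⟩
  · rw [hsub ζ h]
    exact (norm_integral_shrinkingStrip_le hκ hLδ hbound h).trans hhalf
  · have hderiv : deriv (picard F w t) ζ - deriv (picard F v t) ζ =
        deriv (fun ζ => ∫ s in (0 : ℝ)..t, (F (w s) ζ - F (v s) ζ)) ζ := by
      rw [← deriv_fun_sub (hF.hasDerivAt_picard hκ hw h).differentiableAt
        (hF.hasDerivAt_picard hκ hv h).differentiableAt]
      refine EventuallyEq.deriv_eq ?_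
      filter_upwards [(isOpen_strip _).mem_nhds h.2] with ζ hζ using hsub ζ ⟨h.1, hζ⟩
    rw [hderiv]
    exact (norm_deriv_integral_shrinkingStrip_le (g := fun s ζ => F (w s) ζ - F (v s) ζ) hκ hLδ
      (hcw.sub hcv) (fun p hp => (hdw p hp).sub (hdv p hp)) hbound h).trans (by gcongr)

/-- The Cauchy–Kovalevskaya theorem in the scale of strips. -/
theorem exists_fixedPoint [CompleteSpace G] (hF : StripOperator F T J ε r R B L) :
    ∃ κ > 0, ∃ w, StripPath T J ε r R B κ w ∧
      ∀ t ζ, (t, ζ) ∈ shrinkingStrip r R κ → w t ζ = picard F w t ζ := by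
  obtain ⟨κ, hκ, hκB, hκL⟩ := hF.exists_steepness
  have hε := hF.ε_pos
  let u n := (picard F)^[n] (0 : ℝ → ℂ → E)
  have hsucc n : u (n + 1) = picard F (u n) := Function.iterate_succ_apply' _ _ _
  have hu : ∀ n, StripPath T J ε r R B κ (u n) := fun n => by
    induction n with
    | zero => exact stripPath_zero hε.le hF.B_nonneg
    | succ n ih => rw [hsucc]; exact hF.stripPath_picard hκ hκB ih
  have hclose : ∀ n, StripClose r R κ (ε / 2 ^ n) (u n) (u (n + 1)) := fun n => by
    induction n with
    | zero =>
      intro t ζ h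
      have hball := (hu 1).ball h.1
      simpa [u, deriv_const, Pi.zero_def] using And.intro (hball.norm_le ζ h.2)
        (hball.norm_deriv_le ζ h.2)
    | succ n ih =>
      rw [hsucc n, hsucc (n + 1), pow_succ, ← div_div]
      exact hF.stripClose_picard hκ hκL (hu n) (hu (n + 1)) (by positivity) ih
  obtain ⟨w, hw, hlim⟩ := StripPath.exists_limit hF.r_nonneg hκ hu hclose
  refine ⟨κ, hκ, w, hw, fun t ζ h => ?_⟩
  refine tendsto_nhds_unique ((tendsto_add_atTop_iff_nat 1).2
    (StripClose.tendsto (tendsto_div_two_pow_atTop (2 * ε)) hlim h)) ?_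
  refine StripClose.tendsto (δ := fun n => 2 * ε / 2 ^ n / 2) (w := picard F w)
    (by simpa using (tendsto_div_two_pow_atTop (2 * ε)).div_const 2) (fun n => ?_) h
  rw [hsucc]
  exact hF.stripClose_picard hκ hκL (hu n) hw (by positivity) (hlim n)

theorem hasDerivAt_time_of_eq_picard (hF : StripOperator F T J ε r R B L) (hκ : 0 < κ)
    (hw : StripPath T J ε r R B κ w)
    (heq : ∀ t ζ, (t, ζ) ∈ shrinkingStrip r R κ → w t ζ = picard F w t ζ) {t : ℝ} {ζ : ℂ}
    (h : (t, ζ) ∈ shrinkingStrip r R κ) : HasDerivAt (fun s => w s ζ) (F (w t) ζ) t := by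
  refine (hasDerivAt_time_integral_shrinkingStrip (g := fun s ζ => F (w s) ζ) hκ
    (hF.continuousOn_comp hκ hw) h).congr_of_eventuallyEq ?_
  filter_upwards [((isOpen_shrinkingStrip r R κ).preimage (Continuous.prodMk_left ζ)).mem_nhds h]
    with s hs using heq s ζ hs

theorem continuousOn_deriv_comp (hF : StripOperator F T J ε r R B L) (hκ : 0 < κ)
    (hw : StripPath T J ε r R B κ w) :
    ContinuousOn (fun p : ℝ × ℂ => deriv (F (w p.1)) p.2) (shrinkingStrip r R κ) :=
  continuousOn_deriv_shrinkingStrip (g := fun s ζ => F (w s) ζ) (hF.continuousOn_comp hκ hw)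
    (hF.differentiableAt_comp hκ hw)

theorem hasDerivAt_time_deriv_of_eq_picard (hF : StripOperator F T J ε r R B L) (hκ : 0 < κ)
    (hw : StripPath T J ε r R B κ w)
    (heq : ∀ t ζ, (t, ζ) ∈ shrinkingStrip r R κ → w t ζ = picard F w t ζ) {t : ℝ} {ζ : ℂ}
    (h : (t, ζ) ∈ shrinkingStrip r R κ) :
    HasDerivAt (fun s => deriv (w s) ζ) (deriv (F (w t)) ζ) t := by
  refine (hasDerivAt_time_integral_shrinkingStrip (g := fun s ζ => deriv (F (w s)) ζ) hκ
    (hF.continuousOn_deriv_comp hκ hw) h).congr_of_eventuallyEq ?_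
  filter_upwards [((isOpen_shrinkingStrip r R κ).preimage (Continuous.prodMk_left ζ)).mem_nhds h]
    with s hs
  refine ((hF.hasDerivAt_picard hκ hw hs).congr_of_eventuallyEq ?_).deriv
  filter_upwards [(isOpen_strip _).mem_nhds hs.2] with ζ hζ using heq s ζ ⟨hs.1, hζ⟩

end StripOperator

end Picard

/-! ### The Muskat kernel -/

section HyperbolicBounds

theorem norm_complexSinh_le (z : ℂ) : ‖Complex.sinh z‖ ≤ Real.exp |z.re| := by
  rw [Complex.sinh, norm_div, Complex.norm_ofNat, div_le_iff₀ two_pos]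
  calc ‖Complex.exp z - Complex.exp (-z)‖ ≤ Real.exp z.re + Real.exp (-z.re) := by
        simpa only [Complex.norm_exp, Complex.neg_re] using
          norm_sub_le (Complex.exp z) (Complex.exp (-z))
    _ ≤ Real.exp |z.re| + Real.exp |z.re| := by
        gcongr
        exacts [le_abs_self _, neg_le_abs _]
    _ = Real.exp |z.re| * 2 := by ring

theorem norm_complexCosh_le (z : ℂ) : ‖Complex.cosh z‖ ≤ Real.exp |z.re| := by
  rw [Complex.cosh, norm_div, Complex.norm_ofNat, div_le_iff₀ two_pos]
  calc ‖Complex.exp z + Complex.exp (-z)‖ ≤ Real.exp z.re + Real.exp (-z.re) := by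
        simpa only [Complex.norm_exp, Complex.neg_re] using
          norm_add_le (Complex.exp z) (Complex.exp (-z))
    _ ≤ Real.exp |z.re| + Real.exp |z.re| := by
        gcongr
        exacts [le_abs_self _, neg_le_abs _]
    _ = Real.exp |z.re| * 2 := by ring

theorem norm_complexSin_le (z : ℂ) : ‖Complex.sin z‖ ≤ Real.exp |z.im| := by
  simpa [Complex.sinh_mul_I] using norm_complexSinh_le (z * Complex.I)

theorem convex_setOf_abs_re_le (M : ℝ) : Convex ℝ {z : ℂ | |z.re| ≤ M} := by
  simpa only [abs_le, ← ofPred_and] using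
    (convex_halfSpace_re_ge (-M)).inter (convex_halfSpace_re_le M)

theorem norm_complexSinh_sub_le {M : ℝ} {a b : ℂ} (ha : |a.re| ≤ M) (hb : |b.re| ≤ M) :
    ‖Complex.sinh a - Complex.sinh b‖ ≤ Real.exp M * ‖a - b‖ := by
  refine (convex_setOf_abs_re_le M).norm_image_sub_le_of_norm_deriv_le (𝕜 := ℂ)
    (fun x _ => Complex.differentiable_sinh x) (fun x hx => ?_) hb ha
  rw [Complex.deriv_sinh]
  exact (norm_complexCosh_le x).trans (Real.exp_le_exp.2 hx)

theorem norm_complexCosh_sub_le {M : ℝ} {a b : ℂ} (ha : |a.re| ≤ M) (hb : |b.re| ≤ M) :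
    ‖Complex.cosh a - Complex.cosh b‖ ≤ Real.exp M * ‖a - b‖ := by
  refine (convex_setOf_abs_re_le M).norm_image_sub_le_of_norm_deriv_le (𝕜 := ℂ)
    (fun x _ => Complex.differentiable_cosh x) (fun x hx => ?_) hb ha
  rw [Complex.deriv_cosh]
  exact (norm_complexSinh_le x).trans (Real.exp_le_exp.2 hx)

theorem norm_complexSin_sub_le {M : ℝ} {a b : ℂ} (ha : |a.im| ≤ M) (hb : |b.im| ≤ M) :
    ‖Complex.sin a - Complex.sin b‖ ≤ Real.exp M * ‖a - b‖ := by
  simpa [Complex.sinh_mul_I, ← sub_mul] using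
    norm_complexSinh_sub_le (a := a * Complex.I) (b := b * Complex.I) (M := M) (by simpa)
      (by simpa)

theorem norm_complexCosh_sub_le_mul {s : ℝ} {a b : ℂ} (ha : ‖a‖ ≤ s) (hb : ‖b‖ ≤ s) :
    ‖Complex.cosh a - Complex.cosh b‖ ≤ s * Real.exp s * ‖a - b‖ := by
  have hs : 0 ≤ s := (norm_nonneg a).trans ha
  refine (convex_closedBall (0 : ℂ) s).norm_image_sub_le_of_norm_deriv_le (𝕜 := ℂ)
    (fun x _ => Complex.differentiable_cosh x) (fun x hx => ?_) (by simpa) (by simpa)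
  have hx : ‖x‖ ≤ s := by simpa using hx
  have hsinh := norm_complexSinh_sub_le (M := s) (a := x) (b := 0)
    ((Complex.abs_re_le_norm x).trans hx) (by simpa)
  rw [Complex.sinh_zero, sub_zero, sub_zero] at hsinh
  rw [Complex.deriv_cosh, mul_comm s]
  exact hsinh.trans (by gcongr)

theorem norm_complexCosh_sub_taylor_le (x : ℂ) :
    ‖Complex.cosh x - (1 + x ^ 2 / 2)‖ ≤ ‖x‖ ^ 3 * Real.exp ‖x‖ := by
  have hpos := Complex.norm_exp_sub_sum_le_norm_mul_exp x 3
  have hneg := Complex.norm_exp_sub_sum_le_norm_mul_exp (-x) 3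
  rw [norm_neg] at hneg
  have hsplit : Complex.cosh x - (1 + x ^ 2 / 2) =
      ((Complex.exp x - ∑ m ∈ Finset.range 3, x ^ m / (m.factorial : ℂ)) +
       (Complex.exp (-x) - ∑ m ∈ Finset.range 3, (-x) ^ m / (m.factorial : ℂ))) / 2 := by
    simp only [Complex.cosh, Finset.sum_range_succ, Finset.sum_range_zero, Nat.factorial]
    push_cast
    ring
  rw [hsplit, norm_div, Complex.norm_ofNat, div_le_iff₀ two_pos]
  refine (norm_add_le _ _).trans ?_
  linarith

end HyperbolicBounds

section Kernel

/-- The denominator `cosh p₂ - cos p₁` of the Muskat kernel at a complexified chord `p`. -/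
def chordDenom (p : ℂ × ℂ) : ℂ := Complex.cosh p.2 - Complex.cos p.1

/-- The complexified Muskat kernel `sin p₁ / (cosh p₂ - cos p₁)`. -/
def muskatKernel (p : ℂ × ℂ) : ℂ := Complex.sin p.1 / chordDenom p

theorem chordDenom_eq_cosh_sub_cosh (p : ℂ × ℂ) :
    chordDenom p = Complex.cosh p.2 - Complex.cosh (p.1 * Complex.I) := by
  rw [chordDenom, Complex.cosh_mul_I]

theorem chordDenom_add_int (p : ℂ × ℂ) (k : ℤ) :
    chordDenom (p + (((k * (2 * π) : ℝ) : ℂ), 0)) = chordDenom p := by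
  simp only [chordDenom, Prod.fst_add, Prod.snd_add, add_zero]
  push_cast
  rw [Complex.cos_add_int_mul_two_pi]

theorem muskatKernel_add_int (p : ℂ × ℂ) (k : ℤ) :
    muskatKernel (p + (((k * (2 * π) : ℝ) : ℂ), 0)) = muskatKernel p := by
  rw [muskatKernel, muskatKernel, chordDenom_add_int, Prod.fst_add]
  push_cast
  rw [Complex.sin_add_int_mul_two_pi]

theorem differentiable_chordDenom : Differentiable ℂ chordDenom :=
  (Complex.differentiable_cosh.comp differentiable_snd).sub
    (Complex.differentiable_cos.comp differentiable_fst)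

theorem differentiableAt_muskatKernel {p : ℂ × ℂ} (h : chordDenom p ≠ 0) :
    DifferentiableAt ℂ muskatKernel p := by
  rw [show muskatKernel = fun p : ℂ × ℂ => Complex.sin p.1 * (chordDenom p)⁻¹ from
    funext fun p => div_eq_mul_inv _ _]
  exact ((Complex.differentiable_sin.comp differentiable_fst) p).mul
    ((differentiable_chordDenom p).inv h)

theorem norm_chordDenom_sub_le_mul {s : ℝ} {p q : ℂ × ℂ} (hp : ‖p‖ ≤ s) (hq : ‖q‖ ≤ s) :
    ‖chordDenom p - chordDenom q‖ ≤ 2 * (s * Real.exp s) * ‖p - q‖ := by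
  have hs : 0 ≤ s := (norm_nonneg p).trans hp
  have h₂ := norm_complexCosh_sub_le_mul ((norm_snd_le p).trans hp) ((norm_snd_le q).trans hq)
  have h₁ := norm_complexCosh_sub_le_mul (a := p.1 * Complex.I) (b := q.1 * Complex.I) (s := s)
    (by simpa using (norm_fst_le p).trans hp) (by simpa using (norm_fst_le q).trans hq)
  rw [← sub_mul, norm_mul, Complex.norm_I, mul_one] at h₁
  rw [chordDenom_eq_cosh_sub_cosh, chordDenom_eq_cosh_sub_cosh, sub_sub_sub_comm]
  calc _ ≤ s * Real.exp s * ‖(p - q).2‖ + s * Real.exp s * ‖(p - q).1‖ :=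
        (norm_sub_le _ _).trans (add_le_add h₂ h₁)
    _ ≤ s * Real.exp s * ‖p - q‖ + s * Real.exp s * ‖p - q‖ := by
        gcongr
        exacts [norm_snd_le _, norm_fst_le _]
    _ = 2 * (s * Real.exp s) * ‖p - q‖ := by ring

theorem norm_chordDenom_sub_taylor_le {s : ℝ} {p : ℂ × ℂ} (hp : ‖p‖ ≤ s) :
    ‖chordDenom p - (p.1 ^ 2 + p.2 ^ 2) / 2‖ ≤ 2 * s ^ 3 * Real.exp s := by
  have hcube : ∀ x : ℂ, ‖x‖ ≤ s → ‖Complex.cosh x - (1 + x ^ 2 / 2)‖ ≤ s ^ 3 * Real.exp s :=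
    fun x hx => (norm_complexCosh_sub_taylor_le x).trans <|
      mul_le_mul (pow_le_pow_left₀ (norm_nonneg x) hx 3) (Real.exp_le_exp.2 hx)
        (Real.exp_pos _).le (pow_nonneg ((norm_nonneg x).trans hx) 3)
  have hsplit : chordDenom p - (p.1 ^ 2 + p.2 ^ 2) / 2 = (Complex.cosh p.2 - (1 + p.2 ^ 2 / 2)) -
      (Complex.cosh (p.1 * Complex.I) - (1 + (p.1 * Complex.I) ^ 2 / 2)) := by
    rw [chordDenom_eq_cosh_sub_cosh, mul_pow, Complex.I_sq]
    ring
  rw [hsplit]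
  refine (norm_sub_le _ _).trans ?_
  linarith [hcube p.2 ((norm_snd_le p).trans hp),
    hcube (p.1 * Complex.I) (by simpa using (norm_fst_le p).trans hp)]

/-- The chords at which the kernel is controlled: a bounded distance from the real ones in the
unbounded directions of `sin` and `cosh`, and with denominator at least `m`. -/
def kernelDomain (M m : ℝ) : Set (ℂ × ℂ) := {p | |p.1.im| ≤ M ∧ |p.2.re| ≤ M ∧ m ≤ ‖chordDenom p‖}

variable {M m : ℝ} {p q : ℂ × ℂ}

theorem norm_chordDenom_sub_le (hp₁ : |p.1.im| ≤ M) (hp₂ : |p.2.re| ≤ M) (hq₁ : |q.1.im| ≤ M)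
    (hq₂ : |q.2.re| ≤ M) : ‖chordDenom p - chordDenom q‖ ≤ 2 * Real.exp M * ‖p - q‖ := by
  have h₂ := norm_complexCosh_sub_le hp₂ hq₂
  have h₁ := norm_complexCosh_sub_le (a := p.1 * Complex.I) (b := q.1 * Complex.I) (M := M)
    (by simpa using hp₁) (by simpa using hq₁)
  rw [← sub_mul, norm_mul, Complex.norm_I, mul_one] at h₁
  rw [chordDenom_eq_cosh_sub_cosh, chordDenom_eq_cosh_sub_cosh, sub_sub_sub_comm]
  calc _ ≤ Real.exp M * ‖(p - q).2‖ + Real.exp M * ‖(p - q).1‖ :=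
        (norm_sub_le _ _).trans (add_le_add h₂ h₁)
    _ ≤ Real.exp M * ‖p - q‖ + Real.exp M * ‖p - q‖ := by
        gcongr
        exacts [norm_snd_le _, norm_fst_le _]
    _ = 2 * Real.exp M * ‖p - q‖ := by ring

theorem chordDenom_ne_zero_of_mem_kernelDomain (hm : 0 < m) (hp : p ∈ kernelDomain M m) :
    chordDenom p ≠ 0 := norm_pos_iff.1 (hm.trans_le hp.2.2)

theorem norm_muskatKernel_le (hm : 0 < m) (hp : p ∈ kernelDomain M m) :
    ‖muskatKernel p‖ ≤ Real.exp M / m := by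
  rw [muskatKernel, norm_div]
  exact div_le_div₀ (Real.exp_pos M).le
    ((norm_complexSin_le _).trans (Real.exp_le_exp.2 hp.1)) hm hp.2.2

theorem norm_muskatKernel_sub_le (hm : 0 < m) (hp : p ∈ kernelDomain M m)
    (hq : q ∈ kernelDomain M m) :
    ‖muskatKernel p - muskatKernel q‖ ≤
      (Real.exp M / m + 2 * (Real.exp M / m) ^ 2) * ‖p - q‖ := by
  have hp₀ := chordDenom_ne_zero_of_mem_kernelDomain hm hp
  have hq₀ := chordDenom_ne_zero_of_mem_kernelDomain hm hq
  have hsplit : muskatKernel p - muskatKernel q = (Complex.sin p.1 - Complex.sin q.1) / chordDenom p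
      - muskatKernel q * ((chordDenom p - chordDenom q) / chordDenom p) := by
    simp only [muskatKernel]
    field_simp
    ring
  have hsin : ‖(Complex.sin p.1 - Complex.sin q.1) / chordDenom p‖ ≤
      Real.exp M * ‖p - q‖ / m := by
    rw [norm_div]
    refine div_le_div₀ (by positivity) ((norm_complexSin_sub_le hp.1 hq.1).trans ?_) hm hp.2.2
    gcongr
    exact norm_fst_le (p - q)
  have hdenom : ‖(chordDenom p - chordDenom q) / chordDenom p‖ ≤
      2 * Real.exp M * ‖p - q‖ / m := by
    rw [norm_div]
    exact div_le_div₀ (by positivity) (norm_chordDenom_sub_le hp.1 hp.2.1 hq.1 hq.2.1) hm hp.2.2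
  calc _ ≤ Real.exp M * ‖p - q‖ / m
        + Real.exp M / m * (2 * Real.exp M * ‖p - q‖ / m) := by
        rw [hsplit]
        refine (norm_sub_le _ _).trans (add_le_add hsin ?_)
        rw [norm_mul]
        exact mul_le_mul (norm_muskatKernel_le hm hq) hdenom (norm_nonneg _) (by positivity)
    _ = _ := by ring

end Kernel

/-! ### The complexified contour equation -/

section ContourOperator

/-- Coordinatewise real part. -/
def rePair : ℂ × ℂ →L[ℝ] ℝ × ℝ := Complex.reCLM.prodMap Complex.reCLM

/-- Coordinatewise imaginary part. -/
def imPair : ℂ × ℂ →L[ℝ] ℝ × ℝ := Complex.imCLM.prodMap Complex.imCLM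

/-- A complexified interface on the strip of half-width `ρ ∈ (3R/4, R]`, with a quantitative
arc-chord condition: chords are controlled in the inner strip of half-width `R/2`, quadratically at
the diagonal, and between points whose heights differ by at least `R/4`. -/
structure RegularCurve (R c m M ρ : ℝ) (z : ℂ → ℂ × ℂ) : Prop where
  R_pos : 0 < R
  c_pos : 0 < c
  m_pos : 0 < m
  lt_width : 3 * R / 4 < ρ
  width_le : ρ ≤ R
  differentiableAt : ∀ ζ ∈ strip ρ, DifferentiableAt ℂ z ζ
  periodic : ∀ ζ ∈ strip ρ, z (ζ + ((2 * π : ℝ) : ℂ)) = z ζ + (((2 * π : ℝ) : ℂ), 0)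
  imPair_ofReal : ∀ x : ℝ, imPair (z x) = 0
  norm_deriv_le : ∀ ζ ∈ strip ρ, ‖deriv z ζ‖ ≤ M / √(ρ - |ζ.im|)
  mem_kernelDomain : ∀ α ∈ strip ρ, ∀ γ ∈ strip ρ, R / 4 ≤ |α.im - γ.im| →
    z α - z γ ∈ kernelDomain M m
  arcChord : ∀ α γ : ℂ, |α.im| ≤ R / 2 → |γ.im| ≤ R / 2 → |α.re - γ.re| ≤ π →
    c * ‖α - γ‖ ^ 2 ≤ ‖chordDenom (z α - z γ)‖

/-- The integrand of the complexified contour equation at the point `z α`. -/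
def muskatIntegrand (z : ℂ → ℂ × ℂ) (α γ : ℂ) : ℂ × ℂ :=
  muskatKernel (z α - z γ) • (deriv z α - deriv z γ)

/-- The velocity at `z α` obtained by integrating along the horizontal line of height `σ`. -/
def lineVelocity (z : ℂ → ℂ × ℂ) (σ : ℝ) (α : ℂ) : ℂ × ℂ :=
  ∫ x in (-π)..π, muskatIntegrand z α (x + σ * Complex.I)

/-- The complexified right-hand side of the contour equation. The contour is moved to height
`±R/2`, on the side opposite to `α`, so that it stays away from the singularity of the kernel. -/
def complexMuskatRHS (R : ℝ) (z : ℂ → ℂ × ℂ) (α : ℂ) : ℂ × ℂ :=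
  if 0 ≤ α.im then lineVelocity z (-(R / 2)) α else lineVelocity z (R / 2) α

theorem exists_complexMuskatRHS_eq_lineVelocity {R : ℝ} (hR : 0 < R) (α : ℂ) :
    ∃ σ : ℝ, |σ| = R / 2 ∧ R / 4 ≤ |α.im - σ| ∧
      ∀ z, complexMuskatRHS R z α = lineVelocity z σ α := by
  have habs : |R / 2| = R / 2 := abs_of_pos (half_pos hR)
  rcases le_or_gt 0 α.im with hα | hα
  · exact ⟨-(R / 2), by rw [abs_neg, habs], by rw [abs_of_nonneg] <;> linarith,
      fun z => if_pos hα⟩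
  · exact ⟨R / 2, habs, by rw [abs_of_neg] <;> linarith, fun z => if_neg hα.not_ge⟩

theorem norm_sub_le_three_mul_div_sqrt {E : Type*} [SeminormedAddCommGroup E] {u v : E}
    {A a b : ℝ} (ha : 0 < a) (hab : a ≤ 4 * b) (hu : ‖u‖ ≤ A / √a) (hv : ‖v‖ ≤ A / √b) :
    ‖u - v‖ ≤ 3 * A / √a := by
  have hb : 0 < b := by linarith
  have hA : 0 ≤ A := nonneg_of_mul_nonneg_left
    ((norm_nonneg u).trans hu) (inv_pos.2 (Real.sqrt_pos.2 ha))
  have hsqrt : √a ≤ 2 * √b := by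
    rw [show (2 : ℝ) = √4 by rw [show (4 : ℝ) = 2 ^ 2 by norm_num, Real.sqrt_sq two_pos.le],
      ← Real.sqrt_mul (by norm_num)]
    exact Real.sqrt_le_sqrt hab
  have hv' : A / √b ≤ 2 * (A / √a) := by
    rw [← mul_div_assoc, div_le_div_iff₀ (Real.sqrt_pos.2 hb) (Real.sqrt_pos.2 ha)]
    nlinarith
  calc ‖u - v‖ ≤ A / √a + 2 * (A / √a) := (norm_sub_le u v).trans (by linarith)
    _ = 3 * A / √a := by ring

namespace RegularCurve

variable {R c m M ρ : ℝ} {z : ℂ → ℂ × ℂ}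

theorem width_pos (hz : RegularCurve R c m M ρ z) : 0 < ρ := by linarith [hz.R_pos, hz.lt_width]

theorem mem_strip_of_abs_im_le (hz : RegularCurve R c m M ρ z) {α : ℂ} (h : |α.im| ≤ R / 2) :
    α ∈ strip ρ := mem_strip.2 (by linarith [hz.lt_width, hz.R_pos])

theorem line_mem_strip (hz : RegularCurve R c m M ρ z) {σ : ℝ} (hσ : |σ| = R / 2) (x : ℝ) :
    (x + σ * Complex.I : ℂ) ∈ strip ρ := hz.mem_strip_of_abs_im_le (by simpa using hσ.le)

theorem differentiableAt_deriv (hz : RegularCurve R c m M ρ z) {ζ : ℂ} (hζ : ζ ∈ strip ρ) :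
    DifferentiableAt ℂ (deriv z) ζ :=
  differentiableAt_deriv_of_forall_mem_strip hz.differentiableAt hζ

theorem deriv_periodic (hz : RegularCurve R c m M ρ z) {ζ : ℂ} (hζ : ζ ∈ strip ρ) :
    deriv z (ζ + ((2 * π : ℝ) : ℂ)) = deriv z ζ :=
  deriv_add_of_forall_mem_strip hz.periodic hζ

theorem muskatIntegrand_periodic_left (hz : RegularCurve R c m M ρ z) (γ : ℂ) {α : ℂ}
    (hα : α ∈ strip ρ) :
    muskatIntegrand z (α + ((2 * π : ℝ) : ℂ)) γ = muskatIntegrand z α γ := by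
  have hkernel := muskatKernel_add_int (z α - z γ) 1
  rw [Int.cast_one, one_mul] at hkernel
  rw [muskatIntegrand, muskatIntegrand, hz.deriv_periodic hα, hz.periodic α hα, add_sub_right_comm,
    hkernel]

theorem muskatIntegrand_periodic_right (hz : RegularCurve R c m M ρ z) (α : ℂ) {γ : ℂ}
    (hγ : γ ∈ strip ρ) :
    muskatIntegrand z α (γ + ((2 * π : ℝ) : ℂ)) = muskatIntegrand z α γ := by
  have hkernel := muskatKernel_add_int (z α - (z γ + (((2 * π : ℝ) : ℂ), 0))) 1
  rw [Int.cast_one, one_mul, sub_add_eq_sub_sub, sub_add_cancel] at hkernel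
  rw [muskatIntegrand, muskatIntegrand, hz.deriv_periodic hγ, hz.periodic γ hγ,
    sub_add_eq_sub_sub, hkernel]

theorem complexMuskatRHS_periodic (hz : RegularCurve R c m M ρ z) {α : ℂ} (hα : α ∈ strip ρ) :
    complexMuskatRHS R z (α + ((2 * π : ℝ) : ℂ)) = complexMuskatRHS R z α := by
  simp only [complexMuskatRHS, lineVelocity, hz.muskatIntegrand_periodic_left _ hα,
    Complex.add_im, Complex.ofReal_im, add_zero]

theorem differentiableAt_muskatIntegrand (hz : RegularCurve R c m M ρ z) {p : ℂ × ℂ}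
    (hα : p.1 ∈ strip ρ) (hγ : p.2 ∈ strip ρ) (hD : chordDenom (z p.1 - z p.2) ≠ 0) :
    DifferentiableAt ℂ (fun p : ℂ × ℂ => muskatIntegrand z p.1 p.2) p := by
  have hfst {f : ℂ → ℂ × ℂ} (hf : DifferentiableAt ℂ f p.1) :
      DifferentiableAt ℂ (fun p : ℂ × ℂ => f p.1) p := hf.comp p differentiableAt_fst
  have hsnd {f : ℂ → ℂ × ℂ} (hf : DifferentiableAt ℂ f p.2) :
      DifferentiableAt ℂ (fun p : ℂ × ℂ => f p.2) p := hf.comp p differentiableAt_snd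
  have hkernel : DifferentiableAt ℂ (fun p : ℂ × ℂ => muskatKernel (z p.1 - z p.2)) p :=
    (differentiableAt_muskatKernel hD).comp (f := fun p : ℂ × ℂ => z p.1 - z p.2) p
      ((hfst (hz.differentiableAt _ hα)).sub (hsnd (hz.differentiableAt _ hγ)))
  exact hkernel.smul ((hfst (hz.differentiableAt_deriv hα)).sub
    (hsnd (hz.differentiableAt_deriv hγ)))

variable {α : ℂ} {σ : ℝ}

theorem line_mem_kernelDomain (hz : RegularCurve R c m M ρ z) (hα : α ∈ strip ρ)
    (hσ : |σ| = R / 2) (h : R / 4 ≤ |α.im - σ|) (x : ℝ) :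
    z α - z (x + σ * Complex.I) ∈ kernelDomain M m :=
  hz.mem_kernelDomain α hα _ (hz.line_mem_strip hσ x) (by simpa using h)

theorem differentiableAt_muskatIntegrand_line (hz : RegularCurve R c m M ρ z) (hα : α ∈ strip ρ)
    (hσ : |σ| = R / 2) (h : R / 4 ≤ |α.im - σ|) (x : ℝ) :
    DifferentiableAt ℂ (fun p : ℂ × ℂ => muskatIntegrand z p.1 p.2) (α, x + σ * Complex.I) :=
  hz.differentiableAt_muskatIntegrand (p := (α, x + σ * Complex.I)) hα (hz.line_mem_strip hσ x)
    (chordDenom_ne_zero_of_mem_kernelDomain hz.m_pos (hz.line_mem_kernelDomain hα hσ h x))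

theorem intervalIntegrable_muskatIntegrand_line (hz : RegularCurve R c m M ρ z) (hα : α ∈ strip ρ)
    (hσ : |σ| = R / 2) (h : R / 4 ≤ |α.im - σ|) (a b : ℝ) :
    IntervalIntegrable (fun x : ℝ => muskatIntegrand z α (x + σ * Complex.I)) volume a b := by
  refine Continuous.intervalIntegrable (continuous_iff_continuousAt.2 fun x => ?_) a b
  exact (hz.differentiableAt_muskatIntegrand_line hα hσ h x).continuousAt.comp
    (f := fun x : ℝ => (α, (x + σ * Complex.I : ℂ))) (by fun_prop)

theorem differentiableAt_lineVelocity (hz : RegularCurve R c m M ρ z) (hα : α ∈ strip ρ)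
    (hσ : |σ| = R / 2) (h : R / 4 < |α.im - σ|) : DifferentiableAt ℂ (lineVelocity z σ) α := by
  have hW : IsOpen {p : ℝ × ℂ | p.2 ∈ strip ρ ∧ R / 4 < |p.2.im - σ|} :=
    (isOpen_lt (f := fun p : ℝ × ℂ => |p.2.im|) (by fun_prop) continuous_const).inter
      (isOpen_lt (g := fun p : ℝ × ℂ => |p.2.im - σ|) continuous_const (by fun_prop))
  refine (hasDerivAt_intervalIntegral_of_continuousOn_uncurry
    (g := fun x ζ => muskatIntegrand z ζ (x + σ * Complex.I)) hW (fun p hp => ?_) (fun p hp => ?_)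
    fun x _ => ⟨hα, h⟩).differentiableAt
  · exact ((hz.differentiableAt_muskatIntegrand_line hp.1 hσ hp.2.le p.1).continuousAt.comp
      (f := fun p : ℝ × ℂ => (p.2, (p.1 + σ * Complex.I : ℂ))) (by fun_prop)).continuousWithinAt
  · exact (hz.differentiableAt_muskatIntegrand_line hp.1 hσ hp.2.le p.1).comp
      (f := fun ζ : ℂ => (ζ, (p.1 + σ * Complex.I : ℂ))) p.2 (by fun_prop)

theorem norm_sub_line_le (hz : RegularCurve R c m M ρ z) (hα : α ∈ strip ρ) (hσ : |σ| = R / 2)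
    {f : ℂ → ℂ × ℂ} {A : ℝ} (hf : ∀ ζ ∈ strip ρ, ‖f ζ‖ ≤ A / √(ρ - |ζ.im|)) (x : ℝ) :
    ‖f α - f (x + σ * Complex.I)‖ ≤ 3 * A / √(ρ - |α.im|) := by
  have hline := hf _ (hz.line_mem_strip hσ x)
  rw [show (x + σ * Complex.I : ℂ).im = σ by simp, hσ] at hline
  exact norm_sub_le_three_mul_div_sqrt (sub_pos.2 hα)
    (by linarith [hz.lt_width, hz.width_le, abs_nonneg α.im]) (hf α hα) hline

theorem norm_lineVelocity_le (hz : RegularCurve R c m M ρ z) (hα : α ∈ strip ρ)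
    (hσ : |σ| = R / 2) (h : R / 4 ≤ |α.im - σ|) :
    ‖lineVelocity z σ α‖ ≤ 2 * π * (Real.exp M / m * (3 * M)) / √(ρ - |α.im|) := by
  have hm := hz.m_pos
  refine (intervalIntegral.norm_integral_le_of_norm_le_const
    (C := Real.exp M / m * (3 * M / √(ρ - |α.im|))) fun x _ => ?_).trans_eq ?_
  · rw [muskatIntegrand, norm_smul]
    exact mul_le_mul (norm_muskatKernel_le hm (hz.line_mem_kernelDomain hα hσ h x))
      (hz.norm_sub_line_le hα hσ hz.norm_deriv_le x) (norm_nonneg _) (by positivity)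
  · rw [sub_neg_eq_add, ← two_mul, abs_of_pos Real.two_pi_pos]
    ring

theorem norm_muskatIntegrand_sub_line_le {v : ℂ → ℂ × ℂ} (hz : RegularCurve R c m M ρ z)
    (hv : RegularCurve R c m M ρ v) {δ : ℝ} (hδ : ∀ ζ ∈ strip ρ, ‖z ζ - v ζ‖ ≤ δ)
    (hδ' : ∀ ζ ∈ strip ρ, ‖deriv z ζ - deriv v ζ‖ ≤ δ / √(ρ - |ζ.im|)) (hα : α ∈ strip ρ)
    (hσ : |σ| = R / 2) (h : R / 4 ≤ |α.im - σ|) (x : ℝ) :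
    ‖muskatIntegrand z α (x + σ * Complex.I) - muskatIntegrand v α (x + σ * Complex.I)‖ ≤
      (Real.exp M / m + 2 * (Real.exp M / m) ^ 2) * (2 * δ) * (3 * M / √(ρ - |α.im|))
        + Real.exp M / m * (3 * δ / √(ρ - |α.im|)) := by
  have hm := hz.m_pos
  set γ : ℂ := x + σ * Complex.I
  have hz_mem : z α - z γ ∈ kernelDomain M m := hz.line_mem_kernelDomain hα hσ h x
  have hv_mem : v α - v γ ∈ kernelDomain M m := hv.line_mem_kernelDomain hα hσ h x
  have hchord : ‖(z α - z γ) - (v α - v γ)‖ ≤ 2 * δ := by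
    rw [sub_sub_sub_comm, two_mul]
    exact (norm_sub_le _ _).trans (add_le_add (hδ α hα) (hδ γ (hz.line_mem_strip hσ x)))
  have hderiv : ‖(deriv z α - deriv z γ) - (deriv v α - deriv v γ)‖ ≤
      3 * δ / √(ρ - |α.im|) := by
    rw [sub_sub_sub_comm]
    exact hz.norm_sub_line_le hα hσ hδ' x
  have hsplit : muskatIntegrand z α γ - muskatIntegrand v α γ =
      (muskatKernel (z α - z γ) - muskatKernel (v α - v γ)) • (deriv z α - deriv z γ)
        + muskatKernel (v α - v γ) • ((deriv z α - deriv z γ) - (deriv v α - deriv v γ)) := by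
    simp only [muskatIntegrand, sub_smul, smul_sub]
    abel
  rw [hsplit]
  refine (norm_add_le _ _).trans (add_le_add ?_ ?_) <;> rw [norm_smul]
  · have hδ₀ : 0 ≤ δ := (norm_nonneg _).trans (hδ α hα)
    refine mul_le_mul ((norm_muskatKernel_sub_le hm hz_mem hv_mem).trans ?_)
      (hz.norm_sub_line_le hα hσ hz.norm_deriv_le x) (norm_nonneg _) (by positivity)
    gcongr
  · exact mul_le_mul (norm_muskatKernel_le hm hv_mem) hderiv (norm_nonneg _) (by positivity)

theorem norm_lineVelocity_sub_le {v : ℂ → ℂ × ℂ} (hz : RegularCurve R c m M ρ z)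
    (hv : RegularCurve R c m M ρ v) {δ : ℝ} (hδ : ∀ ζ ∈ strip ρ, ‖z ζ - v ζ‖ ≤ δ)
    (hδ' : ∀ ζ ∈ strip ρ, ‖deriv z ζ - deriv v ζ‖ ≤ δ / √(ρ - |ζ.im|)) (hα : α ∈ strip ρ)
    (hσ : |σ| = R / 2) (h : R / 4 ≤ |α.im - σ|) :
    ‖lineVelocity z σ α - lineVelocity v σ α‖ ≤
      2 * π * ((Real.exp M / m + 2 * (Real.exp M / m) ^ 2) * (6 * M) + 3 * (Real.exp M / m)) * δ
        / √(ρ - |α.im|) := by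
  rw [lineVelocity, lineVelocity, ← intervalIntegral.integral_sub
    (hz.intervalIntegrable_muskatIntegrand_line hα hσ h _ _)
    (hv.intervalIntegrable_muskatIntegrand_line hα hσ h _ _)]
  refine (intervalIntegral.norm_integral_le_of_norm_le_const fun x _ =>
    hz.norm_muskatIntegrand_sub_line_le hv hδ hδ' hα hσ h x).trans_eq ?_
  rw [sub_neg_eq_add, ← two_mul, abs_of_pos Real.two_pi_pos]
  ring

end RegularCurve

end ContourOperator

section ContourShift

open Filter Topology Asymptotics

variable {E : Type*} [NormedAddCommGroup E] [NormedSpace ℂ E]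

theorem exists_differentiableAt_eq_off_of_isBigO_one [CompleteSpace E] {f : ℂ → E} {U : Set ℂ}
    {a : ℂ} (hU : U ∈ 𝓝 a) (hd : ∀ γ ∈ U, γ ≠ a → DifferentiableAt ℂ f γ)
    (hb : f =O[𝓝[≠] a] fun _ => (1 : ℝ)) :
    ∃ g : ℂ → E, (∀ γ ∈ U, DifferentiableAt ℂ g γ) ∧ ∀ γ ≠ a, g γ = f γ := by
  refine ⟨Function.update f a (limUnder (𝓝[≠] a) f), fun γ hγ => ?_,
    fun γ hγ => Function.update_of_ne hγ _ _⟩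
  rcases eq_or_ne γ a with rfl | hne
  · refine (Complex.differentiableOn_update_limUnder_of_isLittleO hU
      (fun w hw => (hd w hw.1 hw.2).differentiableWithinAt) ?_).differentiableAt hU
    exact IsBoundedUnder.isLittleO_sub_self_inv
      (hb.sub (isBigO_const_const (f γ) one_ne_zero _)).isBoundedUnder_le
  · refine (hd γ hγ hne).congr_of_eventuallyEq ?_
    filter_upwards [isOpen_ne.mem_nhds hne] with w hw using Function.update_of_ne hw _ _

theorem integral_eq_integral_add_mul_I {g : ℂ → E} {a b σ : ℝ}
    (hd : ∀ x ∈ uIcc a b, ∀ y ∈ uIcc 0 σ, DifferentiableAt ℂ g (x + y * Complex.I))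
    (hside : ∀ y ∈ uIcc 0 σ, g (b + y * Complex.I) = g (a + y * Complex.I)) :
    ∫ x in a..b, g x = ∫ x in a..b, g (x + σ * Complex.I) := by
  have hdiff : DifferentiableOn ℂ g (uIcc a b ×ℂ uIcc 0 σ) := fun γ hγ => by
    simpa only [Complex.re_add_im] using (hd _ hγ.1 _ hγ.2).differentiableWithinAt
  have hrect := Complex.integral_boundary_rect_eq_zero_of_differentiableOn g a (b + σ * Complex.I)
    (by simpa using hdiff)
  simp only [Complex.add_re, Complex.ofReal_re, Complex.re_ofReal_mul, Complex.I_re, mul_zero,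
    add_zero, Complex.ofReal_im, Complex.add_im, Complex.im_ofReal_mul, Complex.I_im, mul_one,
    zero_add, Complex.ofReal_zero, zero_mul] at hrect
  rwa [intervalIntegral.integral_congr hside, add_sub_cancel_right, sub_eq_zero] at hrect

theorem integral_eq_integral_add_mul_I_of_removable [CompleteSpace E] {f : ℂ → E} {a h σ : ℝ}
    (hh : 0 < h) (hσ : 0 < |σ|)
    (hd : ∀ γ : ℂ, |γ.im| ≤ |σ| → |a - γ.re| ≤ h → γ ≠ a → DifferentiableAt ℂ f γ)
    (hb : f =O[𝓝[≠] (a : ℂ)] fun _ => (1 : ℝ))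
    (hside : ∀ y : ℝ, |y| ≤ |σ| →
      f ((a + h : ℝ) + y * Complex.I) = f ((a - h : ℝ) + y * Complex.I)) :
    IntervalIntegrable (fun x : ℝ => f x) volume (a - h) (a + h) ∧
      ∫ x in (a - h)..(a + h), f x = ∫ x in (a - h)..(a + h), f (x + σ * Complex.I) := by
  obtain ⟨g, hgd, hgf⟩ := exists_differentiableAt_eq_off_of_isBigO_one
    (U := {γ : ℂ | |γ.im| ≤ |σ| ∧ |a - γ.re| ≤ h}) (a := a)
    (mem_of_superset (((isOpen_lt (f := fun γ : ℂ => |γ.im|) (by fun_prop) continuous_const).inter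
      (isOpen_lt (f := fun γ : ℂ => |a - γ.re|) (by fun_prop) continuous_const)).mem_nhds
        ⟨by simpa using hσ, by simpa using hh⟩) fun γ hγ => ⟨hγ.1.le, hγ.2.le⟩)
    (fun γ hγ => hd γ hγ.1 hγ.2) hb
  have hre : ∀ x ∈ uIcc (a - h) (a + h), |a - x| ≤ h := fun x hx => by
    rw [uIcc_of_le (by linarith)] at hx
    exact abs_le.2 ⟨by linarith [hx.2], by linarith [hx.1]⟩
  have hne_re : ∀ x y : ℝ, x ≠ a → (x + y * Complex.I : ℂ) ≠ a := fun x y hx hxa =>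
    hx (by simpa using congrArg Complex.re hxa)
  have hne_im : ∀ x : ℝ, (x + σ * Complex.I : ℂ) ≠ a := fun x hxa =>
    hσ.ne' (abs_eq_zero.2 (by simpa using congrArg Complex.im hxa))
  have hgd' : ∀ x ∈ uIcc (a - h) (a + h), ∀ y ∈ uIcc 0 σ,
      DifferentiableAt ℂ g (x + y * Complex.I) := fun x hx y hy =>
    hgd _ ⟨by simpa using abs_le_abs_of_mem_uIcc_zero hy, by simpa using hre x hx⟩
  have hae : ∀ᵐ x : ℝ, g x = f x := by
    filter_upwards [Measure.ae_ne volume a] with x hx using hgf _ (by exact_mod_cast hx)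
  have hshift := integral_eq_integral_add_mul_I hgd' fun y hy => by
    rw [hgf _ (hne_re _ y (by linarith)), hgf _ (hne_re _ y (by linarith)),
      hside y (abs_le_abs_of_mem_uIcc_zero hy)]
  have hg_int : IntervalIntegrable (fun x : ℝ => g x) volume (a - h) (a + h) :=
    ContinuousOn.intervalIntegrable fun x hx => (ContinuousAt.comp (f := fun x : ℝ => (x : ℂ))
      (by simpa using (hgd' x hx 0 left_mem_uIcc).continuousAt) (by fun_prop)).continuousWithinAt
  refine ⟨hg_int.congr_ae (ae_restrict_of_ae hae), ?_⟩
  rw [← intervalIntegral.integral_congr_ae (hae.mono fun x hx _ => hx), hshift]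
  exact intervalIntegral.integral_congr fun x _ => hgf _ (hne_im x)

end ContourShift

section RealTrace

open Filter Topology Asymptotics

theorem chordDenom_of_imPair_eq_zero {p : ℂ × ℂ} (hp : imPair p = 0) :
    chordDenom p = ((Real.cosh p.2.re - Real.cos p.1.re : ℝ) : ℂ) := by
  have hfst : p.1 = (p.1.re : ℂ) := Complex.ext rfl (congrArg Prod.fst hp)
  have hsnd : p.2 = (p.2.re : ℂ) := Complex.ext rfl (congrArg Prod.snd hp)
  rw [chordDenom, hfst, hsnd]
  push_cast
  rfl

theorem muskatKernel_of_imPair_eq_zero {p : ℂ × ℂ} (hp : imPair p = 0) :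
    muskatKernel p = ((Real.sin p.1.re / (Real.cosh p.2.re - Real.cos p.1.re) : ℝ) : ℂ) := by
  have hfst : p.1 = (p.1.re : ℂ) := Complex.ext rfl (congrArg Prod.fst hp)
  rw [muskatKernel, chordDenom_of_imPair_eq_zero hp, Complex.ofReal_div, Complex.ofReal_sin, ← hfst]

theorem norm_chordDenom_sub_ofReal {z : ℂ → ℂ × ℂ} (hz : ∀ x : ℝ, imPair (z x) = 0) (a b : ℝ) :
    ‖chordDenom (z a - z b)‖ = Qden (fun x : ℝ => rePair (z x)) a (a - b) := by
  rw [chordDenom_of_imPair_eq_zero (by rw [map_sub, hz, hz, sub_zero]), Complex.norm_real,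
    Real.norm_of_nonneg (sub_nonneg.2 ((Real.cos_le_one _).trans (Real.one_le_cosh _))), Qden,
    sub_sub_cancel]
  rfl

theorem chordDenom_sub_add_int {z : ℂ → ℂ × ℂ} {ρ : ℝ}
    (hz : ∀ ζ ∈ strip ρ, z (ζ + ((2 * π : ℝ) : ℂ)) = z ζ + (((2 * π : ℝ) : ℂ), 0)) (p : ℂ × ℂ)
    (k : ℤ) {γ : ℂ} (hγ : γ ∈ strip ρ) :
    chordDenom (p - z (γ + k * ((2 * π : ℝ) : ℂ))) = chordDenom (p - z γ) := by
  rw [apply_add_int_mul_of_forall_mem_strip (Complex.ofReal_im _) hz k hγ, sub_add_eq_sub_sub,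
    ← chordDenom_add_int _ k]
  congr 1
  ext <;> simp

theorem exists_int_abs_sub_le_pi (β : ℝ) : ∃ k : ℤ, |β - 2 * π * k| ≤ π := by
  have hround := abs_sub_round (β / (2 * π))
  refine ⟨round (β / (2 * π)), ?_⟩
  rw [show β - 2 * π * round (β / (2 * π)) = 2 * π * (β / (2 * π) - round (β / (2 * π))) by
    field_simp, abs_mul, abs_of_pos two_pi_pos]
  nlinarith [Real.pi_pos]

theorem distTZ_le (β : ℝ) (k : ℤ) : distTZ β ≤ |β - 2 * π * k| := by
  have hscale (j : ℤ) : |β - 2 * π * j| = 2 * π * |β / (2 * π) - j| := by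
    rw [← abs_of_pos two_pi_pos, ← abs_mul, abs_of_pos two_pi_pos, mul_sub,
      mul_div_cancel₀ _ two_pi_pos.ne']
  rw [distTZ, hscale, hscale]
  exact mul_le_mul_of_nonneg_left (round_le _ k) two_pi_pos.le

theorem hasDerivAt_comp_ofReal {F : Type*} [NormedAddCommGroup F] [NormedSpace ℝ F]
    (L : ℂ × ℂ →L[ℝ] F) {f : ℂ → ℂ × ℂ} {x : ℝ} (h : DifferentiableAt ℂ f x) :
    HasDerivAt (fun y : ℝ => L (f y)) (L (deriv f x)) x := by
  have hcomp := HasDerivAt.scomp x h.hasDerivAt Complex.ofRealCLM.hasDerivAt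
  rw [Complex.ofRealCLM_apply, Complex.ofReal_one, one_smul] at hcomp
  exact L.hasFDerivAt.comp_hasDerivAt x hcomp

theorem imPair_deriv_eq_zero {z : ℂ → ℂ × ℂ} (hz : ∀ x : ℝ, imPair (z x) = 0) {x : ℝ}
    (h : DifferentiableAt ℂ z x) : imPair (deriv z x) = 0 := by
  have hderiv := hasDerivAt_comp_ofReal imPair h
  simp only [hz] at hderiv
  exact hderiv.unique (hasDerivAt_const x 0)

namespace RegularCurve

variable {R c m M ρ : ℝ} {z : ℂ → ℂ × ℂ}

theorem chordDenom_ne_zero (hz : RegularCurve R c m M ρ z) {α γ : ℂ} (hα : |α.im| ≤ R / 2)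
    (hγ : |γ.im| ≤ R / 2) (h : |α.re - γ.re| ≤ π) (hne : α ≠ γ) :
    chordDenom (z α - z γ) ≠ 0 := by
  have hpos : 0 < c * ‖α - γ‖ ^ 2 :=
    mul_pos hz.c_pos (pow_pos (norm_pos_iff.2 (sub_ne_zero.2 hne)) 2)
  exact norm_pos_iff.1 (hpos.trans_le (hz.arcChord α γ hα hγ h))

theorem abs_im_ofReal_le (hz : RegularCurve R c m M ρ z) (a : ℝ) : |(a : ℂ).im| ≤ R / 2 := by
  simpa using (half_pos hz.R_pos).le

theorem ofReal_mem (hz : RegularCurve R c m M ρ z) (a : ℝ) : (a : ℂ) ∈ strip ρ :=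
  ofReal_mem_strip hz.width_pos a

theorem sq_sub_isBigO_chordDenom (hz : RegularCurve R c m M ρ z) (a : ℝ) :
    (fun γ : ℂ => (γ - a) ^ 2) =O[𝓝 (a : ℂ)] fun γ => chordDenom (z a - z γ) := by
  have hc := hz.c_pos
  refine IsBigO.of_bound c⁻¹ ?_
  filter_upwards [(isOpen_lt (f := fun γ : ℂ => |γ.im|) (by fun_prop) continuous_const).mem_nhds
      (show |(a : ℂ).im| < R / 2 by simpa using hz.R_pos),
    (isOpen_lt (f := fun γ : ℂ => |a - γ.re|) (by fun_prop) continuous_const).mem_nhds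
      (show |a - (a : ℂ).re| < π by simpa using Real.pi_pos)] with γ him hre
  rw [norm_pow, ← norm_neg, neg_sub, le_inv_mul_iff₀ hc]
  exact hz.arcChord a γ (hz.abs_im_ofReal_le a) him.le hre.le

theorem muskatIntegrand_isBigO_one (hz : RegularCurve R c m M ρ z) (a : ℝ) :
    muskatIntegrand z a =O[𝓝[≠] (a : ℂ)] fun _ => (1 : ℝ) := by
  have hsin : (fun γ => Complex.sin (z a - z γ).1) =O[𝓝 (a : ℂ)] fun γ => γ - a := by
    have hdiff : DifferentiableAt ℂ (fun γ => Complex.sin (z a - z γ).1) a :=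
      ((hz.differentiableAt _ (hz.ofReal_mem a)).const_sub _).fst.csin
    simpa using hdiff.hasDerivAt.isBigO_sub
  have hderiv : (fun γ => deriv z a - deriv z γ) =O[𝓝 (a : ℂ)] fun γ => γ - a := by
    simpa using (hz.differentiableAt_deriv (hz.ofReal_mem a)).hasDerivAt.isBigO_sub.neg_left
  have hinv := ((hz.sq_sub_isBigO_chordDenom a).mono nhdsWithin_le_nhds).inv_rev
    (eventually_mem_nhdsWithin.mono fun γ hγ h => absurd h
      (pow_ne_zero 2 (sub_ne_zero.2 hγ)))
  refine (((hsin.mono nhdsWithin_le_nhds).mul hinv).smul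
    (hderiv.mono nhdsWithin_le_nhds)).trans ?_
  refine IsBigO.of_bound 1 (eventually_mem_nhdsWithin.mono fun γ hγ => ?_)
  have hne : γ - a ≠ 0 := sub_ne_zero.2 hγ
  rw [show ((γ - a) * ((γ - a) ^ 2)⁻¹) • (γ - a) = 1 by rw [smul_eq_mul]; field_simp]
  simp

theorem integral_muskatIntegrand_ofReal (hz : RegularCurve R c m M ρ z) (a : ℝ) {σ : ℝ}
    (hσ : |σ| = R / 2) :
    IntervalIntegrable (fun x : ℝ => muskatIntegrand z a x) volume (a - π) (a + π) ∧
      ∫ x in (a - π)..(a + π), muskatIntegrand z a x = lineVelocity z σ a := by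
  have hper : ∀ y : ℝ, |y| ≤ |σ| → Function.Periodic
      (fun x : ℝ => muskatIntegrand z a (x + y * Complex.I)) (2 * π) := fun y hy x => by
    simp only [Complex.ofReal_add x, add_right_comm (x : ℂ)]
    exact hz.muskatIntegrand_periodic_right a (hz.mem_strip_of_abs_im_le (by simpa [← hσ] using hy))
  obtain ⟨hint, heq⟩ := integral_eq_integral_add_mul_I_of_removable (f := muskatIntegrand z a)
    Real.pi_pos (hσ ▸ half_pos hz.R_pos)
    (fun γ him hre hne => (hz.differentiableAt_muskatIntegrand (p := (a, γ)) (hz.ofReal_mem a)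
      (hz.mem_strip_of_abs_im_le (hσ ▸ him)) (hz.chordDenom_ne_zero (hz.abs_im_ofReal_le a)
        (hσ ▸ him) hre hne.symm)).comp (f := fun γ : ℂ => ((a : ℂ), γ)) γ (by fun_prop))
    (hz.muskatIntegrand_isBigO_one a)
    fun y hy => by simpa [two_mul] using hper y hy (a - π)
  refine ⟨hint, heq.trans ?_⟩
  have hshift := (hper σ le_rfl).intervalIntegral_add_eq (a - π) (-π)
  rwa [show a - π + 2 * π = a + π by ring, show -π + 2 * π = π by ring] at hshift

theorem lineVelocity_neg_eq (hz : RegularCurve R c m M ρ z) :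
    EqOn (lineVelocity z (-(R / 2))) (lineVelocity z (R / 2)) (strip (R / 4)) := by
  have hR := hz.R_pos
  have habs : |R / 2| = R / 2 := abs_of_pos (half_pos hR)
  have habs' : |-(R / 2)| = R / 2 := by rw [abs_neg, habs]
  have hρ : R / 4 ≤ ρ := by linarith [hz.lt_width]
  refine eqOn_of_eq_ofReal (isOpen_strip _) (convex_strip _) (fun ζ hζ => ?_) (fun ζ hζ => ?_)
    (ofReal_mem_strip (show 0 < R / 4 by linarith) 0) fun a _ => ?_
  · exact (hz.differentiableAt_lineVelocity (strip_subset_strip hρ hζ) habs'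
      (lt_abs.2 (.inl (by linarith [(abs_lt.1 (mem_strip.1 hζ)).1])))).differentiableWithinAt
  · exact (hz.differentiableAt_lineVelocity (strip_subset_strip hρ hζ) habs
      (lt_abs.2 (.inr (by linarith [(abs_lt.1 (mem_strip.1 hζ)).2])))).differentiableWithinAt
  · rw [← (hz.integral_muskatIntegrand_ofReal a habs').2,
      ← (hz.integral_muskatIntegrand_ofReal a habs).2]

theorem complexMuskatRHS_eq_lineVelocity_neg (hz : RegularCurve R c m M ρ z) {α : ℂ}
    (hα : -(R / 4) < α.im) : complexMuskatRHS R z α = lineVelocity z (-(R / 2)) α := by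
  rw [complexMuskatRHS]
  split_ifs with h
  · rfl
  · exact (hz.lineVelocity_neg_eq (mem_strip.2 (abs_lt.2 ⟨hα, by linarith [hz.R_pos]⟩))).symm

theorem differentiableAt_complexMuskatRHS (hz : RegularCurve R c m M ρ z) {α : ℂ}
    (hα : α ∈ strip ρ) : DifferentiableAt ℂ (complexMuskatRHS R z) α := by
  have hR := hz.R_pos
  have habs : |R / 2| = R / 2 := abs_of_pos (half_pos hR)
  rcases lt_or_ge (-(R / 4)) α.im with h | h
  · refine (hz.differentiableAt_lineVelocity hα (by rw [abs_neg, habs])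
      (lt_abs.2 (.inl (by linarith)))).congr_of_eventuallyEq ?_
    filter_upwards [(isOpen_lt continuous_const Complex.continuous_im).mem_nhds h] with x hx
    exact hz.complexMuskatRHS_eq_lineVelocity_neg hx
  · refine (hz.differentiableAt_lineVelocity hα habs
      (lt_abs.2 (.inr (by linarith)))).congr_of_eventuallyEq ?_
    filter_upwards [(isOpen_lt Complex.continuous_im continuous_const).mem_nhds
      (show α.im < 0 by linarith)] with x hx
    exact if_neg (not_le.2 hx)

theorem norm_complexMuskatRHS_le (hz : RegularCurve R c m M ρ z) {α : ℂ} (hα : α ∈ strip ρ) :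
    ‖complexMuskatRHS R z α‖ ≤ 2 * π * (Real.exp M / m * (3 * M)) / √(ρ - |α.im|) := by
  obtain ⟨σ, hσ, h, heq⟩ := exists_complexMuskatRHS_eq_lineVelocity hz.R_pos α
  rw [heq]
  exact hz.norm_lineVelocity_le hα hσ h

theorem norm_complexMuskatRHS_sub_le {v : ℂ → ℂ × ℂ} (hz : RegularCurve R c m M ρ z)
    (hv : RegularCurve R c m M ρ v) {δ : ℝ} (hδ : ∀ ζ ∈ strip ρ, ‖z ζ - v ζ‖ ≤ δ)
    (hδ' : ∀ ζ ∈ strip ρ, ‖deriv z ζ - deriv v ζ‖ ≤ δ / √(ρ - |ζ.im|)) {α : ℂ}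
    (hα : α ∈ strip ρ) :
    ‖complexMuskatRHS R z α - complexMuskatRHS R v α‖ ≤
      2 * π * ((Real.exp M / m + 2 * (Real.exp M / m) ^ 2) * (6 * M) + 3 * (Real.exp M / m)) * δ
        / √(ρ - |α.im|) := by
  obtain ⟨σ, hσ, h, heq⟩ := exists_complexMuskatRHS_eq_lineVelocity hz.R_pos α
  rw [heq, heq]
  exact hz.norm_lineVelocity_sub_le hv hδ hδ' hα hσ h

theorem imPair_muskatIntegrand (hz : RegularCurve R c m M ρ z) (a x : ℝ) :
    imPair (muskatIntegrand z a x) = 0 := by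
  have hderiv (y : ℝ) : imPair (deriv z y) = 0 :=
    imPair_deriv_eq_zero hz.imPair_ofReal (hz.differentiableAt y (hz.ofReal_mem y))
  rw [muskatIntegrand, muskatKernel_of_imPair_eq_zero (by simp only [map_sub, hz.imPair_ofReal,
    sub_self]), Complex.coe_smul, map_smul, map_sub, hderiv, hderiv, sub_self, smul_zero]

theorem deriv_rePair (hz : RegularCurve R c m M ρ z) (x : ℝ) :
    deriv (fun y : ℝ => rePair (z y)) x = rePair (deriv z x) :=
  (hasDerivAt_comp_ofReal rePair (hz.differentiableAt x (hz.ofReal_mem x))).deriv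

theorem rePair_muskatIntegrand (hz : RegularCurve R c m M ρ z) (a x : ℝ) :
    rePair (muskatIntegrand z a x) =
      (Real.sin ((z a).1.re - (z x).1.re)
        / (Real.cosh ((z a).2.re - (z x).2.re) - Real.cos ((z a).1.re - (z x).1.re)))
        • (deriv (fun y : ℝ => rePair (z y)) a - deriv (fun y : ℝ => rePair (z y)) x) := by
  rw [muskatIntegrand, muskatKernel_of_imPair_eq_zero (by simp only [map_sub, hz.imPair_ofReal,
    sub_self]), Complex.coe_smul, map_smul, map_sub, hz.deriv_rePair, hz.deriv_rePair]
  rfl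

theorem imPair_complexMuskatRHS (hz : RegularCurve R c m M ρ z) (a : ℝ) :
    imPair (complexMuskatRHS R z a) = 0 := by
  obtain ⟨σ, hσ, -, heq⟩ := exists_complexMuskatRHS_eq_lineVelocity hz.R_pos a
  obtain ⟨hint, hline⟩ := hz.integral_muskatIntegrand_ofReal a hσ
  rw [heq, ← hline, ← ContinuousLinearMap.intervalIntegral_comp_comm _ hint]
  simp only [hz.imPair_muskatIntegrand, intervalIntegral.integral_zero]

theorem rePair_complexMuskatRHS (hz : RegularCurve R c m M ρ z) (a : ℝ) :
    rePair (complexMuskatRHS R z a) = muskatRHS (fun x : ℝ => rePair (z x)) a := by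
  obtain ⟨σ, hσ, -, heq⟩ := exists_complexMuskatRHS_eq_lineVelocity hz.R_pos a
  obtain ⟨hint, hline⟩ := hz.integral_muskatIntegrand_ofReal a hσ
  have hsub := intervalIntegral.integral_comp_sub_left (a := -π) (b := π)
    (fun x : ℝ => rePair (muskatIntegrand z a x)) a
  rw [sub_neg_eq_add] at hsub
  rw [heq, ← hline, ← ContinuousLinearMap.intervalIntegral_comp_comm _ hint, ← hsub, muskatRHS]
  simp only [hz.rePair_muskatIntegrand]
  rfl

theorem fst_rePair_complexMuskatRHS (hz : RegularCurve R c m M ρ z) (a : ℝ) :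
    (rePair (complexMuskatRHS R z a)).1 = v1 (fun x : ℝ => rePair (z x)) a := by
  obtain ⟨σ, hσ, -, heq⟩ := exists_complexMuskatRHS_eq_lineVelocity hz.R_pos a
  obtain ⟨hint, hline⟩ := hz.integral_muskatIntegrand_ofReal a hσ
  let fstRe : ℂ × ℂ →L[ℝ] ℝ := (ContinuousLinearMap.fst ℝ ℝ ℝ).comp rePair
  have hper : Function.Periodic (fun x : ℝ => fstRe (muskatIntegrand z a x)) (2 * π) := fun x => by
    simp only [Complex.ofReal_add, hz.muskatIntegrand_periodic_right a (hz.ofReal_mem x)]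
  have hshift := hper.intervalIntegral_add_eq (a - π) (-π)
  rw [show a - π + 2 * π = a + π by ring, show -π + 2 * π = π by ring,
    ContinuousLinearMap.intervalIntegral_comp_comm _ hint, hline, ← heq] at hshift
  have hderiv (x : ℝ) : deriv (fun y : ℝ => (rePair (z y)).1) x
      = (deriv (fun y : ℝ => rePair (z y)) x).1 := by
    rw [hz.deriv_rePair]
    exact (hasDerivAt_comp_ofReal fstRe (hz.differentiableAt x (hz.ofReal_mem x))).deriv
  refine hshift.trans (intervalIntegral.integral_congr fun x _ => ?_)
  simp only [hderiv]
  refine (congrArg Prod.fst (hz.rePair_muskatIntegrand a x)).trans ?_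
  rw [Prod.smul_fst, smul_eq_mul, div_mul_eq_mul_div]
  rfl

theorem analyticAt_rePair (hz : RegularCurve R c m M ρ z) (a : ℝ) :
    AnalyticAt ℝ (fun x : ℝ => rePair (z x)) a := by
  have hdiff : DifferentiableOn ℂ z (strip ρ) := fun ζ hζ =>
    (hz.differentiableAt ζ hζ).differentiableWithinAt
  have han : AnalyticAt ℝ z (Complex.ofRealCLM a) :=
    (hdiff.analyticAt ((isOpen_strip ρ).mem_nhds (hz.ofReal_mem a))).restrictScalars
  exact (rePair.analyticAt _).comp (han.comp (Complex.ofRealCLM.analyticAt a))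

theorem perCurve_rePair (hz : RegularCurve R c m M ρ z) : PerCurve fun x : ℝ => rePair (z x) :=
  fun x => by
    change rePair (z ((x + 2 * π : ℝ) : ℂ)) = rePair (z x) + (2 * π, 0)
    rw [Complex.ofReal_add, hz.periodic x (hz.ofReal_mem x), map_add]
    rfl

theorem arcChord_rePair (hz : RegularCurve R c m M ρ z) :
    ArcChord fun x : ℝ => rePair (z x) := by
  have hc := hz.c_pos
  refine ⟨1 / (2 * c), by positivity, fun α β => ?_⟩
  obtain ⟨k, hk⟩ := exists_int_abs_sub_le_pi β
  have hre : α - (α - β + k * (2 * π)) = β - 2 * π * k := by ring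
  have hchord := hz.arcChord α ((α - β + k * (2 * π) : ℝ) : ℂ) (hz.abs_im_ofReal_le α)
    (hz.abs_im_ofReal_le _) (by rwa [Complex.ofReal_re, Complex.ofReal_re, hre])
  rw [← Complex.ofReal_sub, hre, Complex.norm_real, Real.norm_eq_abs, Complex.ofReal_add,
    Complex.ofReal_mul, Complex.ofReal_intCast, chordDenom_sub_add_int hz.periodic _ k
      (hz.ofReal_mem _), norm_chordDenom_sub_ofReal hz.imPair_ofReal, sub_sub_cancel] at hchord
  calc distTZ β ^ 2 ≤ |β - 2 * π * k| ^ 2 :=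
        pow_le_pow_left₀ (abs_nonneg _) (distTZ_le β k) 2
    _ ≤ Qden (fun x : ℝ => rePair (z x)) α β / c := (le_div_iff₀' hc).2 hchord
    _ = 1 / (2 * c) * (2 * Qden (fun x : ℝ => rePair (z x)) α β) := by field_simp

end RegularCurve

end RealTrace

section AnalyticExtension

variable {E : Type*} [NormedAddCommGroup E] [NormedSpace ℂ E] [CompleteSpace E] {f : ℝ → E}

theorem exists_differentiableOn_ball_eq_ofReal {x : ℝ} (h : AnalyticAt ℝ f x) :
    ∃ r > 0, ∃ g : ℂ → E, DifferentiableOn ℂ g (Metric.ball (x : ℂ) r) ∧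
      ∀ y : ℝ, (y : ℂ) ∈ Metric.ball (x : ℂ) r → g y = f y := by
  obtain ⟨p, R, hp⟩ := h
  obtain ⟨r, hr₀, hrR⟩ := ENNReal.lt_iff_exists_nnreal_btwn.1 hp.r_pos
  have hr : 0 < (r : ℝ) := by exact_mod_cast hr₀
  obtain ⟨C, _, hcoeff⟩ := p.norm_mul_pow_le_of_lt_radius (hrR.trans_le hp.r_le)
  have hterm : ∀ n, ∀ ζ ∈ Metric.ball (x : ℂ) (r / 2),
      ‖(ζ - x) ^ n • p.coeff n‖ ≤ C * (1 / 2) ^ n := fun n ζ hζ => by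
    have hn := hcoeff n
    rw [FormalMultilinearSeries.norm_apply_eq_norm_coef] at hn
    rw [mem_ball_iff_norm] at hζ
    calc ‖(ζ - x) ^ n • p.coeff n‖ ≤ (r / 2) ^ n * ‖p.coeff n‖ := by
          rw [norm_smul, norm_pow]; gcongr
      _ = (‖p.coeff n‖ * r ^ n) * (1 / 2) ^ n := by rw [div_pow, div_pow]; ring
      _ ≤ C * (1 / 2) ^ n := by gcongr
  refine ⟨r / 2, half_pos hr, fun ζ => ∑' n, (ζ - x) ^ n • p.coeff n,
    Complex.differentiableOn_tsum_of_summable_norm (summable_geometric_two.mul_left C)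
      (fun n => by fun_prop) Metric.isOpen_ball hterm, fun y hy => ?_⟩
  rw [mem_ball_iff_norm, ← Complex.ofReal_sub, Complex.norm_real] at hy
  have hmem : y - x ∈ Metric.eball (0 : ℝ) R := by
    rw [Metric.mem_eball, edist_zero_right]
    refine lt_trans ?_ hrR
    rw [enorm_eq_nnnorm, ENNReal.coe_lt_coe, ← NNReal.coe_lt_coe, coe_nnnorm]
    linarith
  have hsum := (hp.hasSum hmem).tsum_eq
  simp only [FormalMultilinearSeries.apply_eq_pow_smul_coeff, add_sub_cancel] at hsum
  simpa only [← Complex.ofReal_sub, ← Complex.ofReal_pow, Complex.coe_smul] using hsum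

variable {T : ℝ}

theorem exists_forall_differentiableOn_ball_eq_ofReal (hT : 0 < T) (hf : ∀ x, AnalyticAt ℝ f x)
    (hper : Function.Periodic f T) :
    ∃ r > 0, ∀ x : ℝ, ∃ g : ℂ → E, DifferentiableOn ℂ g (Metric.ball (x : ℂ) r) ∧
      ∀ y : ℝ, (y : ℂ) ∈ Metric.ball (x : ℂ) r → g y = f y := by
  choose r hr g hg hgf using fun x => exists_differentiableOn_ball_eq_ofReal (hf x)
  obtain ⟨δ, hδ, hball⟩ := lebesgue_number_lemma_of_metric
    (s := (fun x : ℝ => (x : ℂ)) '' Icc 0 T) (c := fun x : ℝ => Metric.ball (x : ℂ) (r x))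
    (isCompact_Icc.image Complex.continuous_ofReal) (fun _ => Metric.isOpen_ball)
    (by rintro _ ⟨x, -, rfl⟩; exact mem_iUnion.2 ⟨x, Metric.mem_ball_self (hr x)⟩)
  refine ⟨δ, hδ, fun x => ?_⟩
  set k := toIcoDiv hT 0 x
  have hk : x - k • T ∈ Ico 0 T := by
    simpa only [zero_add] using sub_toIcoDiv_zsmul_mem_Ico hT 0 x
  obtain ⟨i, hi⟩ := hball ((x - k • T : ℝ) : ℂ) ⟨_, Ico_subset_Icc_self hk, rfl⟩
  have hmaps : ∀ ζ ∈ Metric.ball (x : ℂ) δ, ζ - ((k • T : ℝ) : ℂ) ∈ Metric.ball (i : ℂ) (r i) :=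
    fun ζ hζ => hi (by rw [Complex.ofReal_sub]; simpa [mem_ball_iff_norm] using hζ)
  refine ⟨fun ζ => g i (ζ - ((k • T : ℝ) : ℂ)), (hg i).comp (by fun_prop) hmaps, fun y hy => ?_⟩
  have hy := hmaps y hy
  rw [← Complex.ofReal_sub] at hy
  simp only [← Complex.ofReal_sub]
  rw [hgf i _ hy, hper.sub_zsmul_eq]

theorem mem_ball_ofReal_re {r : ℝ} {ζ : ℂ} (hζ : ζ ∈ strip r) :
    ζ ∈ Metric.ball (ζ.re : ℂ) r := by
  have hdiff : ζ - ζ.re = ζ.im * Complex.I := by apply Complex.ext <;> simp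
  rwa [mem_ball_iff_norm, hdiff, norm_mul, Complex.norm_I, mul_one, Complex.norm_real]

theorem exists_strip_extension (hT : 0 < T) (hf : ∀ x, AnalyticAt ℝ f x)
    (hper : Function.Periodic f T) :
    ∃ r > 0, ∃ P : ℂ → E, (∀ ζ ∈ strip r, DifferentiableAt ℂ P ζ) ∧
      (∀ ζ ∈ strip r, P (ζ + T) = P ζ) ∧ ∀ x : ℝ, P x = f x := by
  obtain ⟨r, hr, hg⟩ := exists_forall_differentiableOn_ball_eq_ofReal hT hf hper
  choose g hg hgf using hg
  have hagree : ∀ x y : ℝ, EqOn (g x) (g y) (Metric.ball (x : ℂ) r ∩ Metric.ball (y : ℂ) r) := by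
    intro x y ζ hζ
    have hre : (ζ.re : ℂ) ∈ Metric.ball (x : ℂ) r ∩ Metric.ball (y : ℂ) r := by
      refine ⟨?_, ?_⟩ <;> rw [mem_ball_iff_norm, ← Complex.ofReal_sub, Complex.norm_real]
      · exact (Complex.abs_re_le_norm (ζ - x)).trans_lt (mem_ball_iff_norm.1 hζ.1)
      · exact (Complex.abs_re_le_norm (ζ - y)).trans_lt (mem_ball_iff_norm.1 hζ.2)
    exact eqOn_of_eq_ofReal (Metric.isOpen_ball.inter Metric.isOpen_ball)
      ((convex_ball _ r).inter (convex_ball _ r)) ((hg x).mono inter_subset_left)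
      ((hg y).mono inter_subset_right) hre
      (fun t ht => (hgf x t ht.1).trans (hgf y t ht.2).symm) hζ
  have hdiff : ∀ ζ ∈ strip r, DifferentiableAt ℂ (fun ζ => g ζ.re ζ) ζ := fun ζ hζ => by
    have hball := Metric.isOpen_ball.mem_nhds (mem_ball_ofReal_re hζ)
    refine ((hg ζ.re).differentiableAt hball).congr_of_eventuallyEq ?_
    filter_upwards [hball, (isOpen_strip r).mem_nhds hζ] with w hw hwr
    exact hagree w.re ζ.re ⟨mem_ball_ofReal_re hwr, hw⟩
  have hreal : ∀ x : ℝ, g (x : ℂ).re x = f x := fun x => by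
    rw [Complex.ofReal_re]
    exact hgf x x (Metric.mem_ball_self hr)
  refine ⟨r, hr, fun ζ => g ζ.re ζ, hdiff, eqOn_of_eq_ofReal (isOpen_strip r) (convex_strip r)
    (fun ζ hζ => ?_) (fun ζ hζ => (hdiff ζ hζ).differentiableWithinAt) (ofReal_mem_strip hr 0)
    fun x _ => ?_, hreal⟩
  · refine ((differentiableAt_comp_add_const (f := fun ζ : ℂ => g ζ.re ζ) ..).2
      (hdiff _ ?_)).differentiableWithinAt
    simpa [mem_strip] using hζ
  · rw [← Complex.ofReal_add]
    exact (hreal (x + T)).trans ((hper x).trans (hreal x).symm)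

end AnalyticExtension

section PeriodicBounds

theorem exists_norm_le_of_periodic_of_abs_im_le {E : Type*} [NormedAddCommGroup E] {g : ℂ → E}
    {T R : ℝ} (hT : 0 < T) (hc : ∀ ζ : ℂ, |ζ.im| ≤ R → ContinuousAt g ζ)
    (hper : ∀ ζ : ℂ, |ζ.im| ≤ R → g (ζ + T) = g ζ) :
    ∃ N, ∀ ζ : ℂ, |ζ.im| ≤ R → ‖g ζ‖ ≤ N := by
  obtain ⟨N, hN⟩ := (isCompact_Icc.reProdIm isCompact_Icc :
    IsCompact (Icc 0 T ×ℂ Icc (-R) R)).exists_bound_of_continuousOn (f := g)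
      fun ζ hζ => (hc ζ (abs_le.2 hζ.2)).continuousWithinAt
  refine ⟨N, fun ζ hζ => ?_⟩
  have hline : Function.Periodic (fun x : ℝ => g (x + ζ.im * Complex.I)) T := fun x => by
    beta_reduce
    rw [Complex.ofReal_add, add_right_comm]
    exact hper _ (by simpa using hζ)
  have hshift := hline.sub_zsmul_eq (toIcoDiv hT 0 ζ.re) (x := ζ.re)
  simp only [Complex.re_add_im] at hshift
  rw [← hshift]
  refine hN _ ⟨?_, ?_⟩
  · simpa using Ico_subset_Icc_self (sub_toIcoDiv_zsmul_mem_Ico hT 0 ζ.re)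
  · simpa using abs_le.1 hζ

theorem abs_le_distTZ {β : ℝ} (h : |β| ≤ π) : |β| ≤ distTZ β := by
  rw [distTZ]
  generalize round (β / (2 * π)) = k
  rcases eq_or_ne k 0 with rfl | hk
  · simp
  · have hone : (1 : ℝ) ≤ |(k : ℝ)| := by exact_mod_cast Int.one_le_abs hk
    have htri := abs_sub_abs_le_abs_sub (2 * π * (k : ℝ)) β
    rw [abs_mul, abs_of_pos two_pi_pos, abs_sub_comm] at htri
    nlinarith [Real.pi_pos]

end PeriodicBounds

/-! ### Complexification of the initial interface -/

section ComplexArcChord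

/-- A function `Z` holomorphic on the strip of half-width `R`, with first two derivatives bounded
by `N` there. -/
structure StripBounded {E : Type*} [NormedAddCommGroup E] [NormedSpace ℂ E] (R N : ℝ)
    (Z : ℂ → E) : Prop where
  R_pos : 0 < R
  one_le : 1 ≤ N
  differentiableAt : ∀ ζ ∈ strip R, DifferentiableAt ℂ Z ζ
  norm_deriv_le : ∀ ζ ∈ strip R, ‖deriv Z ζ‖ ≤ N
  norm_deriv_deriv_le : ∀ ζ ∈ strip R, ‖deriv (deriv Z) ζ‖ ≤ N

theorem norm_sub_ofReal_re (ζ : ℂ) : ‖ζ - ζ.re‖ = |ζ.im| := by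
  have hζ : ζ - ζ.re = ζ.im * Complex.I := by apply Complex.ext <;> simp
  rw [hζ, norm_mul, Complex.norm_I, mul_one, Complex.norm_real, Real.norm_eq_abs]

namespace StripBounded

section Taylor

variable {E : Type*} [NormedAddCommGroup E] [NormedSpace ℂ E] {R N : ℝ} {Z : ℂ → E} {α γ : ℂ}

theorem norm_sub_le (h : StripBounded R N Z) (hα : α ∈ strip R) (hγ : γ ∈ strip R) :
    ‖Z α - Z γ‖ ≤ N * ‖α - γ‖ :=
  (convex_strip R).norm_image_sub_le_of_norm_deriv_le h.differentiableAt h.norm_deriv_le hγ hα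

theorem norm_deriv_sub_le [CompleteSpace E] (h : StripBounded R N Z) (hα : α ∈ strip R)
    (hγ : γ ∈ strip R) : ‖deriv Z α - deriv Z γ‖ ≤ N * ‖α - γ‖ :=
  (convex_strip R).norm_image_sub_le_of_norm_deriv_le
    (fun _ hζ => differentiableAt_deriv_of_forall_mem_strip h.differentiableAt hζ)
    h.norm_deriv_deriv_le hγ hα

theorem norm_sub_sub_smul_deriv_le [CompleteSpace E] (h : StripBounded R N Z) (hα : α ∈ strip R)
    (hγ : γ ∈ strip R) : ‖Z α - Z γ - (α - γ) • deriv Z γ‖ ≤ N * ‖α - γ‖ * ‖α - γ‖ := by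
  have hderiv : ∀ ζ ∈ strip R,
      HasDerivAt (fun ζ => Z ζ - ζ • deriv Z γ) (deriv Z ζ - deriv Z γ) ζ := fun ζ hζ => by
    have hlin := (hasDerivAt_id' ζ).smul_const (deriv Z γ)
    rw [one_smul] at hlin
    exact (h.differentiableAt ζ hζ).hasDerivAt.sub hlin
  have hbound : ∀ ζ ∈ strip R ∩ Metric.closedBall γ ‖α - γ‖,
      ‖deriv (fun ζ => Z ζ - ζ • deriv Z γ) ζ‖ ≤ N * ‖α - γ‖ := fun ζ hζ => by
    rw [(hderiv ζ hζ.1).deriv]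
    exact (h.norm_deriv_sub_le hζ.1 hγ).trans
      (mul_le_mul_of_nonneg_left (mem_closedBall_iff_norm.1 hζ.2) (zero_le_one.trans h.one_le))
  have hmvt := ((convex_strip R).inter
    (convex_closedBall γ ‖α - γ‖)).norm_image_sub_le_of_norm_deriv_le (𝕜 := ℂ)
    (fun ζ hζ => (hderiv ζ hζ.1).differentiableAt) hbound
    ⟨hγ, Metric.mem_closedBall_self (norm_nonneg _)⟩ ⟨hα, mem_closedBall_iff_norm.2 le_rfl⟩
  rwa [sub_sub_sub_comm, ← sub_smul] at hmvt

theorem norm_sub_sub_smul_deriv_re_le [CompleteSpace E] (h : StripBounded R N Z)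
    (hα : α ∈ strip R) (hγ : γ ∈ strip R) :
    ‖Z α - Z γ - (α - γ) • deriv Z γ.re‖ ≤ N * (‖α - γ‖ + |γ.im|) * ‖α - γ‖ := by
  have hre := h.norm_deriv_sub_le hγ (ofReal_mem_strip h.R_pos γ.re)
  rw [norm_sub_ofReal_re] at hre
  have hsplit : Z α - Z γ - (α - γ) • deriv Z γ.re =
      (Z α - Z γ - (α - γ) • deriv Z γ) + (α - γ) • (deriv Z γ - deriv Z γ.re) := by
    rw [smul_sub]; abel
  calc _ ≤ N * ‖α - γ‖ * ‖α - γ‖ + ‖α - γ‖ * (N * |γ.im|) := by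
        rw [hsplit]
        refine (norm_add_le _ _).trans (add_le_add (h.norm_sub_sub_smul_deriv_le hα hγ) ?_)
        rw [norm_smul]
        gcongr
    _ = _ := by ring

end Taylor

end StripBounded

/-- Half the complex bilinear square of the tangent vector at the real point `x`: the leading
coefficient of the chord denominator at the diagonal. -/
def tangentSquare (Z : ℂ → ℂ × ℂ) (x : ℝ) : ℂ := ((deriv Z x).1 ^ 2 + (deriv Z x).2 ^ 2) / 2

namespace StripBounded

variable {R N c₀ : ℝ} {Z : ℂ → ℂ × ℂ}

theorem norm_chordDenom_sub_tangentSquare_le (h : StripBounded R N Z) {α γ : ℂ} {e : ℂ × ℂ} {η : ℝ}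
    (hα : α ∈ strip R) (hγ : γ ∈ strip R) (hd : ‖α - γ‖ ≤ 1) (hη₀ : 0 ≤ η) (hη₁ : η ≤ 1)
    (he : ‖e‖ ≤ η * ‖α - γ‖) :
    ‖chordDenom (Z α - Z γ + e) - (α - γ) ^ 2 * tangentSquare Z γ.re‖ ≤
      2 * Real.exp (N + 1) * ((N + 1) * N + N ^ 3) * (‖α - γ‖ + |γ.im| + η) * ‖α - γ‖ ^ 2 := by
  have hN := h.one_le
  have hd₀ := norm_nonneg (α - γ)
  have htaylor := h.norm_sub_sub_smul_deriv_re_le hα hγ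
  have hlip := h.norm_sub_le hα hγ
  have hslope := h.norm_deriv_le _ (ofReal_mem_strip h.R_pos γ.re)
  set d := ‖α - γ‖
  set q := (α - γ) • deriv Z γ.re with hq
  have hp_le : ‖Z α - Z γ + e‖ ≤ (N + 1) * d :=
    (norm_add_le _ _).trans (by nlinarith)
  have hq_le : ‖q‖ ≤ N * d := by
    rw [hq, norm_smul, mul_comm]
    exact mul_le_mul_of_nonneg_right hslope hd₀
  have hpq : ‖Z α - Z γ + e - q‖ ≤ N * (d + |γ.im| + η) * d := by
    rw [add_sub_right_comm]
    have : 0 ≤ η * d := by positivity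
    exact (norm_add_le _ _).trans (by nlinarith)
  have hquad := norm_chordDenom_sub_le_mul hp_le (hq_le.trans (by linarith))
  have hcubic := norm_chordDenom_sub_taylor_le hq_le
  have hform : (q.1 ^ 2 + q.2 ^ 2) / 2 = (α - γ) ^ 2 * tangentSquare Z γ.re := by
    simp only [hq, tangentSquare, Prod.smul_fst, Prod.smul_snd, smul_eq_mul]; ring
  rw [hform] at hcubic
  have hexp : Real.exp ((N + 1) * d) ≤ Real.exp (N + 1) := Real.exp_le_exp.2 (by nlinarith)
  have hexp' : Real.exp (N * d) ≤ Real.exp (N + 1) := Real.exp_le_exp.2 (by nlinarith)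
  calc _ ≤ ‖chordDenom (Z α - Z γ + e) - chordDenom q‖ +
          ‖chordDenom q - (α - γ) ^ 2 * tangentSquare Z γ.re‖ :=
        norm_sub_le_norm_sub_add_norm_sub _ _ _
    _ ≤ 2 * ((N + 1) * d * Real.exp (N + 1)) * (N * (d + |γ.im| + η) * d) +
          2 * (N ^ 3 * (d + |γ.im| + η) * d ^ 2) * Real.exp (N + 1) := by
        refine add_le_add (hquad.trans (by gcongr)) (hcubic.trans ?_)
        have : (N * d) ^ 3 ≤ N ^ 3 * (d + |γ.im| + η) * d ^ 2 := by
          rw [show (N * d) ^ 3 = N ^ 3 * d * d ^ 2 by ring]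
          gcongr
          linarith [abs_nonneg γ.im]
        gcongr
    _ = _ := by ring

theorem exists_norm_chordDenom_sub_tangentSquare_le (h : StripBounded R N Z) :
    ∃ K > 0, ∀ (α γ : ℂ) (e : ℂ × ℂ) (η : ℝ), α ∈ strip R → γ ∈ strip R → ‖α - γ‖ ≤ 1 → 0 ≤ η →
      η ≤ 1 → ‖e‖ ≤ η * ‖α - γ‖ →
      ‖chordDenom (Z α - Z γ + e) - (α - γ) ^ 2 * tangentSquare Z γ.re‖ ≤
        K * (‖α - γ‖ + |γ.im| + η) * ‖α - γ‖ ^ 2 := by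
  have hN := h.one_le
  exact ⟨_, by positivity, fun α γ e η hα hγ hd hη₀ hη₁ he =>
    h.norm_chordDenom_sub_tangentSquare_le hα hγ hd hη₀ hη₁ he⟩

theorem le_norm_tangentSquare (h : StripBounded R N Z)
    (hac : ∀ a b : ℝ, |a - b| ≤ π → c₀ * |a - b| ^ 2 ≤ ‖chordDenom (Z a - Z b)‖) (x : ℝ) :
    c₀ ≤ ‖tangentSquare Z x‖ := by
  obtain ⟨K, hK, hnear⟩ := h.exists_norm_chordDenom_sub_tangentSquare_le
  refine le_of_forall_pos_le_add fun δ hδ => ?_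
  set s := min 1 (δ / K)
  have hs : 0 < s := lt_min one_pos (by positivity)
  have hsK : K * s ≤ δ := by
    rw [mul_comm, ← le_div_iff₀ hK]; exact min_le_right _ _
  have hnorm : ‖((x + s : ℝ) : ℂ) - (x : ℂ)‖ = s := by
    rw [← Complex.ofReal_sub, Complex.norm_real, add_sub_cancel_left, Real.norm_of_nonneg hs.le]
  have hupper := hnear ((x + s : ℝ) : ℂ) x 0 0 (ofReal_mem_strip h.R_pos _)
    (ofReal_mem_strip h.R_pos _) (hnorm.trans_le (min_le_left _ _)) le_rfl zero_le_one (by simp)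
  have hlower := hac (x + s) x
  have htri := norm_sub_norm_le (chordDenom (Z ((x + s : ℝ) : ℂ) - Z x))
    ((((x + s : ℝ) : ℂ) - (x : ℂ)) ^ 2 * tangentSquare Z x)
  rw [hnorm, add_zero, add_zero, Complex.ofReal_im, abs_zero, add_zero, Complex.ofReal_re]
    at hupper
  rw [add_sub_cancel_left, abs_of_pos hs] at hlower
  rw [norm_mul, norm_pow, hnorm] at htri
  have hlower := hlower ((min_le_left _ _).trans (by linarith [Real.pi_gt_three]))
  have hsq : s ^ 2 * c₀ ≤ s ^ 2 * (‖tangentSquare Z x‖ + K * s) := by linarith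
  linarith [le_of_mul_le_mul_left hsq (by positivity)]

theorem exists_arcChord_near (h : StripBounded R N Z) (hc₀ : 0 < c₀)
    (hac : ∀ a b : ℝ, |a - b| ≤ π → c₀ * |a - b| ^ 2 ≤ ‖chordDenom (Z a - Z b)‖) :
    ∃ d > 0, ∀ (α γ : ℂ) (e : ℂ × ℂ), α ∈ strip R → γ ∈ strip R → |γ.im| ≤ d → ‖α - γ‖ ≤ d →
      ‖e‖ ≤ d * ‖α - γ‖ → c₀ / 2 * ‖α - γ‖ ^ 2 ≤ ‖chordDenom (Z α - Z γ + e)‖ := by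
  obtain ⟨K, hK, hnear⟩ := h.exists_norm_chordDenom_sub_tangentSquare_le
  set d := min 1 (c₀ / (6 * K))
  have hd : 0 < d := lt_min one_pos (by positivity)
  have hdK : d * (6 * K) ≤ c₀ := (le_div_iff₀ (by positivity)).1 (min_le_right _ _)
  refine ⟨d, hd, fun α γ e hα hγ hγd hαγ he => ?_⟩
  have hupper := hnear α γ e d hα hγ (hαγ.trans (min_le_left _ _)) hd.le (min_le_left _ _) he
  have htri := norm_sub_norm_le ((α - γ) ^ 2 * tangentSquare Z γ.re) (chordDenom (Z α - Z γ + e))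
  rw [norm_sub_rev, norm_mul, norm_pow] at htri
  have herr : K * (‖α - γ‖ + |γ.im| + d) * ‖α - γ‖ ^ 2 ≤ c₀ / 2 * ‖α - γ‖ ^ 2 := by
    gcongr
    nlinarith
  have hmain : ‖α - γ‖ ^ 2 * c₀ ≤ ‖α - γ‖ ^ 2 * ‖tangentSquare Z γ.re‖ := by
    gcongr
    exact h.le_norm_tangentSquare hac γ.re
  linarith

theorem norm_sub_ofReal_re_le (h : StripBounded R N Z) {ζ : ℂ} (hζ : ζ ∈ strip R) :
    ‖Z ζ - Z ζ.re‖ ≤ N * |ζ.im| := by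
  simpa only [norm_sub_ofReal_re] using h.norm_sub_le hζ (ofReal_mem_strip h.R_pos ζ.re)

theorem norm_chordDenom_sub_re_le (h : StripBounded R N Z) {α γ : ℂ} {e : ℂ × ℂ} {μ : ℝ}
    (hα : α ∈ strip R) (hγ : γ ∈ strip R) (hαμ : |α.im| ≤ μ) (hγμ : |γ.im| ≤ μ) (hμ : μ ≤ 1)
    (hd : ‖α - γ‖ ≤ 6) (he : ‖e‖ ≤ μ * ‖α - γ‖) :
    ‖chordDenom (Z α - Z γ + e) - chordDenom (Z α.re - Z γ.re)‖ ≤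
      2 * ((6 * N + 6) * Real.exp (6 * N + 6)) * ((2 * N + 6) * μ) := by
  have hN := h.one_le
  have hlip := h.norm_sub_le hα hγ
  have hre := h.norm_sub_le (ofReal_mem_strip h.R_pos α.re) (ofReal_mem_strip h.R_pos γ.re)
  have hre_le : ‖(α.re : ℂ) - γ.re‖ ≤ ‖α - γ‖ := by
    rw [← Complex.ofReal_sub, Complex.norm_real]
    exact Complex.abs_re_le_norm (α - γ)
  have hμ₀ : 0 ≤ μ := (abs_nonneg _).trans hαμ
  have he₆ : ‖e‖ ≤ μ * 6 := he.trans (by gcongr)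
  refine (norm_chordDenom_sub_le_mul (s := 6 * N + 6) ?_ ?_).trans ?_
  · exact (norm_add_le _ _).trans (by nlinarith)
  · nlinarith
  · gcongr
    have hsplit : Z α - Z γ + e - (Z α.re - Z γ.re) = (Z α - Z α.re) - (Z γ - Z γ.re) + e := by
      abel
    have hα' := h.norm_sub_ofReal_re_le hα
    have hγ' := h.norm_sub_ofReal_re_le hγ
    rw [hsplit]
    refine (norm_add_le _ _).trans ?_
    have := _root_.norm_sub_le (Z α - Z α.re) (Z γ - Z γ.re)
    nlinarith

theorem exists_arcChord_far (h : StripBounded R N Z) (hc₀ : 0 < c₀)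
    (hac : ∀ a b : ℝ, |a - b| ≤ π → c₀ * |a - b| ^ 2 ≤ ‖chordDenom (Z a - Z b)‖) {d : ℝ}
    (hd : 0 < d) :
    ∃ μ > 0, ∀ (α γ : ℂ) (e : ℂ × ℂ), α ∈ strip R → γ ∈ strip R → |α.im| ≤ μ → |γ.im| ≤ μ →
      |α.re - γ.re| ≤ π → d ≤ ‖α - γ‖ → ‖e‖ ≤ μ * ‖α - γ‖ →
      c₀ * d ^ 2 / 288 * ‖α - γ‖ ^ 2 ≤ ‖chordDenom (Z α - Z γ + e)‖ := by
  have hN := h.one_le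
  set A := 2 * ((6 * N + 6) * Real.exp (6 * N + 6)) * (2 * N + 6) with hA
  have : 0 < A := by positivity
  set μ := min (min 1 (d / 4)) (c₀ * d ^ 2 / (8 * A))
  have hμ : 0 < μ := lt_min (lt_min one_pos (by positivity)) (by positivity)
  have hμ₁ : μ ≤ 1 := (min_le_left _ _).trans (min_le_left _ _)
  have hμd : μ ≤ d / 4 := (min_le_left _ _).trans (min_le_right _ _)
  have hμA : μ * (8 * A) ≤ c₀ * d ^ 2 := (le_div_iff₀ (by positivity)).1 (min_le_right _ _)
  refine ⟨μ, hμ, fun α γ e hα hγ hαμ hγμ hre hαγ he => ?_⟩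
  have hnorm : ‖α - γ‖ ≤ |α.re - γ.re| + 2 * μ := by
    refine (Complex.norm_le_abs_re_add_abs_im (α - γ)).trans ?_
    rw [Complex.sub_re, Complex.sub_im]
    linarith [abs_sub α.im γ.im]
  have hnorm₆ : ‖α - γ‖ ≤ 6 := by linarith [Real.pi_lt_four]
  have herr := h.norm_chordDenom_sub_re_le hα hγ hαμ hγμ hμ₁ hnorm₆ he
  have htri := norm_sub_norm_le (chordDenom (Z α.re - Z γ.re)) (chordDenom (Z α - Z γ + e))
  rw [norm_sub_rev] at htri
  have hlower : c₀ * (d / 2) ^ 2 ≤ c₀ * |α.re - γ.re| ^ 2 := by gcongr; linarith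
  have hcompare : c₀ * d ^ 2 / 288 * ‖α - γ‖ ^ 2 ≤ c₀ * d ^ 2 / 288 * 6 ^ 2 := by gcongr
  have hreal := hac α.re γ.re hre
  rw [hA] at hμA
  linarith

theorem exists_arcChord_strip (h : StripBounded R N Z) (hc₀ : 0 < c₀)
    (hac : ∀ a b : ℝ, |a - b| ≤ π → c₀ * |a - b| ^ 2 ≤ ‖chordDenom (Z a - Z b)‖) :
    ∃ r > 0, r ≤ R ∧ ∃ η > 0, ∃ c > 0, ∀ (α γ : ℂ) (e : ℂ × ℂ), α ∈ strip r → γ ∈ strip r →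
      |α.re - γ.re| ≤ π → ‖e‖ ≤ η * ‖α - γ‖ → c * ‖α - γ‖ ^ 2 ≤ ‖chordDenom (Z α - Z γ + e)‖ := by
  obtain ⟨d, hd, hnear⟩ := h.exists_arcChord_near hc₀ hac
  obtain ⟨μ, hμ, hfar⟩ := h.exists_arcChord_far hc₀ hac hd
  refine ⟨min R (min d μ), lt_min h.R_pos (lt_min hd hμ), min_le_left _ _, min d μ, lt_min hd hμ,
    min (c₀ / 2) (c₀ * d ^ 2 / 288), lt_min (by positivity) (by positivity),
    fun α γ e hα hγ hre he => ?_⟩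
  rw [mem_strip, lt_min_iff, lt_min_iff] at hα hγ
  rcases le_total ‖α - γ‖ d with hαγ | hαγ
  · refine le_trans ?_ (hnear α γ e hα.1 hγ.1 hγ.2.1.le hαγ (he.trans ?_))
    · gcongr; exact min_le_left _ _
    · gcongr; exact min_le_left _ _
  · refine le_trans ?_ (hfar α γ e hα.1 hγ.1 hα.2.2.le hγ.2.2.le hre hαγ (he.trans ?_))
    · gcongr; exact min_le_right _ _
    · gcongr; exact min_le_right _ _

end StripBounded

end ComplexArcChord

section BaseCurve

/-- A complexified initial interface on the strip of half-width `R`. Its arc-chord condition is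
stable: it survives every perturbation `e` of the chord of size at most `η ‖α - γ‖`. -/
structure BaseCurve (R η c N : ℝ) (Z : ℂ → ℂ × ℂ) : Prop where
  R_pos : 0 < R
  η_pos : 0 < η
  c_pos : 0 < c
  N_nonneg : 0 ≤ N
  differentiableAt : ∀ ζ ∈ strip R, DifferentiableAt ℂ Z ζ
  periodic : ∀ ζ ∈ strip R, Z (ζ + ((2 * π : ℝ) : ℂ)) = Z ζ + (((2 * π : ℝ) : ℂ), 0)
  imPair_ofReal : ∀ x : ℝ, imPair (Z x) = 0
  abs_im_fst_le : ∀ ζ ∈ strip R, |(Z ζ).1.im| ≤ N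
  abs_re_snd_le : ∀ ζ ∈ strip R, |(Z ζ).2.re| ≤ N
  norm_deriv_le : ∀ ζ ∈ strip R, ‖deriv Z ζ‖ ≤ N
  arcChord : ∀ (α γ : ℂ) (e : ℂ × ℂ), α ∈ strip R → γ ∈ strip R → |α.re - γ.re| ≤ π →
    ‖e‖ ≤ η * ‖α - γ‖ → c * ‖α - γ‖ ^ 2 ≤ ‖chordDenom (Z α - Z γ + e)‖

section Existence

theorem exists_holomorphic_curve {z₀ : ℝ → ℝ × ℝ} (han : ∀ α, AnalyticAt ℝ z₀ α)
    (hper : PerCurve z₀) :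
    ∃ r > 0, ∃ Z : ℂ → ℂ × ℂ, (∀ ζ ∈ strip r, DifferentiableAt ℂ Z ζ) ∧
      (∀ ζ ∈ strip r, Z (ζ + ((2 * π : ℝ) : ℂ)) = Z ζ + (((2 * π : ℝ) : ℂ), 0)) ∧
      (∀ x : ℝ, imPair (Z x) = 0) ∧ ∀ x : ℝ, rePair (Z x) = z₀ x := by
  let ι : ℝ × ℝ →L[ℝ] ℂ × ℂ := Complex.ofRealCLM.prodMap Complex.ofRealCLM
  have hf (x : ℝ) : AnalyticAt ℝ (fun x => ι (z₀ x - (x, 0))) x :=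
    (ι.analyticAt _).comp ((han x).sub (analyticAt_id.prod analyticAt_const))
  have hfper : Function.Periodic (fun x => ι (z₀ x - (x, 0))) (2 * π) := fun x => by
    beta_reduce
    rw [hper x]
    congr 1
    ext <;> simp
  obtain ⟨r, hr, P, hP, hPper, hPreal⟩ := exists_strip_extension two_pi_pos hf hfper
  refine ⟨r, hr, fun ζ => P ζ + (ζ, 0),
    fun ζ hζ => (hP ζ hζ).add (differentiableAt_id.prodMk (differentiableAt_const 0)),
    fun ζ hζ => ?_, fun x => ?_, fun x => ?_⟩
  · beta_reduce
    rw [hPper ζ hζ]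
    ext <;> simp [add_assoc]
  all_goals
    beta_reduce
    rw [hPreal]
    ext <;> simp [ι, imPair, rePair]

theorem exists_norm_le_of_periodic_strip {E : Type*} [NormedAddCommGroup E] {g : ℂ → E}
    {T r : ℝ} (hT : 0 < T) (hr : 0 < r) (hc : ∀ ζ ∈ strip r, ContinuousAt g ζ)
    (hper : ∀ ζ ∈ strip r, g (ζ + T) = g ζ) : ∃ N, 0 ≤ N ∧ ∀ ζ ∈ strip (r / 2), ‖g ζ‖ ≤ N := by
  have hmem {ζ : ℂ} (hζ : |ζ.im| ≤ r / 2) : ζ ∈ strip r := by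
    rw [mem_strip]
    linarith
  obtain ⟨N, hN⟩ := exists_norm_le_of_periodic_of_abs_im_le hT (R := r / 2)
    (fun ζ hζ => hc ζ (hmem hζ)) (fun ζ hζ => hper ζ (hmem hζ))
  exact ⟨N, (norm_nonneg _).trans (hN 0 (by simpa using (half_pos hr).le)),
    fun ζ hζ => hN ζ (mem_strip.1 hζ).le⟩

theorem exists_stripBounded {Z : ℂ → ℂ × ℂ} {r : ℝ} (hr : 0 < r)
    (hd : ∀ ζ ∈ strip r, DifferentiableAt ℂ Z ζ)
    (hper : ∀ ζ ∈ strip r, Z (ζ + ((2 * π : ℝ) : ℂ)) = Z ζ + (((2 * π : ℝ) : ℂ), 0)) :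
    ∃ N, StripBounded (r / 2) N Z ∧
      ∀ ζ ∈ strip (r / 2), |(Z ζ).1.im| ≤ N ∧ |(Z ζ).2.re| ≤ N := by
  have hd' (ζ : ℂ) (hζ : ζ ∈ strip r) := differentiableAt_deriv_of_forall_mem_strip hd hζ
  have hd'' (ζ : ℂ) (hζ : ζ ∈ strip r) := differentiableAt_deriv_of_forall_mem_strip hd' hζ
  have hper' (ζ : ℂ) (hζ : ζ ∈ strip r) := deriv_add_of_forall_mem_strip hper hζ
  have hper'' (ζ : ℂ) (hζ : ζ ∈ strip r) : deriv (deriv Z) (ζ + ((2 * π : ℝ) : ℂ)) = _ :=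
    deriv_add_of_forall_mem_strip (v := 0) (fun ζ hζ => by rw [hper' ζ hζ, add_zero]) hζ
  obtain ⟨N₀, hN₀, hbound₀⟩ := exists_norm_le_of_periodic_strip (g := fun ζ => Z ζ - (ζ, 0))
    two_pi_pos hr (fun ζ hζ => (hd ζ hζ).continuousAt.sub (by fun_prop))
    fun ζ hζ => by
      rw [hper ζ hζ]
      ext <;> simp
  obtain ⟨N₁, hN₁, hbound₁⟩ := exists_norm_le_of_periodic_strip two_pi_pos hr
    (fun ζ hζ => (hd' ζ hζ).continuousAt) hper'
  obtain ⟨N₂, hN₂, hbound₂⟩ := exists_norm_le_of_periodic_strip two_pi_pos hr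
    (fun ζ hζ => (hd'' ζ hζ).continuousAt) hper''
  have hsub : strip (r / 2) ⊆ strip r := strip_subset_strip (half_le_self hr.le)
  refine ⟨1 + r + N₀ + N₁ + N₂, ⟨half_pos hr, by linarith, fun ζ hζ => hd ζ (hsub hζ),
    fun ζ hζ => (hbound₁ ζ hζ).trans (by linarith),
    fun ζ hζ => (hbound₂ ζ hζ).trans (by linarith)⟩, fun ζ hζ => ⟨?_, ?_⟩⟩
  · have him := (Complex.abs_im_le_norm _).trans ((norm_fst_le _).trans (hbound₀ ζ hζ))
    rw [Prod.fst_sub, Complex.sub_im] at him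
    linarith [abs_sub_abs_le_abs_sub (Z ζ).1.im ζ.im, mem_strip.1 hζ]
  · have hre := (Complex.abs_re_le_norm _).trans ((norm_snd_le _).trans (hbound₀ ζ hζ))
    rw [Prod.snd_sub, sub_zero] at hre
    linarith

theorem exists_le_norm_chordDenom_of_arcChord {Z : ℂ → ℂ × ℂ} (hreal : ∀ x : ℝ, imPair (Z x) = 0)
    (hac : ArcChord fun x : ℝ => rePair (Z x)) :
    ∃ c₀ > 0, ∀ a b : ℝ, |a - b| ≤ π → c₀ * |a - b| ^ 2 ≤ ‖chordDenom (Z a - Z b)‖ := by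
  obtain ⟨C, hC, hac⟩ := hac
  refine ⟨1 / (2 * C), by positivity, fun a b hab => ?_⟩
  rw [norm_chordDenom_sub_ofReal hreal, one_div_mul_eq_div, div_le_iff₀ (by positivity)]
  calc |a - b| ^ 2 ≤ distTZ (a - b) ^ 2 := by gcongr; exact abs_le_distTZ hab
    _ ≤ C * (2 * Qden (fun x : ℝ => rePair (Z x)) a (a - b)) := hac a (a - b)
    _ = _ := by ring

theorem exists_baseCurve {z₀ : ℝ → ℝ × ℝ} (han : ∀ α, AnalyticAt ℝ z₀ α) (hper : PerCurve z₀)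
    (hac : ArcChord z₀) :
    ∃ (R η c N : ℝ) (Z : ℂ → ℂ × ℂ), BaseCurve R η c N Z ∧ ∀ x : ℝ, rePair (Z x) = z₀ x := by
  obtain ⟨r, hr, Z, hd, hZper, him, hre⟩ := exists_holomorphic_curve han hper
  obtain ⟨N, hN, hbound⟩ := exists_stripBounded hr hd hZper
  obtain ⟨c₀, hc₀, hchord⟩ := exists_le_norm_chordDenom_of_arcChord him (by simpa only [hre])
  obtain ⟨R, hR, hRr, η, hη, c, hc, harc⟩ := hN.exists_arcChord_strip hc₀ hchord
  have hsub : strip R ⊆ strip (r / 2) := strip_subset_strip hRr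
  refine ⟨R, η, c, N, Z, ?_, hre⟩
  exact {
    R_pos := hR
    η_pos := hη
    c_pos := hc
    N_nonneg := zero_le_one.trans hN.one_le
    differentiableAt := fun ζ hζ => hN.differentiableAt ζ (hsub hζ)
    periodic := fun ζ hζ => hZper ζ (strip_subset_strip (half_le_self hr.le) (hsub hζ))
    imPair_ofReal := him
    abs_im_fst_le := fun ζ hζ => (hbound ζ (hsub hζ)).1
    abs_re_snd_le := fun ζ hζ => (hbound ζ (hsub hζ)).2
    norm_deriv_le := fun ζ hζ => hN.norm_deriv_le ζ (hsub hζ)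
    arcChord := harc }

end Existence

namespace BaseCurve

variable {R η c N : ℝ} {Z : ℂ → ℂ × ℂ}

theorem le_norm_chordDenom_of_le_abs_im_sub (hZ : BaseCurve R η c N Z) {α γ : ℂ} {e : ℂ × ℂ}
    (hα : α ∈ strip R) (hγ : γ ∈ strip R) (h : R / 4 ≤ |α.im - γ.im|) (he : ‖e‖ ≤ η * (R / 4)) :
    c * (R / 4) ^ 2 ≤ ‖chordDenom (Z α - Z γ + e)‖ := by
  obtain ⟨k, hk⟩ := exists_int_abs_sub_le_pi (α.re - γ.re)
  set γ' : ℂ := γ + k * ((2 * π : ℝ) : ℂ) with hγ'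
  have him : γ'.im = γ.im := by simp [hγ']
  have hre : α.re - γ'.re = α.re - γ.re - 2 * π * k := by
    simp [hγ']
    ring
  have hdist : R / 4 ≤ ‖α - γ'‖ := by
    refine h.trans ?_
    rw [← him, ← Complex.sub_im]
    exact Complex.abs_im_le_norm _
  have hshift := chordDenom_sub_add_int hZ.periodic (Z α + e) k hγ
  rw [add_sub_right_comm, add_sub_right_comm] at hshift
  rw [← hshift]
  have hR := hZ.R_pos
  have hη := hZ.η_pos
  have hc := hZ.c_pos
  refine le_trans ?_ (hZ.arcChord α γ' e hα (by rwa [mem_strip, him]) (by rwa [hre]) ?_)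
  · gcongr
  · exact he.trans (by gcongr)

/-- The size of the perturbations of a `BaseCurve R η c N` that keep the arc-chord condition. -/
def tolerance (R η : ℝ) : ℝ := min 1 (min (η * R / 8) (η * √(R / 4)))

theorem tolerance_pos (hZ : BaseCurve R η c N Z) : 0 < tolerance R η := by
  have hR := hZ.R_pos
  have hη := hZ.η_pos
  exact lt_min one_pos (lt_min (by positivity) (by positivity))

variable {ρ : ℝ} {w : ℂ → ℂ × ℂ}

theorem norm_sub_le_of_stripBall (hw : StripBall (2 * π) imPair (tolerance R η) ρ w) {α γ : ℂ}
    (hα : α ∈ strip ρ) (hγ : γ ∈ strip ρ) :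
    ‖w α - w γ‖ ≤ 2 ∧ ‖w α - w γ‖ ≤ η * (R / 4) := by
  have h₁ : tolerance R η ≤ 1 := min_le_left _ _
  have h₂ : tolerance R η ≤ η * R / 8 := (min_le_right _ _).trans (min_le_left _ _)
  have h₃ := (norm_sub_le _ _).trans (add_le_add (hw.norm_le α hα) (hw.norm_le γ hγ))
  exact ⟨by linarith, by linarith⟩

theorem norm_sub_le_mul_of_stripBall (hZ : BaseCurve R η c N Z) (hρ : 3 * R / 4 < ρ)
    (hw : StripBall (2 * π) imPair (tolerance R η) ρ w) {α γ : ℂ}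
    (hα : |α.im| ≤ R / 2) (hγ : |γ.im| ≤ R / 2) : ‖w α - w γ‖ ≤ η * ‖α - γ‖ := by
  have hR := hZ.R_pos
  have hsqrt : 0 < √(R / 4) := Real.sqrt_pos.2 (by positivity)
  have hmem {ζ : ℂ} (hζ : |ζ.im| ≤ R / 2) : ζ ∈ strip ρ := by
    rw [mem_strip]
    linarith
  have hconv : Convex ℝ {ζ : ℂ | |ζ.im| ≤ R / 2} := by
    simpa only [abs_le, ← ofPred_and] using
      (convex_halfSpace_im_ge (-(R / 2))).inter (convex_halfSpace_im_le (R / 2))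
  refine hconv.norm_image_sub_le_of_norm_deriv_le (fun ζ hζ => hw.differentiableAt ζ (hmem hζ))
    (fun ζ (hζ : |ζ.im| ≤ R / 2) => ?_) hγ hα
  calc ‖deriv w ζ‖ ≤ tolerance R η / √(ρ - |ζ.im|) := hw.norm_deriv_le ζ (hmem hζ)
    _ ≤ tolerance R η / √(R / 4) := div_le_div_of_nonneg_left hZ.tolerance_pos.le hsqrt
      (Real.sqrt_le_sqrt (by linarith))
    _ ≤ η := (div_le_iff₀ hsqrt).2 ((min_le_right _ _).trans (min_le_right _ _))

theorem norm_deriv_add_le_of_stripBall (hZ : BaseCurve R η c N Z) (hρR : ρ ≤ R)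
    (hw : StripBall (2 * π) imPair (tolerance R η) ρ w) {ζ : ℂ} (hζ : ζ ∈ strip ρ) :
    ‖deriv (Z + w) ζ‖ ≤ (N * √R + 1) / √(ρ - |ζ.im|) := by
  have hpos : 0 < √(ρ - |ζ.im|) := Real.sqrt_pos.2 (sub_pos.2 hζ)
  have hζR := strip_subset_strip hρR hζ
  have hbase : ‖deriv Z ζ‖ ≤ N * √R / √(ρ - |ζ.im|) := by
    rw [le_div_iff₀ hpos]
    exact mul_le_mul (hZ.norm_deriv_le ζ hζR)
      (Real.sqrt_le_sqrt (by linarith [abs_nonneg ζ.im])) hpos.le hZ.N_nonneg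
  have hpert : ‖deriv w ζ‖ ≤ 1 / √(ρ - |ζ.im|) := (hw.norm_deriv_le ζ hζ).trans <|
    div_le_div_of_nonneg_right (min_le_left _ _) hpos.le
  rw [deriv_add (hZ.differentiableAt ζ hζR) (hw.differentiableAt ζ hζ), add_div]
  exact (norm_add_le _ _).trans (add_le_add hbase hpert)

theorem mem_kernelDomain_add_of_stripBall (hZ : BaseCurve R η c N Z) (hρR : ρ ≤ R)
    (hw : StripBall (2 * π) imPair (tolerance R η) ρ w) {α γ : ℂ} (hα : α ∈ strip ρ)
    (hγ : γ ∈ strip ρ) (h : R / 4 ≤ |α.im - γ.im|) :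
    Z α - Z γ + (w α - w γ) ∈ kernelDomain (2 * (N + 1)) (c * (R / 4) ^ 2) := by
  have hαR := strip_subset_strip hρR hα
  have hγR := strip_subset_strip hρR hγ
  obtain ⟨hw₂, hwη⟩ := norm_sub_le_of_stripBall hw hα hγ
  refine ⟨?_, ?_, hZ.le_norm_chordDenom_of_le_abs_im_sub hαR hγR h hwη⟩
  · have hpert := (Complex.abs_im_le_norm _).trans ((norm_fst_le _).trans hw₂)
    have hbase := abs_sub (Z α).1.im (Z γ).1.im
    rw [Prod.fst_add, Complex.add_im, Prod.fst_sub, Complex.sub_im]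
    refine (abs_add_le _ _).trans ?_
    linarith [hZ.abs_im_fst_le α hαR, hZ.abs_im_fst_le γ hγR]
  · have hpert := (Complex.abs_re_le_norm _).trans ((norm_snd_le _).trans hw₂)
    have hbase := abs_sub (Z α).2.re (Z γ).2.re
    rw [Prod.snd_add, Complex.add_re, Prod.snd_sub, Complex.sub_re]
    refine (abs_add_le _ _).trans ?_
    linarith [hZ.abs_re_snd_le α hαR, hZ.abs_re_snd_le γ hγR]

theorem regularCurve_add (hZ : BaseCurve R η c N Z) (hρ : 3 * R / 4 < ρ) (hρR : ρ ≤ R)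
    (hw : StripBall (2 * π) imPair (tolerance R η) ρ w) :
    RegularCurve R c (c * (R / 4) ^ 2) (2 * (N + 1) + N * √R) ρ (Z + w) := by
  have hR := hZ.R_pos
  have hc := hZ.c_pos
  have hN := hZ.N_nonneg
  have hNR : 0 ≤ N * √R := by positivity
  have hsub : strip ρ ⊆ strip R := strip_subset_strip hρR
  have hchord (α γ : ℂ) : (Z + w) α - (Z + w) γ = Z α - Z γ + (w α - w γ) :=
    add_sub_add_comm _ _ _ _
  refine ⟨hR, hc, by positivity, hρ, hρR,
    fun ζ hζ => (hZ.differentiableAt ζ (hsub hζ)).add (hw.differentiableAt ζ hζ),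
    fun ζ hζ => ?_, fun x => ?_, fun ζ hζ => ?_, fun α hα γ hγ h => ?_, fun α γ hα hγ h => ?_⟩
  · rw [Pi.add_apply, Pi.add_apply, hZ.periodic ζ (hsub hζ), hw.periodic ζ hζ, add_right_comm]
  · rw [Pi.add_apply, map_add, hZ.imPair_ofReal, hw.apply_ofReal, add_zero]
  · exact (hZ.norm_deriv_add_le_of_stripBall hρR hw hζ).trans
      (div_le_div_of_nonneg_right (by linarith) (Real.sqrt_nonneg _))
  · obtain ⟨him, hre, hden⟩ := hZ.mem_kernelDomain_add_of_stripBall hρR hw hα hγ h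
    rw [hchord]
    exact ⟨him.trans (by linarith), hre.trans (by linarith), hden⟩
  · rw [hchord]
    exact hZ.arcChord α γ _ (by rw [mem_strip]; linarith) (by rw [mem_strip]; linarith) h
      (hZ.norm_sub_le_mul_of_stripBall hρ hw hα hγ)

theorem exists_stripOperator (hZ : BaseCurve R η c N Z) :
    ∃ B L, StripOperator (fun w => complexMuskatRHS R (Z + w)) (2 * π) imPair (tolerance R η)
      (3 * R / 4) R B L := by
  have hR := hZ.R_pos
  have hc := hZ.c_pos
  have hN := hZ.N_nonneg
  set M := 2 * (N + 1) + N * √R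
  set m := c * (R / 4) ^ 2
  have : 0 < m := by positivity
  refine ⟨2 * π * (Real.exp M / m * (3 * M)),
    2 * π * ((Real.exp M / m + 2 * (Real.exp M / m) ^ 2) * (6 * M) + 3 * (Real.exp M / m)), ?_⟩
  exact {
    ε_pos := hZ.tolerance_pos
    r_nonneg := by positivity
    r_lt := by linarith
    B_nonneg := by positivity
    L_nonneg := by positivity
    differentiableAt := fun hρ hρR hw _ hζ =>
      (hZ.regularCurve_add hρ hρR hw).differentiableAt_complexMuskatRHS hζ
    periodic := fun hρ hρR hw _ hζ => (hZ.regularCurve_add hρ hρR hw).complexMuskatRHS_periodic hζ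
    apply_ofReal := fun hρ hρR hw => (hZ.regularCurve_add hρ hρR hw).imPair_complexMuskatRHS
    norm_le := fun hρ hρR hw _ hζ => (hZ.regularCurve_add hρ hρR hw).norm_complexMuskatRHS_le hζ
    lipschitz := fun {ρ w₁ w₂ δ} hρ hρR hw₁ hw₂ hδ hδ' _ hζ => by
      refine (hZ.regularCurve_add hρ hρR hw₁).norm_complexMuskatRHS_sub_le
        (hZ.regularCurve_add hρ hρR hw₂) (fun ζ hζ => ?_) (fun ζ hζ => ?_) hζ
      · rw [Pi.add_apply, Pi.add_apply, add_sub_add_left_eq_sub]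
        exact hδ ζ hζ
      · have hZζ := hZ.differentiableAt ζ (strip_subset_strip hρR hζ)
        rw [deriv_add hZζ (hw₁.differentiableAt ζ hζ), deriv_add hZζ (hw₂.differentiableAt ζ hζ),
          add_sub_add_left_eq_sub]
        exact hδ' ζ hζ }

end BaseCurve

end BaseCurve

/-! ### The analytic flow and the turning -/

section AnalyticMuskatFlow

/-- A solution `z t α` of the Muskat equation for `|t| < τ` along which the interface stays analytic
and regular, and whose tangent `∂_α z` evolves by the differentiated equation. The two formulas for
the horizontal velocity, `muskatRHS` and `v1`, are required to agree. -/
structure AnalyticMuskatFlow (τ : ℝ) (z : ℝ → ℝ → ℝ × ℝ) : Prop where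
  τ_pos : 0 < τ
  analyticAt : ∀ {t}, |t| < τ → ∀ α, AnalyticAt ℝ (z t) α
  perCurve : ∀ {t}, |t| < τ → PerCurve (z t)
  arcChord : ∀ {t}, |t| < τ → ArcChord (z t)
  hasDerivAt : ∀ {t}, |t| < τ → ∀ α, HasDerivAt (fun s => z s α) (muskatRHS (z t) α) t
  hasDerivAt_deriv : ∀ {t}, |t| < τ → ∀ α,
    HasDerivAt (fun s => deriv (z s) α) (deriv (muskatRHS (z t)) α) t
  differentiable_muskatRHS : ∀ {t}, |t| < τ → Differentiable ℝ (muskatRHS (z t))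
  fst_muskatRHS : ∀ {t}, |t| < τ → ∀ α, (muskatRHS (z t) α).1 = v1 (z t) α
  continuousOn_deriv : ContinuousOn (fun p : ℝ × ℝ => deriv (z p.1) p.2) {p | |p.1| < τ}
  continuousOn_deriv_muskatRHS :
    ContinuousOn (fun p : ℝ × ℝ => deriv (muskatRHS (z p.1)) p.2) {p | |p.1| < τ}

theorem AnalyticMuskatFlow.of_regularCurve {τ R c m M : ℝ} {ρ : ℝ → ℝ} {u : ℝ → ℂ → ℂ × ℂ}
    (hτ : 0 < τ) (hu : ∀ {t}, |t| < τ → RegularCurve R c m M (ρ t) (u t))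
    (htime : ∀ {t}, |t| < τ → ∀ x : ℝ, HasDerivAt (fun s => u s x) (complexMuskatRHS R (u t) x) t)
    (htime' : ∀ {t}, |t| < τ → ∀ x : ℝ,
      HasDerivAt (fun s => deriv (u s) x) (deriv (complexMuskatRHS R (u t)) x) t)
    (hcont : ContinuousOn (fun p : ℝ × ℝ => deriv (u p.1) p.2) {p | |p.1| < τ})
    (hcont' : ContinuousOn (fun p : ℝ × ℝ => deriv (complexMuskatRHS R (u p.1)) p.2)
      {p | |p.1| < τ}) :
    AnalyticMuskatFlow τ fun t x => rePair (u t x) := by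
  have hderiv {t : ℝ} (ht : |t| < τ) (x : ℝ) := (hu ht).deriv_rePair x
  have hrhs {t : ℝ} (ht : |t| < τ) : muskatRHS (fun x : ℝ => rePair (u t x)) =
      fun x : ℝ => rePair (complexMuskatRHS R (u t) x) :=
    funext fun x => ((hu ht).rePair_complexMuskatRHS x).symm
  have hrhs_deriv {t : ℝ} (ht : |t| < τ) (x : ℝ) := hasDerivAt_comp_ofReal rePair
    ((hu ht).differentiableAt_complexMuskatRHS ((hu ht).ofReal_mem x))
  refine ⟨hτ, fun ht => (hu ht).analyticAt_rePair, fun ht => (hu ht).perCurve_rePair,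
    fun ht => (hu ht).arcChord_rePair, fun ht x => ?_, fun {t} ht x => ?_, fun ht x => ?_,
    fun ht x => ?_, ?_, ?_⟩
  · rw [hrhs ht]
    exact rePair.hasFDerivAt.comp_hasDerivAt _ (htime ht x)
  · rw [hrhs ht, (hrhs_deriv ht x).deriv]
    refine (rePair.hasFDerivAt.comp_hasDerivAt _ (htime' ht x)).congr_of_eventuallyEq ?_
    filter_upwards [(continuous_abs.tendsto t).eventually (gt_mem_nhds ht)] with s hs
      using hderiv hs x
  · rw [hrhs ht]
    exact (hrhs_deriv ht x).differentiableAt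
  · rw [← (hu ht).rePair_complexMuskatRHS, (hu ht).fst_rePair_complexMuskatRHS]
  · exact (rePair.continuous.comp_continuousOn hcont).congr fun p hp => hderiv hp p.2
  · refine (rePair.continuous.comp_continuousOn hcont').congr fun p hp => ?_
    simp only [hrhs hp, (hrhs_deriv hp p.2).deriv, Function.comp_apply]

theorem BaseCurve.analyticMuskatFlow {R η c N κ B L : ℝ} {Z : ℂ → ℂ × ℂ} {w : ℝ → ℂ → ℂ × ℂ}
    (hZ : BaseCurve R η c N Z)
    (hF : StripOperator (fun w => complexMuskatRHS R (Z + w)) (2 * π) imPair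
      (BaseCurve.tolerance R η) (3 * R / 4) R B L) (hκ : 0 < κ)
    (hw : StripPath (2 * π) imPair (BaseCurve.tolerance R η) (3 * R / 4) R B κ w)
    (heq : ∀ t ζ, (t, ζ) ∈ shrinkingStrip (3 * R / 4) R κ →
      w t ζ = picard (fun w => complexMuskatRHS R (Z + w)) w t ζ) :
    AnalyticMuskatFlow ((R - 3 * R / 4) / κ) fun t x => rePair ((Z + w t) x) := by
  have hR := hZ.R_pos
  have hmem {t : ℝ} (ht : |t| < (R - 3 * R / 4) / κ) (x : ℝ) :
      (t, (x : ℂ)) ∈ shrinkingStrip (3 * R / 4) R κ := by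
    have hκt := (lt_div_iff₀' hκ).1 ht
    exact ⟨hκt, ofReal_mem_strip (by linarith) x⟩
  have hmaps : MapsTo (fun p : ℝ × ℝ => (p.1, (p.2 : ℂ))) {p | |p.1| < (R - 3 * R / 4) / κ}
      (shrinkingStrip (3 * R / 4) R κ) := fun p hp => hmem hp p.2
  have hderiv {t : ℝ} (ht : |t| < (R - 3 * R / 4) / κ) (x : ℝ) :
      deriv (Z + w t) x = deriv Z x + deriv (w t) x :=
    deriv_add (hZ.differentiableAt x (ofReal_mem_strip hR x))
      (hw.differentiableAt _ (hmem ht x))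
  have hcont : ContinuousOn (deriv Z) (strip R) := fun ζ hζ =>
    (differentiableAt_deriv_of_forall_mem_strip hZ.differentiableAt
      hζ).continuousAt.continuousWithinAt
  have hcurve {t : ℝ} (ht : |t| < (R - 3 * R / 4) / κ) :=
    have hρ := StripOperator.half_width_mem hκ (hmem ht 0).1
    hZ.regularCurve_add hρ.1 hρ.2 (hw.ball (hmem ht 0).1)
  refine .of_regularCurve (u := fun t => Z + w t) (div_pos (by linarith) hκ) hcurve
    (fun ht x => (hF.hasDerivAt_time_of_eq_picard hκ hw heq (hmem ht x)).const_add (Z x))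
    (fun {t} ht x => ?_) ?_ ((hF.continuousOn_deriv_comp hκ hw).comp
      (f := fun p : ℝ × ℝ => (p.1, (p.2 : ℂ))) (by fun_prop) hmaps)
  · refine ((hF.hasDerivAt_time_deriv_of_eq_picard hκ hw heq (hmem ht x)).const_add
      (deriv Z x)).congr_of_eventuallyEq ?_
    filter_upwards [(continuous_abs.tendsto t).eventually (gt_mem_nhds ht)] with s hs
      using hderiv hs x
  · exact (((hcont.comp_continuous Complex.continuous_ofReal (ofReal_mem_strip hR)).comp
      continuous_snd).continuousOn.add
      ((continuousOn_deriv_shrinkingStrip (hw.continuousOn hκ) hw.differentiableAt).comp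
        (by fun_prop) hmaps)).congr fun p hp => hderiv hp p.2

theorem exists_analyticMuskatFlow {z₀ : ℝ → ℝ × ℝ} (han : ∀ α, AnalyticAt ℝ z₀ α)
    (hper : PerCurve z₀) (hac : ArcChord z₀) :
    ∃ τ z, AnalyticMuskatFlow τ z ∧ z 0 = z₀ := by
  obtain ⟨R, η, c, N, Z, hZ, hZz₀⟩ := exists_baseCurve han hper hac
  obtain ⟨B, L, hF⟩ := hZ.exists_stripOperator
  obtain ⟨κ, hκ, w, hw, heq⟩ := hF.exists_fixedPoint
  refine ⟨_, _, hZ.analyticMuskatFlow hF hκ hw heq, funext fun x => ?_⟩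
  have hR := hZ.R_pos
  have hmem : ((0 : ℝ), (x : ℂ)) ∈ shrinkingStrip (3 * R / 4) R κ := by
    simpa [mk_mem_shrinkingStrip, mem_strip, hR] using hF.r_lt
  simp only [Pi.add_apply, heq 0 x hmem, picard, intervalIntegral.integral_same, add_zero, hZz₀]

end AnalyticMuskatFlow

section Turning

open Filter Topology

theorem exists_forall_strictAntiOn_ball {s g : ℝ → ℝ → ℝ} {t₀ x₀ : ℝ}
    (hsg : ∀ᶠ p : ℝ × ℝ in 𝓝 (t₀, x₀), HasDerivAt (fun t => s t p.2) (g p.1 p.2) p.1)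
    (hg : ContinuousAt (fun p : ℝ × ℝ => g p.1 p.2) (t₀, x₀)) (hneg : g t₀ x₀ < 0) :
    ∃ δ > 0, ∀ x ∈ Metric.ball x₀ δ, StrictAntiOn (fun t => s t x) (Metric.ball t₀ δ) := by
  obtain ⟨δ, hδ, hball⟩ := Metric.eventually_nhds_iff_ball.1
    (hsg.and (hg.eventually (gt_mem_nhds hneg)))
  refine ⟨δ, hδ, fun x hx => ?_⟩
  have hderiv : ∀ t ∈ Metric.ball t₀ δ, HasDerivAt (fun t => s t x) (g t x) t ∧ g t x < 0 :=
    fun t ht => hball (t, x) (ball_prod_same t₀ x₀ δ ▸ ⟨ht, hx⟩)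
  exact strictAntiOn_of_hasDerivWithinAt_neg (convex_ball t₀ δ)
    (fun t ht => (hderiv t ht).1.continuousAt.continuousWithinAt)
    (fun t ht => (hderiv t (interior_subset ht)).1.hasDerivWithinAt)
    fun t ht => (hderiv t (interior_subset ht)).2

theorem eventually_forall_pos_and_neg {s g : ℝ → ℝ → ℝ} {T : ℝ} (hT : 0 < T)
    (hper : ∀ᶠ t in 𝓝 0, Function.Periodic (s t) T)
    (hs : ∀ x, ContinuousAt (fun p : ℝ × ℝ => s p.1 p.2) (0, x))
    (hsg : ∀ᶠ p : ℝ × ℝ in 𝓝 (0, 0), HasDerivAt (fun t => s t p.2) (g p.1 p.2) p.1)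
    (hg : ContinuousAt (fun p : ℝ × ℝ => g p.1 p.2) (0, 0)) (hneg : g 0 0 < 0)
    (hzero : s 0 0 = 0) (hpos : ∀ x, x ≠ 0 → |x| ≤ T / 2 → 0 < s 0 x) :
    ∀ᶠ t in 𝓝[>] 0, (∀ x, 0 < s (-t) x) ∧ s t 0 < 0 := by
  obtain ⟨δ, hδ, hanti⟩ := exists_forall_strictAntiOn_ball hsg hg hneg
  have h0 : (0 : ℝ) ∈ Metric.ball 0 δ := Metric.mem_ball_self hδ
  have hfar : ∀ᶠ t in 𝓝 0, ∀ x ∈ Icc (-(T / 2)) (T / 2) \ Metric.ball 0 δ, 0 < s t x :=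
    (isCompact_Icc.diff Metric.isOpen_ball).eventually_forall_of_forall_eventually fun x hx =>
      (hs x).eventually (lt_mem_nhds (hpos x (fun h => hx.2 (h ▸ h0)) (abs_le.2 hx.1)))
  have hneg_tendsto : Tendsto Neg.neg (𝓝[>] (0 : ℝ)) (𝓝 0) :=
    (continuous_neg.tendsto' 0 0 neg_zero).mono_left nhdsWithin_le_nhds
  filter_upwards [Ioo_mem_nhdsGT hδ, hneg_tendsto.eventually (hper.and hfar)]
    with t ht ⟨hper, hfar⟩
  have htδ : |t| < δ := by rw [abs_of_pos ht.1]; exact ht.2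
  refine ⟨fun x => ?_, (hanti 0 h0 h0 (by simpa using htδ) ht.1).trans_eq hzero⟩
  obtain ⟨y, hy, hxy⟩ := hper.exists_mem_Ico hT x (-(T / 2))
  have hyT : y ∈ Icc (-(T / 2)) (T / 2) := ⟨hy.1, by linarith [hy.2]⟩
  rw [hxy]
  by_cases hyδ : y ∈ Metric.ball 0 δ
  · have hinit : 0 ≤ s 0 y := by
      rcases eq_or_ne y 0 with rfl | hy0
      · exact hzero.ge
      · exact (hpos y hy0 (abs_le.2 hyT)).le
    exact hinit.trans_lt (hanti y hyδ (by simpa using htδ) h0 (neg_neg_of_pos ht.1))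
  · exact hfar y ⟨hyT, hyδ⟩

end Turning

theorem hasDerivAt_comp_fst {f : ℝ → ℝ × ℝ} {f' : ℝ × ℝ} {x : ℝ} (hf : HasDerivAt f f' x) :
    HasDerivAt (fun y => (f y).1) f'.1 x :=
  (ContinuousLinearMap.fst ℝ ℝ ℝ).hasFDerivAt.comp_hasDerivAt x hf

theorem PerCurve.periodic_deriv {z : ℝ → ℝ × ℝ} (hz : PerCurve z) :
    Function.Periodic (deriv z) (2 * π) := fun α => by
  rw [← deriv_comp_add_const, funext hz, deriv_add_const]

theorem not_exists_eq_two_pi_mul_int {α : ℝ} (hα : α ≠ 0) (hαπ : |α| ≤ π) :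
    ¬∃ k : ℤ, α = 2 * π * k := by
  rintro ⟨k, rfl⟩
  have hk : (1 : ℝ) ≤ |(k : ℝ)| := by
    exact_mod_cast Int.one_le_abs (Int.cast_ne_zero.1 (right_ne_zero_of_mul hα))
  rw [abs_mul, abs_of_pos two_pi_pos] at hαπ
  nlinarith [Real.pi_pos]

namespace AnalyticMuskatFlow

open Filter Topology

variable {τ : ℝ} {z : ℝ → ℝ → ℝ × ℝ}

theorem isOpen_times (τ : ℝ) : IsOpen {p : ℝ × ℝ | |p.1| < τ} :=
  isOpen_lt (by fun_prop) continuous_const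

theorem deriv_fst (hz : AnalyticMuskatFlow τ z) {t : ℝ} (ht : |t| < τ) (α : ℝ) :
    deriv (fun a => (z t a).1) α = (deriv (z t) α).1 :=
  (hasDerivAt_comp_fst (hz.analyticAt ht α).differentiableAt.hasDerivAt).deriv

theorem deriv_snd (hz : AnalyticMuskatFlow τ z) {t : ℝ} (ht : |t| < τ) (α : ℝ) :
    deriv (fun a => (z t a).2) α = (deriv (z t) α).2 :=
  ((ContinuousLinearMap.snd ℝ ℝ ℝ).hasFDerivAt.comp_hasDerivAt α
    (hz.analyticAt ht α).differentiableAt.hasDerivAt).deriv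

theorem continuousAt_deriv (hz : AnalyticMuskatFlow τ z) (α : ℝ) :
    ContinuousAt (fun p : ℝ × ℝ => deriv (z p.1) p.2) (0, α) :=
  hz.continuousOn_deriv.continuousAt ((isOpen_times τ).mem_nhds (by simpa using hz.τ_pos))

theorem fst_deriv_muskatRHS (hz : AnalyticMuskatFlow τ z) {t : ℝ} (ht : |t| < τ) {d α : ℝ}
    (hd : HasDerivAt (v1 (z t)) d α) : (deriv (muskatRHS (z t)) α).1 = d := by
  have hfst := hasDerivAt_comp_fst (hz.differentiable_muskatRHS ht α).hasDerivAt
  simp only [hz.fst_muskatRHS ht] at hfst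
  exact hfst.unique hd

theorem eventually_turning (hz : AnalyticMuskatFlow τ z)
    (hRT : ∀ α : ℝ, (¬∃ k : ℤ, α = 2 * π * k) → 0 < deriv (fun a => (z 0 a).1) α)
    (hvert : deriv (fun a => (z 0 a).1) 0 = 0)
    (hneg : ∃ d : ℝ, d < 0 ∧ HasDerivAt (v1 (z 0)) d 0) :
    ∀ᶠ t in 𝓝[>] 0, (∀ α, 0 < deriv (fun a => (z (-t) a).1) α) ∧
      deriv (fun a => (z t a).1) 0 < 0 := by
  obtain ⟨d, hd, hv1⟩ := hneg
  have h0 : |(0 : ℝ)| < τ := by simpa using hz.τ_pos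
  have hdomain : {p : ℝ × ℝ | |p.1| < τ} ∈ 𝓝 (0, 0) := (isOpen_times τ).mem_nhds h0
  have htime : ∀ᶠ t in 𝓝 0, |t| < τ := (continuous_abs.tendsto 0).eventually (gt_mem_nhds h0)
  have hturn := eventually_forall_pos_and_neg (s := fun t α => (deriv (z t) α).1)
    (g := fun t α => (deriv (muskatRHS (z t)) α).1) two_pi_pos
    (htime.mono fun t ht α => congrArg Prod.fst ((hz.perCurve ht).periodic_deriv α))
    (fun α => (hz.continuousAt_deriv α).fst)
    (mem_of_superset hdomain fun p hp => hasDerivAt_comp_fst (hz.hasDerivAt_deriv hp p.2))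
    (hz.continuousOn_deriv_muskatRHS.continuousAt hdomain).fst
    ((hz.fst_deriv_muskatRHS h0 hv1).trans_lt hd) ((hz.deriv_fst h0 0).symm.trans hvert)
    fun α hα hαπ => (hRT α (not_exists_eq_two_pi_mul_int hα (by linarith))).trans_eq
      (hz.deriv_fst h0 α)
  filter_upwards [hturn, nhdsWithin_le_nhds htime] with t ht htτ
  refine ⟨fun α => ?_, ?_⟩
  · rw [hz.deriv_fst ((abs_neg t).trans_lt htτ)]
    exact ht.1 α
  · rw [hz.deriv_fst htτ]
    exact ht.2

theorem eventually_deriv_snd_pos (hz : AnalyticMuskatFlow τ z)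
    (hz2 : 0 < deriv (fun a => (z 0 a).2) 0) :
    ∀ᶠ t in 𝓝 0, 0 < deriv (fun a => (z t a).2) 0 := by
  have h0 : |(0 : ℝ)| < τ := by simpa using hz.τ_pos
  rw [hz.deriv_snd h0] at hz2
  have hcont : ContinuousAt (fun t => (deriv (z t) 0).2) 0 :=
    (hz.continuousAt_deriv 0).snd.comp (f := fun t : ℝ => (t, (0 : ℝ))) (by fun_prop)
  filter_upwards [(continuous_abs.tendsto 0).eventually (gt_mem_nhds h0),
    hcont.eventually (lt_mem_nhds hz2)] with t ht hpos
  exact (hz.deriv_snd ht 0).symm ▸ hpos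

end AnalyticMuskatFlow

theorem muskat_turning_general (z₀ : ℝ → ℝ × ℝ)
    (han : ∀ α : ℝ, AnalyticAt ℝ z₀ α) (hper : PerCurve z₀) (hac : ArcChord z₀)
    (hRT : ∀ α : ℝ, (¬ ∃ k : ℤ, α = 2 * π * k) → 0 < deriv (fun a => (z₀ a).1) α)
    (hvert : deriv (fun a => (z₀ a).1) 0 = 0)
    (hz2 : 0 < deriv (fun a => (z₀ a).2) 0)
    (hneg : ∃ d : ℝ, d < 0 ∧ HasDerivAt (v1 z₀) d 0) :
    ∃ T₀ > 0, ∀ T : ℝ, 0 < T → T ≤ T₀ →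
      ∃ z : ℝ → ℝ → ℝ × ℝ,
        IsMuskatSol z (Icc (-T) T) ∧ z 0 = z₀ ∧
        (∀ t ∈ Icc (-T) T, (∀ α : ℝ, AnalyticAt ℝ (z t) α) ∧ ArcChord (z t)) ∧
        (∀ t ∈ Ioc (0 : ℝ) T, ∀ α : ℝ, 0 < deriv (fun a => (z (-t) a).1) α) ∧
        (∀ t ∈ Ioc (0 : ℝ) T, deriv (fun a => (z t a).1) 0 < 0) ∧
        (∀ t ∈ Icc (-T) T, 0 < deriv (fun a => (z t a).2) 0) := by
  obtain ⟨τ, z, hz, rfl⟩ := exists_analyticMuskatFlow han hper hac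
  obtain ⟨T₁, hT₁, hturn⟩ :=
    mem_nhdsGT_iff_exists_Ioc_subset.1 (hz.eventually_turning hRT hvert hneg)
  obtain ⟨T₂, hT₂, hsnd⟩ := Metric.eventually_nhds_iff.1 (hz.eventually_deriv_snd_pos hz2)
  obtain ⟨T₀, hT₀, hlt⟩ := exists_between (lt_min hT₁ (lt_min hT₂ hz.τ_pos))
  obtain ⟨h₁, h₂, hτ⟩ : T₀ < T₁ ∧ T₀ < T₂ ∧ T₀ < τ := by simpa only [lt_min_iff] using hlt
  refine ⟨T₀, hT₀, fun T _ hT => ⟨z, fun t ht α => ?_, rfl, fun t ht => ?_, fun t ht => ?_,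
    fun t ht => ?_, fun t ht => ?_⟩⟩
  · exact (hz.hasDerivAt ((abs_le.2 ht).trans_lt (by linarith)) α).hasDerivWithinAt
  · have htτ : |t| < τ := (abs_le.2 ht).trans_lt (by linarith)
    exact ⟨hz.analyticAt htτ, hz.arcChord htτ⟩
  · exact (hturn ⟨ht.1, by linarith [ht.2]⟩).1
  · exact (hturn ⟨ht.1, by linarith [ht.2]⟩).2
  · exact hsnd (by simpa using (abs_le.2 ht).trans_lt (by linarith))

/-- Starting from an analytic odd curve with a vertical tangent at the origin and
`∂_α v₁(0) < 0`, the Muskat solution exists on `[-T,T]` for all small `T > 0`,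
is real analytic, satisfies the arc-chord condition, is in the stable regime for
negative times and in the unstable regime (`∂_α z₁(0,t) < 0`) for positive times. -/
theorem muskat_turning (z₀ : ℝ → ℝ × ℝ)
    (han : ∀ α : ℝ, AnalyticAt ℝ z₀ α) (hper : PerCurve z₀) (hac : ArcChord z₀)
    (hodd : ∀ α : ℝ, z₀ (-α) = - z₀ α)
    (hRT : ∀ α : ℝ, (¬ ∃ k : ℤ, α = 2 * π * k) → 0 < deriv (fun a => (z₀ a).1) α)
    (hvert : deriv (fun a => (z₀ a).1) 0 = 0)
    (hz2 : 0 < deriv (fun a => (z₀ a).2) 0)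
    (hneg : ∃ d : ℝ, d < 0 ∧ HasDerivAt (v1 z₀) d 0) :
    ∃ T₀ > 0, ∀ T : ℝ, 0 < T → T ≤ T₀ →
      ∃ z : ℝ → ℝ → ℝ × ℝ,
        IsMuskatSol z (Icc (-T) T) ∧ z 0 = z₀ ∧
        (∀ t ∈ Icc (-T) T, (∀ α : ℝ, AnalyticAt ℝ (z t) α) ∧ ArcChord (z t)) ∧
        (∀ t ∈ Ioc (0 : ℝ) T, ∀ α : ℝ, 0 < deriv (fun a => (z (-t) a).1) α) ∧
        (∀ t ∈ Ioc (0 : ℝ) T, deriv (fun a => (z t a).1) 0 < 0) ∧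
        (∀ t ∈ Icc (-T) T, 0 < deriv (fun a => (z t a).2) 0) := by
  exact muskat_turning_general z₀ han hper hac hRT hvert hz2 hneg
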